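/- arXiv:1405.6105 — 5 statements merged into one kernel-verified Lean document; each statement's English description precedes it below -/
import Mathlib

section
/- Let k be a field and let R be an affine k-domain (an integral domain that is a finitely generated k-algebra). Suppose there exists a field K containing k such that R is (isomorphic as a k-algebra to) a k-subalgebra of the polynomial ring K[s] in one variable over K, with R ⊄ K. Then there exist a field F and an injective k-algebra homomorphism φ : R → F[t] into a polynomial ring in one variable over F such that F[t] is algebraic over φ(R), i.e., every element of F[t] satisfies a nonzero polynomial with coefficients in φ(R). -/
open Polynomial

universe u v w

theorem aux_lying {D A : Type*} [CommRing D] [IsDomain D] [CommRing A] [IsDomain A] [Algebra D A]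
    [FaithfulSMul D A] [Algebra.FiniteType D A] [Algebra.IsAlgebraic D A] :
    ∃ d : D, d ≠ 0 ∧ ∀ P : Ideal D, P.IsPrime → d ∉ P →
      ∃ Q : Ideal A, Q.IsPrime ∧ Q.comap (algebraMap D A) = P := by
  classical
  obtain ⟨s, hs⟩ := (Algebra.FiniteType.out : (⊤ : Subalgebra D A).FG)
  obtain ⟨d, hd0, hd⟩ := Algebra.IsAlgebraic.exists_integral_multiples (R := D) s
  refine ⟨d, hd0, fun P hP hdP => ?_⟩
  have key : ∀ y : A, ∃ N : ℕ, IsIntegral D (d ^ N • y) := by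
    intro y
    have hy : y ∈ Algebra.adjoin D (s : Set A) := hs ▸ Algebra.mem_top
    induction hy using Algebra.adjoin_induction with
    | mem x hx => exact ⟨1, by simpa using hd x hx⟩
    | algebraMap r => exact ⟨0, by simpa using isIntegral_algebraMap⟩
    | add x y _ _ hx hy =>
      obtain ⟨n, hn⟩ := hx
      obtain ⟨m, hm⟩ := hy
      refine ⟨n + m, ?_⟩
      have : d ^ (n + m) • (x + y) = d ^ m • (d ^ n • x) + d ^ n • (d ^ m • y) := by
        rw [smul_add, smul_smul, smul_smul, ← pow_add, ← pow_add, add_comm m n]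
      rw [this]
      exact (hn.smul _).add (hm.smul _)
    | mul x y _ _ hx hy =>
      obtain ⟨n, hn⟩ := hx
      obtain ⟨m, hm⟩ := hy
      refine ⟨n + m, ?_⟩
      have : d ^ (n + m) • (x * y) = (d ^ n • x) * (d ^ m • y) := by
        rw [smul_mul_smul_comm, pow_add]
      rw [this]
      exact hn.mul hm
  let A0 := integralClosure D A
  have hA0 : (P.map (algebraMap D A0)).comap (algebraMap D A0) = P := by
    rw [Ideal.comap_map_eq_self_iff_of_isPrime]
    obtain ⟨Q, hQ, h⟩ := Ideal.exists_ideal_over_prime_of_isIntegral_of_isDomain (S := A0) P (by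
      rw [(RingHom.injective_iff_ker_eq_bot _).1 (FaithfulSMul.algebraMap_injective D A0)]
      exact bot_le)
    exact ⟨Q, hQ, h⟩
  have key2 : ∀ z ∈ P.map (algebraMap D A), ∃ N : ℕ, ∃ w ∈ P.map (algebraMap D A0),
      (w : A) = d ^ N • z := by
    intro z hz
    induction hz using Submodule.span_induction with
    | mem x hx =>
      obtain ⟨p, hp, rfl⟩ := hx
      exact ⟨0, algebraMap D A0 p, Ideal.mem_map_of_mem _ hp, by simp⟩
    | zero => exact ⟨0, 0, zero_mem _, by simp⟩
    | add x y _ _ hx hy =>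
      obtain ⟨n, x', hx', hn⟩ := hx
      obtain ⟨m, y', hy', hm⟩ := hy
      refine ⟨n + m, d ^ m • x' + d ^ n • y', add_mem (Submodule.smul_of_tower_mem _ _ hx') (Submodule.smul_of_tower_mem _ _ hy'), ?_⟩
      push_cast
      rw [hn, hm, smul_add, smul_smul, smul_smul, ← pow_add, ← pow_add, add_comm m n]
    | smul a x _ hx =>
      obtain ⟨n, x', hx', hn⟩ := hx
      obtain ⟨m, hm⟩ := key a
      refine ⟨n + m, ⟨d ^ m • a, hm⟩ * x', Ideal.mul_mem_left _ _ hx', ?_⟩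
      push_cast
      rw [hn, smul_mul_smul_comm, pow_add, mul_comm, smul_eq_mul]
  rw [← Ideal.comap_map_eq_self_iff_of_isPrime]
  refine le_antisymm ?_ Ideal.le_comap_map
  intro x hx
  obtain ⟨N, w, hw, hN⟩ := key2 _ hx
  have : w = algebraMap D A0 (d ^ N * x) := by
    apply Subtype.ext
    rw [hN, Algebra.smul_def, ← map_mul]; rfl
  have h2 : d ^ N * x ∈ P := by
    rw [← hA0, Ideal.mem_comap, ← this]; exact hw
  exact (hP.mem_or_mem h2).resolve_left fun h => hdP (hP.mem_of_pow_mem _ h)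

theorem aux_spec {k : Type u} [Field k] {A : Type v} [CommRing A] [IsDomain A] [Algebra k A]
    [Algebra.FiniteType k A] (c s : Set A) (hcs : c ⊆ s)
    (hs : IsTranscendenceBasis k ((↑) : s → A)) (α : A) (hα : α ≠ 0) :
    ∃ Q : Ideal A, Q.IsPrime ∧ α ∉ Q ∧
      (∀ i ∈ c, IsAlgebraic k (Ideal.Quotient.mk Q i)) ∧
      AlgebraicIndependent k (fun i : (s \ c : Set A) => Ideal.Quotient.mk Q (i : A)) := by
  classical
  let D := MvPolynomial s k
  let ev : D →ₐ[k] A := MvPolynomial.aeval ((↑) : s → A)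
  let _ : Algebra D A := ev.toRingHom.toAlgebra
  have hmap : ∀ x : D, algebraMap D A x = ev x := fun _ => rfl
  have : IsScalarTower k D A := IsScalarTower.of_algebraMap_eq fun x => by
    rw [hmap]; simp [D]
  have : FaithfulSMul D A := (faithfulSMul_iff_algebraMap_injective D A).2 hs.1
  have : Algebra.FiniteType D A := Algebra.FiniteType.of_restrictScalars_finiteType k D A
  have : Algebra.IsAlgebraic D A := by
    have := hs.isAlgebraic
    constructor
    intro a
    obtain ⟨p, hp, hpa⟩ := this.isAlgebraic a
    let e := hs.1.aevalEquiv
    refine ⟨p.map ((e.symm.toRingEquiv : _ ≃+* D) : _ →+* D), ?_, ?_⟩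
    · rwa [Polynomial.map_ne_zero_iff (RingEquiv.injective _)]
    · rw [aeval_def, eval₂_map, ← hpa, aeval_def]
      congr 1
      ext x
      obtain ⟨y, rfl⟩ := e.surjective x
      simp only [RingHom.comp_apply, hmap]
      simp [e, ev]
  obtain ⟨d1, hd1, hQ⟩ := aux_lying (D := D) (A := A)
  obtain ⟨d0, hd0, hdvd⟩ := (Algebra.IsAlgebraic.isAlgebraic (R := D) α).exists_nonzero_dvd
    (mem_nonZeroDivisors_of_ne_zero hα)
  have hd : d1 * d0 ≠ 0 := mul_ne_zero hd1 hd0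
  let kb := AlgebraicClosure k
  obtain ⟨p, hp⟩ : ∃ p : s → kb, MvPolynomial.aeval p (d1 * d0) ≠ 0 := by
    by_contra! h
    apply hd
    apply MvPolynomial.map_injective (algebraMap k kb) (algebraMap k kb).injective
    rw [map_zero]
    apply MvPolynomial.funext
    intro x
    rw [MvPolynomial.eval_map, map_zero]
    exact h x
  let θ : D →ₐ[k] MvPolynomial s kb :=
    MvPolynomial.aeval (fun i => if (i : A) ∈ c then MvPolynomial.C (p i) else MvPolynomial.X i)
  have hθ : ∀ z : D, MvPolynomial.aeval p z = MvPolynomial.aeval p (θ z) := by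
    intro z
    have : (MvPolynomial.aeval p : D →ₐ[k] kb) =
      ((MvPolynomial.aeval p : MvPolynomial s kb →ₐ[kb] kb).restrictScalars k).comp θ := by
      apply MvPolynomial.algHom_ext
      intro i
      by_cases hi : (i : A) ∈ c <;> simp [θ, hi]
    rw [this]; rfl
  have hdP : d1 * d0 ∉ RingHom.ker θ := by
    intro h
    apply hp
    rw [hθ, (RingHom.mem_ker).1 h, map_zero]
  obtain ⟨Q, hQp, hQP⟩ := hQ (RingHom.ker θ) (RingHom.ker_isPrime _)
    (fun h => hdP (Ideal.mul_mem_right _ _ h))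
  have hmem : ∀ z : D, ev z ∈ Q ↔ θ z = 0 := by
    intro z
    rw [← RingHom.mem_ker, ← hQP, Ideal.mem_comap, hmap]
  refine ⟨Q, hQp, ?_, ?_, ?_⟩
  · intro h
    apply hdP
    rw [RingHom.mem_ker, ← hmem, map_mul]
    exact Ideal.mul_mem_left _ _ (Ideal.mem_of_dvd _ hdvd h)
  · intro i hi
    obtain ⟨g, hg, hgi⟩ := Algebra.IsAlgebraic.isAlgebraic (R := k) (p ⟨i, hcs hi⟩)
    refine ⟨g, hg, ?_⟩
    have h1 : Ideal.Quotient.mk Q i = Ideal.Quotient.mkₐ k Q i := rfl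
    rw [h1, Polynomial.aeval_algHom_apply]
    change Ideal.Quotient.mk Q _ = 0
    rw [Ideal.Quotient.eq_zero_iff_mem]
    have h2 : aeval i g = ev (aeval (MvPolynomial.X (⟨i, hcs hi⟩ : s) : D) g) := by
      rw [← Polynomial.aeval_algHom_apply]
      congr 2
      exact (MvPolynomial.aeval_X (R := k) ((↑) : s → A) ⟨i, hcs hi⟩).symm
    rw [h2, hmem, ← Polynomial.aeval_algHom_apply]
    have h3 : θ (MvPolynomial.X ⟨i, hcs hi⟩) = algebraMap kb _ (p ⟨i, hcs hi⟩) := by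
      exact (MvPolynomial.aeval_X (R := k) _ _).trans (if_pos hi)
    rw [h3, Polynomial.aeval_algebraMap_apply, hgi, map_zero]
  · rw [algebraicIndependent_iff]
    intro q hq
    let inc : (s \ c : Set A) → s := fun i => ⟨i, i.2.1⟩
    have h1 : ev (MvPolynomial.rename inc q) ∈ Q := by
      rw [← Ideal.Quotient.eq_zero_iff_mem, ← hq]
      change Ideal.Quotient.mkₐ k Q _ = _
      simp only [ev]
      rw [MvPolynomial.aeval_rename]
      exact MvPolynomial.comp_aeval_apply (R := k) _ (Ideal.Quotient.mkₐ k Q) q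
    rw [hmem] at h1
    have h2 : θ (MvPolynomial.rename inc q) =
        MvPolynomial.map (algebraMap k kb) (MvPolynomial.rename inc q) := by
      simp only [θ]
      rw [MvPolynomial.aeval_rename]
      have : ((fun i : s => if (i : A) ∈ c then (MvPolynomial.C (p i) : MvPolynomial s kb) else MvPolynomial.X i) ∘ inc)
        = MvPolynomial.X ∘ inc := by
        ext1 i
        simp [inc, i.2.2]
      rw [this, ← MvPolynomial.aeval_rename]
      generalize MvPolynomial.rename inc q = q'
      induction q' using MvPolynomial.induction_on with
      | C a => simp [MvPolynomial.algebraMap_eq, IsScalarTower.algebraMap_apply k kb (MvPolynomial s kb)]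
      | add p q hp hq => rw [map_add, map_add, hp, hq]
      | mul_X p i hp => rw [map_mul, map_mul, hp]; simp
    rw [h2] at h1
    have inj : Function.Injective inc := fun a b h => Subtype.ext (congrArg (fun z : s => (z : A)) h)
    apply MvPolynomial.rename_injective inc inj
    apply MvPolynomial.map_injective (algebraMap k kb) (algebraMap k kb).injective
    rw [h1]; simp

theorem aux_gen {k : Type u} [Field k] {T : Type v} [CommRing T] [IsDomain T] [Algebra k T]
    [Algebra.FiniteType k T] (E : Subalgebra k T) [Algebra.IsAlgebraic E T] :
    ∃ e : T, e ≠ 0 ∧ ∀ (B : Type v) [CommRing B] [IsDomain B] [Algebra k B] (Φ : T →ₐ[k] B),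
      Φ e ≠ 0 → ∀ L : Subalgebra k B, E.map Φ ≤ L → ∀ y, IsAlgebraic L (Φ y) := by
  classical
  obtain ⟨s, hs⟩ := (Algebra.FiniteType.out : (⊤ : Subalgebra k T).FG)
  choose p hp hpy using fun y : T => Algebra.IsAlgebraic.isAlgebraic (R := E) y
  refine ⟨∏ y ∈ s, ((p y).leadingCoeff : T), ?_, ?_⟩
  · rw [Finset.prod_ne_zero_iff]
    intro y _ h
    exact hp y (leadingCoeff_eq_zero.1 (Subtype.ext h))
  · intro B _ _ _ Φ he L hL y
    rw [map_prod, Finset.prod_ne_zero_iff] at he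
    let M : Subalgebra k B := (Subalgebra.algebraicClosure L B).restrictScalars k
    have hM : (⊤ : Subalgebra k T) ≤ M.comap Φ := by
      rw [← hs, Algebra.adjoin_le_iff]
      intro z hz
      let j : E →+* L := ((Φ.comp E.val).codRestrict L fun x => hL ⟨x, x.2, rfl⟩ : E →ₐ[k] L)
      have hj : ∀ x : E, ((j x : L) : B) = Φ x := fun _ => rfl
      change IsAlgebraic L (Φ z)
      refine ⟨(p z).map j, ?_, ?_⟩
      · intro h0
        apply he z hz
        have := congrArg (fun q => ((q.coeff (p z).natDegree : L) : B)) h0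
        simpa [hj] using this
      · rw [aeval_def, eval₂_map]
        have h1 := congrArg Φ (hpy z)
        rw [map_zero, aeval_def] at h1
        rw [← h1]
        change _ = (Φ : T →+* B) _
        rw [Polynomial.hom_eval₂]
        rfl
    exact hM (Algebra.mem_top : y ∈ (⊤ : Subalgebra k T))

theorem aux_X {A M : Type*} [CommRing A] [CommRing M] [Algebra M A[X]] (j : A →+* M)
    (hj : (algebraMap M A[X]).comp j = C) (q : A[X]) (m : M) (hm : algebraMap M A[X] m = q)
    (hq : 0 < q.natDegree) : IsAlgebraic M (X : A[X]) := by
  have hjinj : Function.Injective j := fun a b h => by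
    apply C_injective
    rw [← hj, RingHom.comp_apply, RingHom.comp_apply, h]
  refine ⟨q.map j - C m, ?_, ?_⟩
  · intro h0
    have h1 := congrArg natDegree (sub_eq_zero.1 h0)
    rw [natDegree_C, natDegree_map_eq_of_injective hjinj] at h1
    omega
  · rw [map_sub, aeval_C, aeval_def, eval₂_map, hj, eval₂_C_X, hm, sub_self]

theorem aux_frac {k : Type u} [Field k] {A : Type v} [CommRing A] [Algebra k A]
    (Q : Ideal A) (hQ : Q.IsPrime) (c b : Set A)
    (hc : ∀ i ∈ c, IsAlgebraic k (Ideal.Quotient.mk Q i))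
    (hb : AlgebraicIndependent k (fun i : b => Ideal.Quotient.mk Q (i : A))) :
    ∃ (F : Type v) (_ : Field F) (_ : Algebra k F) (π : A →ₐ[k] F),
      (∀ a, π a = 0 ↔ a ∈ Q) ∧ (∀ u : F, ∃ a b, π b ≠ 0 ∧ u = π a / π b) ∧
      (∀ i ∈ c, IsAlgebraic k (π i)) ∧ AlgebraicIndependent k (fun i : b => π (i : A)) := by
  have hinjF : Function.Injective (algebraMap (A ⧸ Q) (FractionRing (A ⧸ Q))) :=
    IsFractionRing.injective _ _
  refine ⟨FractionRing (A ⧸ Q), inferInstance, inferInstance,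
    (IsScalarTower.toAlgHom k (A ⧸ Q) (FractionRing (A ⧸ Q))).comp (Ideal.Quotient.mkₐ k Q),
    ?_, ?_, ?_, ?_⟩
  · intro a
    change algebraMap (A ⧸ Q) (FractionRing (A ⧸ Q)) (Ideal.Quotient.mk Q a) = 0 ↔ _
    rw [map_eq_zero_iff _ hinjF, Ideal.Quotient.eq_zero_iff_mem]
  · intro u
    obtain ⟨a, b, hb, rfl⟩ := IsFractionRing.div_surjective (A := A ⧸ Q) u
    obtain ⟨a, rfl⟩ := Ideal.Quotient.mk_surjective a
    obtain ⟨b, rfl⟩ := Ideal.Quotient.mk_surjective b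
    exact ⟨a, b, (map_ne_zero_iff _ hinjF).2 (nonZeroDivisors.ne_zero hb), rfl⟩
  · intro i hi
    exact (hc i hi).algHom (IsScalarTower.toAlgHom k (A ⧸ Q) (FractionRing (A ⧸ Q)))
  · exact hb.map' (f := IsScalarTower.toAlgHom k (A ⧸ Q) (FractionRing (A ⧸ Q))) hinjF

theorem aux_core {k : Type u} [Field k] {R : Type w} [CommRing R] [IsDomain R]
    [Algebra k R] {A : Type v} [CommRing A] [IsDomain A] [Algebra k A]
    [Algebra.FiniteType k A] (ψ : R →ₐ[k] A[X]) (hinj : Function.Injective ψ)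
    (hnc : ∃ r : R, 0 < (ψ r).natDegree) :
    ∃ (F : Type v) (_ : Field F) (_ : Algebra k F) (φ : R →ₐ[k] Polynomial F),
      Function.Injective φ ∧
      ∀ y : Polynomial F, ∃ p : Polynomial R, p ≠ 0 ∧
        Polynomial.eval₂ (φ : R →+* Polynomial F) y p = 0 := by
  classical
  obtain ⟨f, hf⟩ := exists_isTranscendenceBasis k R
  have hfalg := hf.isAlgebraic
  rw [Subtype.range_coe] at hfalg
  let g : Set A[X] := ψ '' f
  have hg : AlgebraicIndepOn k id g := (hf.1.map' hinj).to_subtype_range' (by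
    ext x; simp [g])
  -- `A[X]` is algebraic over `k[g, A]`
  have halg : Algebra.IsAlgebraic (Algebra.adjoin k (g ∪ Set.range (C : A → A[X]))) A[X] := by
    set W := Algebra.adjoin k (g ∪ Set.range (C : A → A[X])) with hW
    let M := Subalgebra.algebraicClosure W A[X]
    have hCW : ∀ a : A, C a ∈ W := fun a => Algebra.subset_adjoin (Or.inr ⟨a, rfl⟩)
    have hCM : ∀ a : A, C a ∈ M := fun a => M.algebraMap_mem ⟨C a, hCW a⟩
    obtain ⟨r, hr⟩ := hnc
    have hrM : ψ r ∈ M := by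
      obtain ⟨p, hp, hpr⟩ := hfalg.isAlgebraic r
      have hle : (Algebra.adjoin k f).map ψ ≤ W := by
        rw [AlgHom.map_adjoin]
        exact Algebra.adjoin_mono Set.subset_union_left
      let j : Algebra.adjoin k f →+* W :=
        ((ψ.comp (Algebra.adjoin k f).val).codRestrict W fun x => hle ⟨x, x.2, rfl⟩ :
          Algebra.adjoin k f →ₐ[k] W)
      have hj : Function.Injective j := fun a b h =>
        Subtype.ext (hinj (congrArg (fun z : W => (z : A[X])) h))
      refine ⟨p.map j, (Polynomial.map_ne_zero_iff hj).2 hp, ?_⟩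
      rw [aeval_def, eval₂_map]
      have h1 := congrArg ψ hpr
      rw [map_zero, aeval_def] at h1
      rw [← h1]
      change _ = (ψ : R →+* A[X]) _
      rw [Polynomial.hom_eval₂]
      rfl
    have hXM : (X : A[X]) ∈ M := by
      let j : A →+* M := (C : A →+* A[X]).codRestrict M hCM
      have hX : IsAlgebraic M (X : A[X]) := aux_X j rfl (ψ r) ⟨ψ r, hrM⟩ rfl hr
      exact hX.restrictScalars W
    refine ⟨fun q => ?_⟩
    change q ∈ M
    induction q using Polynomial.induction_on' with
    | add p q hp hq => exact add_mem hp hq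
    | monomial n a =>
      rw [← C_mul_X_pow_eq_monomial]
      exact mul_mem (hCM a) (pow_mem hXM n)
  obtain ⟨U, hgU, hUt, hU⟩ := exists_isTranscendenceBasis_between g
    (g ∪ Set.range (C : A → A[X])) Set.subset_union_left hg
  have hUalg : Algebra.IsAlgebraic (Algebra.adjoin k U) A[X] := by
    have := hU.isAlgebraic
    rwa [Subtype.range_coe] at this
  let c : Set A := {a | C a ∈ U \ g}
  have hUeq : U = g ∪ (C : A → A[X]) '' c := by
    ext x
    constructor
    · intro hx
      by_cases hxg : x ∈ g
      · exact Or.inl hxg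
      · obtain ⟨a, rfl⟩ := (hUt hx).resolve_left hxg
        exact Or.inr ⟨a, ⟨hx, hxg⟩, rfl⟩
    · rintro (hx | ⟨a, ha, rfl⟩)
      · exact hgU hx
      · exact ha.1
  have hdisj : Disjoint g ((C : A → A[X]) '' c) := by
    rw [Set.disjoint_right]
    rintro _ ⟨a, ha, rfl⟩
    exact ha.2
  have hc : AlgebraicIndepOn k id c := by
    have h1 : AlgebraicIndependent k (fun i : c => (CAlgHom (R := k) (A := A) (i : A))) :=
      hU.1.comp (fun i : c => (⟨C (i : A), i.2.1⟩ : U)) (fun a b h => Subtype.ext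
        (C_injective (congrArg (fun z : U => (z : A[X])) h)))
    exact AlgebraicIndependent.of_comp (CAlgHom (R := k) (A := A)) h1
  obtain ⟨s, hcs, hs⟩ := exists_isTranscendenceBasis_superset hc
  -- counting
  have htA : Algebra.trdeg k A < Cardinal.aleph0 := trdeg_lt_aleph0_of_finiteType
  have hcard1 : Cardinal.mk s = Algebra.trdeg k A := hs.cardinalMk_eq_trdeg
  have hcard2 : Cardinal.mk U = Algebra.trdeg k A + 1 := by
    rw [hU.cardinalMk_eq_trdeg, ← trdeg_add_eq k A (A := A[X]), Polynomial.trdeg_of_isDomain]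
  have hcard3 : Cardinal.mk U = Cardinal.mk c + Cardinal.mk g := by
    rw [hUeq, Cardinal.mk_union_of_disjoint hdisj, Cardinal.mk_image_eq C_injective, add_comm]
  have hcard4 : Cardinal.mk c + Cardinal.mk (s \ c : Set A) = Cardinal.mk s := by
    rw [add_comm]; exact Cardinal.mk_sdiff_add_mk hcs
  have hcfin : Cardinal.mk c < Cardinal.aleph0 :=
    (Cardinal.mk_le_mk_of_subset hcs).trans_lt (hcard1 ▸ htA)
  have hcard : Cardinal.mk g = Cardinal.mk (s \ c : Set A) + 1 := by
    rw [hcard3, ← hcard1, ← hcard4, add_assoc] at hcard2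
    rw [add_comm, add_comm (Cardinal.mk c)] at hcard2
    exact (Cardinal.add_right_inj_of_lt_aleph0 hcfin).1 hcard2
  have hgfin : Finite g := by
    rw [← Cardinal.mk_lt_aleph0_iff]
    refine lt_of_le_of_lt ?_ (Cardinal.add_lt_aleph0 htA Cardinal.one_lt_aleph0)
    rw [← hcard2, hcard3]
    exact self_le_add_left _ _
  -- specialization
  obtain ⟨e, he, hE⟩ := aux_gen (k := k) (T := A[X]) (Algebra.adjoin k U)
  obtain ⟨Q, hQ, hαQ, hcQ, hbQ⟩ := aux_spec (k := k) c s hcs hs e.leadingCoeff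
    (leadingCoeff_ne_zero.2 he)
  obtain ⟨F, _, _, π, hker, hfrac, hcF, hbF⟩ := aux_frac Q hQ c (s \ c) hcQ hbQ
  let Φ : A[X] →ₐ[k] F[X] := mapAlgHom π
  have hΦC : ∀ a, Φ (C a) = C (π a) := fun a => by simp [Φ]
  have hΦX : Φ X = X := by simp [Φ]
  let φ : R →ₐ[k] F[X] := Φ.comp ψ
  have hΦe : Φ e ≠ 0 := by
    intro h
    have h1 := congrArg (fun q => coeff q e.natDegree) h
    simp only [Φ, coe_mapAlgHom, coeff_map, coeff_zero] at h1
    change π e.leadingCoeff = 0 at h1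
    exact hαQ ((hker _).1 h1)
  let x : g → F[X] := fun i => Φ i
  have hFalg : Algebra.IsAlgebraic (Algebra.adjoin k (Set.range x)) F[X] := by
    set R1 := Algebra.adjoin k (Set.range x) with hR1
    let M := Subalgebra.algebraicClosure R1 F[X]
    let L : Subalgebra k F[X] := M.restrictScalars k
    have hEL : (Algebra.adjoin k U).map Φ ≤ L := by
      rw [AlgHom.map_adjoin, Algebra.adjoin_le_iff]
      rintro _ ⟨y, hy, rfl⟩
      rw [hUeq] at hy
      rcases hy with hy | ⟨a, ha, rfl⟩
      · exact M.algebraMap_mem ⟨Φ y, Algebra.subset_adjoin ⟨⟨y, hy⟩, rfl⟩⟩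
      · change IsAlgebraic R1 _
        rw [hΦC]
        have h1 : IsAlgebraic k (C (π a)) := (hcF a ha).algHom (CAlgHom (R := k) (A := F))
        exact h1.extendScalars (algebraMap k R1).injective
    have hM : ∀ y, Φ y ∈ M := fun y => by
      have h1 : IsAlgebraic M (Φ y) := hE F[X] Φ hΦe L hEL y
      exact h1.restrictScalars R1
    have hCM : ∀ u : F, C u ∈ M := by
      intro u
      obtain ⟨a, b, hb0, rfl⟩ := hfrac u
      have hb' := hM (C b)
      have ha' := hM (C a)
      rw [hΦC] at ha' hb'
      refine IsAlgebraic.of_mul (y := C (π b)) (mem_nonZeroDivisors_of_ne_zero (C_ne_zero.2 hb0)) hb' ?_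
      rw [← C_mul, mul_div_cancel₀ _ hb0]
      exact ha'
    refine ⟨fun q => ?_⟩
    change q ∈ M
    induction q using Polynomial.induction_on' with
    | add p q hp hq => exact add_mem hp hq
    | monomial n a =>
      rw [← C_mul_X_pow_eq_monomial]
      exact mul_mem (hCM a) (pow_mem (hΦX ▸ hM X) n)
  have htF : Cardinal.mk g ≤ Algebra.trdeg k F[X] := by
    rw [hcard, ← trdeg_add_eq k F (A := F[X]), Polynomial.trdeg_of_isDomain]
    gcongr
    exact hbF.cardinalMk_le_trdeg
  have hx : AlgebraicIndependent k x :=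
    (Algebra.IsAlgebraic.isTranscendenceBasis_of_le_trdeg_of_finite k x htF).1
  have hx' : AlgebraicIndependent k (fun i : f => φ i) :=
    hx.comp (fun i : f => (⟨ψ i, i, i.2, rfl⟩ : g)) (fun a b h => Subtype.ext
      (hinj (congrArg (fun z : g => (z : A[X])) h)))
  have hφ : Function.Injective φ := by
    rw [injective_iff_map_eq_zero]
    intro r hr
    by_contra hr0
    obtain ⟨z, hz, hrz⟩ := (hfalg.isAlgebraic r).exists_nonzero_dvd
      (mem_nonZeroDivisors_of_ne_zero hr0)
    have hφz : φ (z : R) = 0 := by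
      obtain ⟨t, ht⟩ := hrz
      change (z : R) = _ at ht
      rw [ht, map_mul, hr, zero_mul]
    have hadj := Algebra.adjoin_range_eq_range_aeval k ((↑) : f → R)
    rw [Subtype.range_coe] at hadj
    have hzm : (z : R) ∈ (MvPolynomial.aeval ((↑) : f → R) : MvPolynomial f k →ₐ[k] R).range :=
      hadj ▸ z.2
    obtain ⟨p, hp⟩ := hzm
    change MvPolynomial.aeval _ p = _ at hp
    rw [← hp, MvPolynomial.comp_aeval_apply] at hφz
    have hp0 := (algebraicIndependent_iff.1 hx') p hφz
    apply hz
    apply Subtype.ext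
    rw [← hp, hp0, map_zero]; rfl
  refine ⟨F, inferInstance, inferInstance, φ, hφ, fun y => ?_⟩
  obtain ⟨p, hp, hpy⟩ := hFalg.isAlgebraic y
  have hle : Algebra.adjoin k (Set.range x) ≤ φ.range := by
    rw [Algebra.adjoin_le_iff]
    rintro _ ⟨⟨_, i, hi, rfl⟩, rfl⟩
    exact ⟨i, rfl⟩
  let eq := AlgEquiv.ofInjective φ hφ
  let j : Algebra.adjoin k (Set.range x) →ₐ[k] R :=
    (eq.symm : φ.range →ₐ[k] R).comp (Subalgebra.inclusion hle)
  have hj : ∀ z, φ (j z) = z := fun z =>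
    congrArg (Subtype.val : φ.range → F[X]) (eq.apply_symm_apply (Subalgebra.inclusion hle z))
  have hjinj : Function.Injective (j : Algebra.adjoin k (Set.range x) →+* R) := fun a b h => by
    apply Subtype.ext
    rw [← hj a, ← hj b]
    exact congrArg φ h
  refine ⟨p.map (j : Algebra.adjoin k (Set.range x) →+* R), (Polynomial.map_ne_zero_iff hjinj).2 hp, ?_⟩
  rw [eval₂_map, ← hpy, aeval_def]
  congr 1
  ext1 z
  exact hj z

/-- (Main Theorem)  Let `k` be a field and `R` an affine `k`-domain.  Suppose there is a
field `K ⊇ k` such that `R` embeds as a `k`-subalgebra of `K[s]` with `R ⊄ K`.  Then there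
are a field `F` and an injective `k`-algebra homomorphism `φ : R → F[t]` such that `F[t]`
is algebraic over `φ(R)`: every element of `F[t]` is a root of a nonzero polynomial with
coefficients in `φ(R)`. -/
theorem affine_nagata (k : Type u) [Field k] (R : Type w) [CommRing R] [IsDomain R]
    [Algebra k R] [Algebra.FiniteType k R]
    (K : Type v) [Field K] [Algebra k K]
    (ψ : R →ₐ[k] Polynomial K) (hinj : Function.Injective ψ)
    (hnc : ∃ r : R, ψ r ∉ Set.range (Polynomial.C : K → Polynomial K)) :
    ∃ (F : Type v) (_ : Field F) (_ : Algebra k F) (φ : R →ₐ[k] Polynomial F),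
      Function.Injective φ ∧
      ∀ y : Polynomial F, ∃ p : Polynomial R, p ≠ 0 ∧
        Polynomial.eval₂ (φ : R →+* Polynomial F) y p = 0 := by
  classical
  obtain ⟨s, hs⟩ := (Algebra.FiniteType.out : (⊤ : Subalgebra k R).FG)
  let S : Finset K := s.biUnion fun r => (ψ r).coeffs
  let A : Subalgebra k K := Algebra.adjoin k (S : Set K)
  have hA : Algebra.FiniteType k A := (Subalgebra.fg_iff_finiteType A).1 ⟨S, rfl⟩
  let ι : A[X] →ₐ[k] K[X] := mapAlgHom A.val
  have hι : Function.Injective ι := map_injective _ Subtype.val_injective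
  have hrange : ∀ r, ψ r ∈ ι.range := by
    have : (⊤ : Subalgebra k R) ≤ ι.range.comap ψ := by
      rw [← hs, Algebra.adjoin_le_iff]
      intro r hr
      have h1 : ψ r ∈ lifts (A.val : A →+* K) := by
        rw [lifts_iff_coeff_lifts]
        intro n
        by_cases h0 : (ψ r).coeff n = 0
        · exact ⟨0, by simp [h0]⟩
        · exact ⟨⟨(ψ r).coeff n, Algebra.subset_adjoin (Finset.mem_coe.2
            (Finset.mem_biUnion.2 ⟨r, hr, coeff_mem_coeffs h0⟩))⟩, rfl⟩
      obtain ⟨q, hq⟩ := h1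
      exact ⟨q, hq⟩
    exact fun r => this (Algebra.mem_top : r ∈ _)
  let eq := AlgEquiv.ofInjective ι hι
  let ψ' : R →ₐ[k] A[X] := (eq.symm : ι.range →ₐ[k] A[X]).comp (ψ.codRestrict ι.range hrange)
  have hψ' : ∀ r, ι (ψ' r) = ψ r := fun r =>
    congrArg (fun t : ι.range => (t : K[X])) (eq.apply_symm_apply (ψ.codRestrict ι.range hrange r))
  refine aux_core ψ' (fun a b h => hinj ?_) ?_
  · rw [← hψ' a, ← hψ' b, h]
  · obtain ⟨r, hr⟩ := hnc
    refine ⟨r, Nat.pos_of_ne_zero fun h0 => hr ?_⟩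
    rw [← hψ' r, eq_C_of_natDegree_eq_zero h0]
    exact ⟨_, (map_C (A.val : A →+* K)).symm⟩
end

section
/- Let k be an algebraically closed field of characteristic zero and let B be a commutative integral domain containing k. Let r ∈ B and suppose r ∉ ML(B), i.e., there exists a locally nilpotent k-derivation D of B with Dr ≠ 0. Let Alg_{k[r]}B = { b ∈ B : b is algebraic over the subring k[r] }. Then there exists t ∈ frac(Alg_{k[r]}B) such that Alg_{k[r]}B ⊆ k[t] inside frac(Alg_{k[r]}B). -/
namespace AlgCl
open Polynomial

/-- Homogenization of a one-variable polynomial, evaluated at a pair. -/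
noncomputable def hom {k A : Type*} [Field k] [CommRing A] [Algebra k A] (N : ℕ) (f : k[X]) (a b : A) : A :=
  ∑ j ∈ Finset.range (N + 1), f.coeff j • (a ^ j * b ^ (N - j))

lemma hom_eq {k A : Type*} [Field k] [CommRing A] [Algebra k A] (N : ℕ) (f : k[X])
    (hN : f.natDegree ≤ N) (a b w : A) (h : a = w * b) :
    hom N f a b = b ^ N * aeval w f := by
  rw [aeval_eq_sum_range' (Nat.lt_succ_of_le hN), Finset.mul_sum, hom]
  refine Finset.sum_congr rfl fun j hj => ?_
  have hj' : j ≤ N := by simpa [Nat.lt_succ_iff] using hj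
  obtain ⟨m, rfl⟩ := Nat.exists_eq_add_of_le hj'
  rw [h, mul_smul_comm]
  congr 1
  rw [Nat.add_sub_cancel_left]
  ring

lemma map_hom {k A A' : Type*} [Field k] [CommRing A] [Algebra k A] [CommRing A'] [Algebra k A']
    (φ : A →ₐ[k] A') (N : ℕ) (f : k[X]) (a b : A) :
    φ (hom N f a b) = hom N f (φ a) (φ b) := by
  simp [hom]

lemma normalize_gen {k : Type*} [Field k] (g : RatFunc k)
    (hg : g ∉ (algebraMap k (RatFunc k)).range) :
    ∃ (p q : k[X]), IsCoprime p q ∧ q.natDegree < p.natDegree ∧ q ≠ 0 ∧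
      g ∈ IntermediateField.adjoin k {algebraMap k[X] (RatFunc k) p / algebraMap k[X] (RatFunc k) q} ∧
      algebraMap k[X] (RatFunc k) p / algebraMap k[X] (RatFunc k) q ∈
        IntermediateField.adjoin k {g} := by
  have hinj : Function.Injective (algebraMap k[X] (RatFunc k)) := IsFractionRing.injective _ _
  have hcop := RatFunc.isCoprime_num_denom g
  have hq := RatFunc.denom_ne_zero g
  have hgpq := RatFunc.num_div_denom g
  set p := g.num
  set q := g.denom
  by_cases hd : q.natDegree < p.natDegree
  · refine ⟨p, q, hcop, hd, hq, ?_, ?_⟩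
    · rw [hgpq]; exact IntermediateField.mem_adjoin_simple_self k g
    · rw [hgpq]; exact IntermediateField.mem_adjoin_simple_self k g
  push Not at hd
  set n := q.natDegree
  set c : k := p.coeff n / q.coeff n
  have hqn : q.coeff n ≠ 0 := by simpa [n] using hq
  have hq' : algebraMap k[X] (RatFunc k) q ≠ 0 := by
    simpa using hq
  have hCc : algebraMap k[X] (RatFunc k) (C c) = algebraMap k (RatFunc k) c := by
    rw [← Polynomial.algebraMap_eq, ← IsScalarTower.algebraMap_apply]
  have hp1 : p - C c * q ≠ 0 := by
    intro h
    apply hg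
    refine ⟨c, ?_⟩
    rw [← hgpq, eq_div_iff hq', ← hCc, ← map_mul, sub_eq_zero.mp h]
  have hdeg : (p - C c * q).natDegree < n := by
    have h1 : (p - C c * q).natDegree ≤ n :=
      (natDegree_sub_le _ _).trans (max_le hd (natDegree_C_mul_le _ _))
    refine lt_of_le_of_ne h1 fun h2 => hp1 ?_
    rw [← leadingCoeff_eq_zero, leadingCoeff, h2, coeff_sub, coeff_C_mul]
    simp only [c]; field_simp; simp
  have hgc : algebraMap k[X] (RatFunc k) q / algebraMap k[X] (RatFunc k) (p - C c * q)
      = (g - algebraMap k (RatFunc k) c)⁻¹ := by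
    rw [← hgpq, map_sub, map_mul, hCc]
    field_simp
  refine ⟨q, p - C c * q, ?_, hdeg, hp1, ?_, ?_⟩
  · have := hcop.symm.add_mul_left_right (-(C c))
    rwa [show p - C c * q = p + q * -(C c) by ring]
  · rw [hgc]
    have h1 := IntermediateField.mem_adjoin_simple_self k (g - algebraMap k (RatFunc k) c)⁻¹
    have h2 := add_mem (inv_mem h1) (IntermediateField.algebraMap_mem _ c)
    simpa using h2
  · rw [hgc]
    exact inv_mem (sub_mem (IntermediateField.mem_adjoin_simple_self k g)
      (IntermediateField.algebraMap_mem _ c))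

lemma poly_mem {k : Type*} [Field k] [IsAlgClosed k] (p q b : k[X]) (hcop : IsCoprime p q)
    (hd : q.natDegree < p.natDegree) (hq : q ≠ 0)
    (hb : algebraMap k[X] (RatFunc k) b ∈ IntermediateField.adjoin k
      {algebraMap k[X] (RatFunc k) p / algebraMap k[X] (RatFunc k) q}) :
    algebraMap k[X] (RatFunc k) b ∈ Algebra.adjoin k
      {algebraMap k[X] (RatFunc k) p / algebraMap k[X] (RatFunc k) q} := by
  have hq' : algebraMap k[X] (RatFunc k) q ≠ 0 := by simpa using hq
  have hinj : Function.Injective (algebraMap k[X] (RatFunc k)) := IsFractionRing.injective _ _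
  set g := algebraMap k[X] (RatFunc k) p / algebraMap k[X] (RatFunc k) q with hg
  have key : ∀ (n : ℕ) (f h : k[X]), h.natDegree = n → aeval g h ≠ 0 →
      algebraMap k[X] (RatFunc k) b * aeval g h = aeval g f →
      algebraMap k[X] (RatFunc k) b ∈ Algebra.adjoin k {g} := by
    intro n
    induction n with
    | zero =>
      intro f h hn hh e
      rw [eq_C_of_natDegree_eq_zero hn] at hh e
      rw [aeval_C] at hh e
      have hc : h.coeff 0 ≠ 0 := by
        intro h0; rw [h0, map_zero] at hh; exact hh rfl
      have e2 : algebraMap k[X] (RatFunc k) b = aeval g (C (h.coeff 0)⁻¹ * f) := by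
        rw [map_mul, aeval_C, ← e, map_inv₀]
        field_simp
      rw [e2]
      exact aeval_mem_adjoin_singleton k g
    | succ n ih =>
      intro f h hn hh e
      obtain ⟨c, hc⟩ := IsAlgClosed.exists_root h (by
        rw [degree_eq_natDegree (by rintro rfl; simp at hh), hn]; norm_cast)
      -- a point where `p / q` takes the value `c`
      have hdpc : (p - C c * q).natDegree = p.natDegree :=
        natDegree_sub_eq_left_of_natDegree_lt ((natDegree_C_mul_le _ _).trans_lt hd)
      obtain ⟨x, hx⟩ := IsAlgClosed.exists_root (p - C c * q) (by
        have : (p - C c * q).natDegree ≠ 0 := by omega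
        rw [degree_eq_natDegree (by intro h0; simp [h0] at this)]; exact_mod_cast this)
      have hx' : p.eval x = c * q.eval x := by
        have : (p - C c * q).eval x = 0 := hx
        simpa [sub_eq_zero] using this
      have hqx : q.eval x ≠ 0 := by
        intro h0
        obtain ⟨u, v, huv⟩ := hcop
        have := congrArg (eval x) huv
        simp [hx', h0] at this
      set M := max f.natDegree h.natDegree
      have e3 : b * hom M h p q = hom M f p q := by
        apply hinj
        have hA : ∀ F : k[X], algebraMap k[X] (RatFunc k) (hom M F p q) =
            hom M F (algebraMap k[X] (RatFunc k) p) (algebraMap k[X] (RatFunc k) q) := fun F =>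
          map_hom (IsScalarTower.toAlgHom k k[X] (RatFunc k)) M F p q
        have hpg : algebraMap k[X] (RatFunc k) p = g * algebraMap k[X] (RatFunc k) q := by
          rw [hg]; field_simp
        rw [map_mul, hA, hA, hom_eq M h (le_max_right _ _) _ _ g hpg,
          hom_eq M f (le_max_left _ _) _ _ g hpg, ← e]
        ring
      have hev : ∀ F : k[X], F.natDegree ≤ M → eval x (hom M F p q) = q.eval x ^ M * F.eval c := by
        intro F hF
        have h1 := map_hom (aeval (R := k) x) M F p q
        rw [coe_aeval_eq_eval, hom_eq M F hF _ _ c hx'] at h1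
        simpa using h1
      have hfc : f.eval c = 0 := by
        have := congrArg (eval x) e3
        rw [eval_mul, hev _ (le_max_right _ _), hev _ (le_max_left _ _), hc.eq_zero] at this
        simpa [hqx] using this.symm
      obtain ⟨h1, rfl⟩ := dvd_iff_isRoot.mpr hc
      obtain ⟨f1, rfl⟩ := dvd_iff_isRoot.mpr (show IsRoot f c from hfc)
      rw [map_mul] at hh e
      rw [map_mul] at e
      refine ih f1 h1 ?_ (right_ne_zero_of_mul hh) ?_
      · rw [natDegree_mul (X_sub_C_ne_zero c) (by rintro rfl; simp at hh), natDegree_X_sub_C] at hn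
        omega
      · apply mul_left_cancel₀ (left_ne_zero_of_mul hh)
        rw [← e]; ring
  rw [IntermediateField.mem_adjoin_simple_iff] at hb
  obtain ⟨f, h, hfh⟩ := hb
  by_cases hden : aeval g h = 0
  · rw [hden, div_zero] at hfh
    rw [hfh]; exact zero_mem _
  · exact key _ f h rfl hden (by rw [hfh]; field_simp)

lemma luroth_poly {k : Type*} [Field k] [IsAlgClosed k] (S : Subalgebra k k[X]) (ρ : k[X])
    (hρ : ρ ∈ S) (hρd : 0 < ρ.natDegree) :
    ∃ (t : RatFunc k) (b₁ b₂ : k[X]), b₁ ∈ S ∧ b₂ ∈ S ∧ b₂ ≠ 0 ∧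
      t = algebraMap k[X] (RatFunc k) b₁ / algebraMap k[X] (RatFunc k) b₂ ∧
      ∀ b ∈ S, algebraMap k[X] (RatFunc k) b ∈ Algebra.adjoin k {t} := by
  have hinj : Function.Injective (algebraMap k[X] (RatFunc k)) := IsFractionRing.injective _ _
  set ι := IsScalarTower.toAlgHom k k[X] (RatFunc k) with hι
  set E : IntermediateField k (RatFunc k) := IntermediateField.adjoin k ((S.map ι : Subalgebra k (RatFunc k)) : Set (RatFunc k)) with hE
  have hSE : ∀ b ∈ S, algebraMap k[X] (RatFunc k) b ∈ E := fun b hb =>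
    IntermediateField.subset_adjoin _ _ ⟨b, hb, rfl⟩
  have hEb : E ≠ ⊥ := by
    intro h
    have := hSE ρ hρ
    rw [h, IntermediateField.mem_bot] at this
    obtain ⟨c, hc⟩ := this
    have : C c = ρ := by
      apply hinj
      rw [← hc, ← Polynomial.algebraMap_eq, ← IsScalarTower.algebraMap_apply]
    rw [← this, natDegree_C] at hρd
    exact lt_irrefl _ hρd
  have hgs := RatFunc.Luroth.generator_spec hEb
  have hEg := RatFunc.Luroth.eq_adjoin_generator (E := E)
  obtain ⟨p, q, hcop, hd, hq, h1, h2⟩ := normalize_gen _ hgs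
  set g := algebraMap k[X] (RatFunc k) p / algebraMap k[X] (RatFunc k) q with hg
  rw [← hEg] at h2
  have hEle : E ≤ IntermediateField.adjoin k {g} := by
    rw [hEg]
    exact IntermediateField.adjoin_simple_le_iff.mpr h1
  have hgE := h2
  rw [hE, IntermediateField.mem_adjoin_iff_div] at h2
  obtain ⟨x, hx, y, hy, hxy⟩ := h2
  rw [Algebra.adjoin_eq] at hx hy
  obtain ⟨b₁, hb₁, rfl⟩ := hx
  obtain ⟨b₂, hb₂, rfl⟩ := hy
  have hb2 : b₂ ≠ 0 := by
    rintro rfl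
    have hq' : algebraMap k[X] (RatFunc k) q ≠ 0 := by simpa using hq
    have : g = 0 := by rw [hxy]; simp
    rw [hg, div_eq_zero_iff, or_iff_left hq'] at this
    have : p = 0 := by simpa using this
    subst this
    simp at hd
  refine ⟨g, b₁, b₂, hb₁, hb₂, hb2, hxy, fun b hb => ?_⟩
  exact poly_mem p q b hcop hd hq (hEle (hSE b hb))

/-- Divided powers of a derivation. -/
noncomputable def dp {k B : Type*} [Field k] [CommRing B] [Algebra k B] (D : Derivation k B B)
    (n : ℕ) (b : B) : B := ((n.factorial : k)⁻¹) • (⇑D)^[n] b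

lemma dp_succ {k B : Type*} [Field k] [CharZero k] [CommRing B] [Algebra k B]
    (D : Derivation k B B) (n : ℕ) (b : B) : ((n + 1 : ℕ) : k) • dp D (n + 1) b = D (dp D n b) := by
  have h : ((n + 1 : ℕ) : k) ≠ 0 := Nat.cast_ne_zero.mpr n.succ_ne_zero
  rw [dp, dp, D.map_smul, Function.iterate_succ_apply', smul_smul, Nat.factorial_succ,
    Nat.cast_mul, mul_inv, ← mul_assoc, mul_inv_cancel₀ h, one_mul]

lemma dp_mul {k B : Type*} [Field k] [CharZero k] [CommRing B] [Algebra k B]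
    (D : Derivation k B B) (n : ℕ) (a b : B) :
    dp D n (a * b) = ∑ x ∈ Finset.HasAntidiagonal.antidiagonal n, dp D x.1 a * dp D x.2 b := by
  induction n with
  | zero => simp [dp]
  | succ n ih =>
    have h : ((n + 1 : ℕ) : k) ≠ 0 := Nat.cast_ne_zero.mpr n.succ_ne_zero
    apply smul_right_injective B h
    change ((n + 1 : ℕ) : k) • _ = ((n + 1 : ℕ) : k) • _
    rw [dp_succ, ih, map_sum]
    have h1 : ((n + 1 : ℕ) : k) • ∑ x ∈ Finset.HasAntidiagonal.antidiagonal (n + 1), dp D x.1 a * dp D x.2 b =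
        ∑ x ∈ Finset.HasAntidiagonal.antidiagonal (n + 1), ((x.1 : k) • dp D x.1 a) * dp D x.2 b +
        ∑ x ∈ Finset.HasAntidiagonal.antidiagonal (n + 1), dp D x.1 a * ((x.2 : k) • dp D x.2 b) := by
      rw [Finset.smul_sum, ← Finset.sum_add_distrib]
      refine Finset.sum_congr rfl fun x hx => ?_
      rw [← Finset.HasAntidiagonal.mem_antidiagonal.mp hx, Nat.cast_add, add_smul, smul_mul_assoc, mul_smul_comm]
    rw [h1, Finset.Nat.sum_antidiagonal_succ, Finset.Nat.sum_antidiagonal_succ']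
    simp only [dp_succ, Nat.cast_zero, zero_smul, zero_mul, mul_zero, zero_add]
    rw [← Finset.sum_add_distrib]
    refine Finset.sum_congr rfl fun x hx => ?_
    rw [D.leibniz, smul_eq_mul, smul_eq_mul]
    ring

lemma exists_exp {k B : Type*} [Field k] [CharZero k] [CommRing B] [Algebra k B]
    (D : Derivation k B B) (hln : ∀ b : B, ∃ n : ℕ, (⇑D)^[n] b = 0) :
    ∃ E : B →ₐ[k] B[X], ∀ b n, (E b).coeff n = dp D n b := by
  choose N hN using hln
  have hvan : ∀ b n, N b ≤ n → dp D n b = 0 := by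
    intro b n hn
    obtain ⟨m, rfl⟩ := Nat.exists_eq_add_of_le hn
    have : ∀ m, (⇑D)^[m] (0 : B) = 0 := by
      intro m
      induction m with
      | zero => rfl
      | succ m ih => rw [Function.iterate_succ_apply', ih, map_zero]
    rw [dp, add_comm, Function.iterate_add_apply, hN, this, smul_zero]
  let e : B → B[X] := fun b => ∑ i ∈ Finset.range (N b), monomial i (dp D i b)
  have he : ∀ b n, (e b).coeff n = dp D n b := by
    intro b n
    simp only [e, finsetSum_coeff, coeff_monomial, Finset.sum_ite_eq', Finset.mem_range]
    split_ifs with h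
    · rfl
    · exact (hvan b n (not_lt.mp h)).symm
  have hit : ∀ (n : ℕ) (b : B), (⇑D)^[n] b = ((D : B →ₗ[k] B) ^ n) b := by
    intro n b
    rw [Module.End.pow_apply]; rfl
  let L : B →ₗ[k] B[X] :=
    { toFun := e
      map_add' := by
        intro a b; ext n
        rw [coeff_add, he, he, he, dp, dp, dp, hit, hit, hit, map_add, smul_add]
      map_smul' := by
        intro c b; ext n
        rw [RingHom.id_apply, coeff_smul, he, he, dp, dp, hit, hit, map_smul, smul_comm] }
  have hL : ∀ b n, (L b).coeff n = dp D n b := he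
  refine ⟨AlgHom.ofLinearMap L ?_ ?_, hL⟩
  · ext n
    rw [hL, coeff_one]
    cases n with
    | zero => simp [dp]
    | succ n =>
      have : ∀ m, (⇑D)^[m] (0 : B) = 0 := fun m => by rw [hit, map_zero]
      rw [dp, Function.iterate_succ_apply, D.map_one_eq_zero, this, smul_zero, if_neg (by omega)]
  · intro a b
    ext n
    rw [hL, dp_mul, coeff_mul]
    simp only [hL]

lemma ratio_aux {k B : Type*} [Field k] [IsAlgClosed k] [CommRing B] [IsDomain B] [Algebra k B]
    (r a b : B[X]) (d : ℕ) (hr : 0 < r.natDegree) (ha : a.natDegree ≤ d) (hb : b.natDegree ≤ d)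
    (hbd : b.coeff d ≠ 0) (N I : ℕ) (f : ℕ → k[X]) (hf : ∀ i, (f i).natDegree ≤ N) (hI : f I ≠ 0)
    (h : ∑ i ∈ Finset.range (I + 1), hom N (f i) a b * r ^ i = 0) :
    ∃ c : k, a.coeff d = c • b.coeff d := by
  set n := r.natDegree
  have hterm : ∀ j ∈ Finset.range (N + 1), (a ^ j * b ^ (N - j)).natDegree ≤ N * d ∧
      (a ^ j * b ^ (N - j)).coeff (N * d) = a.coeff d ^ j * b.coeff d ^ (N - j) := by
    intro j hj
    have hj' : j ≤ N := by simpa [Nat.lt_succ_iff] using hj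
    obtain ⟨m, rfl⟩ := Nat.exists_eq_add_of_le hj'
    rw [Nat.add_sub_cancel_left, add_mul]
    have h1 := natDegree_pow_le_of_le j ha
    have h2 := natDegree_pow_le_of_le m hb
    refine ⟨natDegree_mul_le_of_le h1 h2, ?_⟩
    rw [coeff_mul_add_eq_of_natDegree_le h1 h2, coeff_pow_of_natDegree_le ha,
      coeff_pow_of_natDegree_le hb]
  have hdeg : ∀ i, (hom N (f i) a b).natDegree ≤ N * d := by
    intro i
    refine natDegree_sum_le_of_forall_le _ _ fun j hj => ?_
    exact (natDegree_smul_le _ _).trans (hterm j hj).1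
  have hcoef : ∀ i, (hom N (f i) a b).coeff (N * d) = hom N (f i) (a.coeff d) (b.coeff d) := by
    intro i
    rw [hom, hom, finsetSum_coeff]
    refine Finset.sum_congr rfl fun j hj => ?_
    rw [coeff_smul, (hterm j hj).2]
  have key := congrArg (fun p => coeff p (N * d + I * n)) h
  simp only [finsetSum_coeff, coeff_zero] at key
  rw [Finset.sum_range_succ, Finset.sum_eq_zero, zero_add,
    coeff_mul_add_eq_of_natDegree_le (hdeg I) (natDegree_pow_le_of_le I le_rfl), hcoef,
    coeff_pow_of_natDegree_le le_rfl] at key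
  swap
  · intro i hi
    rw [Finset.mem_range] at hi
    apply coeff_eq_zero_of_natDegree_lt
    refine (natDegree_mul_le_of_le (hdeg i) (natDegree_pow_le_of_le i le_rfl)).trans_lt ?_
    have := Nat.mul_lt_mul_of_pos_right hi hr
    exact Nat.add_lt_add_left this _
  have hr0 : r.coeff n ≠ 0 := by
    have : r ≠ 0 := by rintro rfl; simp [n] at hr
    simpa [n] using this
  have key2 := (mul_eq_zero.mp key).resolve_right (pow_ne_zero _ hr0)
  set K := FractionRing B
  have hinj : Function.Injective (algebraMap B K) := IsFractionRing.injective _ _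
  have hβ : algebraMap B K (b.coeff d) ≠ 0 := by simpa using hbd
  have key3 := map_hom (IsScalarTower.toAlgHom k B K) N (f I) (a.coeff d) (b.coeff d)
  rw [key2, map_zero] at key3
  set u := algebraMap B K (a.coeff d) / algebraMap B K (b.coeff d) with hu
  simp only [IsScalarTower.coe_toAlgHom'] at key3
  rw [hom_eq N (f I) (hf I) _ _ u (div_mul_cancel₀ _ hβ).symm] at key3
  have hu0 : aeval u (f I) = 0 := by
    refine (mul_eq_zero.mp key3.symm).resolve_left (pow_ne_zero _ ?_)
    simpa using hbd
  have hint : IsIntegral k u := isAlgebraic_iff_isIntegral.mp ⟨f I, hI, hu0⟩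
  obtain ⟨c, hc⟩ := minpoly.mem_range_of_degree_eq_one k u
    (IsAlgClosed.degree_eq_one_of_irreducible k (minpoly.irreducible hint))
  refine ⟨c, hinj ?_⟩
  rw [Algebra.smul_def, map_mul, ← IsScalarTower.algebraMap_apply, hc, hu, div_mul_cancel₀ _ hβ]

lemma exists_relation {k B : Type*} [Field k] [CommRing B] [IsDomain B] [Algebra k B]
    (r a b : B) (ha : IsAlgebraic (Algebra.adjoin k {r}) a)
    (hb : IsAlgebraic (Algebra.adjoin k {r}) b) (hb0 : b ≠ 0) :
    ∃ (N I : ℕ) (f : ℕ → k[X]), (∀ i, (f i).natDegree ≤ N) ∧ f I ≠ 0 ∧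
      ∑ i ∈ Finset.range (I + 1), hom N (f i) a b * r ^ i = 0 := by
  set A := Algebra.adjoin k {r}
  set K := FractionRing B
  have hinj : Function.Injective (algebraMap B K) := IsFractionRing.injective _ _
  have hβ : algebraMap B K b ≠ 0 := by simpa using hb0
  obtain ⟨P, hP, hPw⟩ : IsAlgebraic A (algebraMap B K a / algebraMap B K b) := by
    rw [div_eq_mul_inv]
    exact (ha.algebraMap).mul (hb.algebraMap).inv
  have hg : ∀ j, ∃ g : k[X], aeval r g = (P.coeff j : B) := by
    intro j
    have := (P.coeff j).2
    simp only [A, Algebra.adjoin_singleton_eq_range_aeval] at this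
    exact this
  choose g hg using hg
  classical
  set N := P.natDegree
  obtain ⟨j0, hj0, hmax⟩ := Finset.exists_max_image
    ((Finset.range (N + 1)).filter fun j => g j ≠ 0) (fun j => (g j).natDegree) (by
      refine ⟨N, ?_⟩
      rw [Finset.mem_filter, Finset.mem_range]
      refine ⟨Nat.lt_succ_self _, fun h0 => ?_⟩
      have := hg N
      rw [h0, map_zero] at this
      apply hP
      rw [← leadingCoeff_eq_zero]
      exact Subtype.ext this.symm)
  rw [Finset.mem_filter] at hj0
  set I := (g j0).natDegree
  have hfc : ∀ i j, j ∈ Finset.range (N + 1) →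
      (∑ j ∈ Finset.range (N + 1), monomial j ((g j).coeff i)).coeff j = (g j).coeff i := by
    intro i j hj
    simp only [finsetSum_coeff, coeff_monomial, Finset.sum_ite_eq', if_pos hj]
  refine ⟨N, I, fun i => ∑ j ∈ Finset.range (N + 1), monomial j ((g j).coeff i), ?_, ?_, ?_⟩
  · intro i
    refine natDegree_sum_le_of_forall_le _ _ fun j hj => ?_
    refine (natDegree_monomial_le _).trans ?_
    simpa [Nat.lt_succ_iff] using hj
  · intro h0
    have := hfc I j0 hj0.1
    simp only [h0, coeff_zero] at this
    exact hj0.2 (leadingCoeff_eq_zero.mp this.symm)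
  · have h1 : ∀ j ∈ Finset.range (N + 1),
        (P.coeff j : B) = ∑ i ∈ Finset.range (I + 1), (g j).coeff i • r ^ i := by
      intro j hj
      rw [← hg j]
      apply aeval_eq_sum_range'
      rw [Nat.lt_succ_iff]
      by_cases h0 : g j = 0
      · simp [h0]
      · exact hmax j (Finset.mem_filter.mpr ⟨hj, h0⟩)
    have h2 : ∑ j ∈ Finset.range (N + 1), (P.coeff j : B) * (a ^ j * b ^ (N - j)) = 0 := by
      apply hinj
      rw [aeval_eq_sum_range] at hPw
      rw [map_zero, ← mul_zero (algebraMap B K b ^ N), ← hPw, map_sum, Finset.mul_sum]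
      refine Finset.sum_congr rfl fun j hj => ?_
      have hj' : j ≤ N := by simpa [Nat.lt_succ_iff] using hj
      obtain ⟨m, hm⟩ := Nat.exists_eq_add_of_le hj'
      rw [hm, Nat.add_sub_cancel_left, Algebra.smul_def, map_mul, map_mul, map_pow, map_pow,
        IsScalarTower.algebraMap_apply A B K, div_pow, pow_add]
      change _ = _ * (algebraMap B K (P.coeff j : B) * _)
      have hbj : algebraMap B K b ^ j * (algebraMap B K b ^ j)⁻¹ = 1 :=
        mul_inv_cancel₀ (pow_ne_zero _ hβ)
      rw [div_eq_mul_inv]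
      linear_combination (-(algebraMap B K (P.coeff j : B)) * algebraMap B K a ^ j *
        algebraMap B K b ^ m) * hbj
    rw [← h2]
    simp only [hom, Finset.sum_mul]
    rw [Finset.sum_comm]
    refine Finset.sum_congr rfl fun j hj => ?_
    rw [h1 j hj, Finset.sum_mul]
    refine Finset.sum_congr rfl fun i hi => ?_
    rw [hfc i j hj, smul_mul_assoc, smul_mul_assoc, mul_comm]

lemma exists_point {k C : Type*} [Field k] [IsAlgClosed k] [CommRing C] [IsDomain C] [Algebra k C]
    [Algebra.FiniteType k C] (c : C) (hc : c ≠ 0) : ∃ φ : C →ₐ[k] k, φ c ≠ 0 := by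
  have hJ : IsJacobsonRing C := isJacobsonRing_of_finiteType (A := k)
  have h0 : (⊥ : Ideal C).jacobson = ⊥ := hJ.out (Ideal.isPrime_bot.isRadical)
  have : c ∉ (⊥ : Ideal C).jacobson := by rw [h0]; simpa using hc
  rw [Ideal.jacobson, Submodule.mem_sInf] at this
  push Not at this
  obtain ⟨m, ⟨-, hm⟩, hcm⟩ := this
  let _ : Field (C ⧸ m) := Ideal.Quotient.field m
  have : Module.Finite k (C ⧸ m) := finite_of_finite_type_of_isJacobsonRing k (C ⧸ m)
  have hbij : Function.Bijective (algebraMap k (C ⧸ m)) :=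
    IsAlgClosed.algebraMap_bijective_of_isIntegral
  let e := AlgEquiv.ofBijective (Algebra.ofId k (C ⧸ m)) hbij
  refine ⟨(e.symm : (C ⧸ m) →ₐ[k] k).comp (Ideal.Quotient.mkₐ k m), ?_⟩
  intro h
  apply hcm
  have : e.symm (Ideal.Quotient.mkₐ k m c) = 0 := h
  rw [EmbeddingLike.map_eq_zero_iff] at this
  exact Ideal.Quotient.eq_zero_iff_mem.mp this

lemma fg_aux {k B : Type*} [Field k] [IsAlgClosed k] [CommRing B] [IsDomain B] [Algebra k B]
    (r : B) (E : B →ₐ[k] B[X]) (hE : Function.Injective E) (hr : 0 < (E r).natDegree)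
    (R : Subalgebra k B) (hR : ∀ b, b ∈ R ↔ IsAlgebraic (Algebra.adjoin k {r}) b) (hrR : r ∈ R) :
    ∃ s : Finset B, R = Algebra.adjoin k (s : Set B) := by
  classical
  set n := (E r).natDegree with hn
  have hchoice : ∀ i : ℕ, ∃ e ∈ R, ∀ b ∈ R, b ≠ 0 → (E b).natDegree % n = i →
      e ≠ 0 ∧ (E e).natDegree % n = i ∧ (E e).natDegree ≤ (E b).natDegree := by
    intro i
    by_cases h : ∃ d, ∃ b ∈ R, b ≠ 0 ∧ (E b).natDegree % n = i ∧ (E b).natDegree = d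
    · obtain ⟨e, he, he0, hei, hed⟩ := Nat.find_spec h
      refine ⟨e, he, fun b hb hb0 hbi => ⟨he0, hei, ?_⟩⟩
      rw [hed]
      exact Nat.find_min' h ⟨b, hb, hb0, hbi, rfl⟩
    · refine ⟨0, zero_mem _, fun b hb hb0 hbi => ?_⟩
      exact absurd ⟨_, b, hb, hb0, hbi, rfl⟩ h
  choose e heR he using hchoice
  refine ⟨insert r ((Finset.range n).image e), le_antisymm ?_ ?_⟩
  swap
  · refine Algebra.adjoin_le ?_
    intro x hx
    simp only [Finset.coe_insert, Finset.coe_image, Set.mem_insert_iff, Set.mem_image] at hx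
    rcases hx with rfl | ⟨i, -, rfl⟩
    · exact hrR
    · exact heR i
  set T := Algebra.adjoin k ((insert r ((Finset.range n).image e) : Finset B) : Set B)
  have hrT : r ∈ T := Algebra.subset_adjoin (by simp)
  have heT : ∀ i < n, e i ∈ T := fun i hi => Algebra.subset_adjoin (by
    simp only [Finset.coe_insert, Finset.coe_image, Set.mem_insert_iff, Set.mem_image]
    exact Or.inr ⟨i, by simpa using hi, rfl⟩)
  have key : ∀ d : ℕ, ∀ b ∈ R, (E b).natDegree = d → b ∈ T := by
    intro d
    induction d using Nat.strong_induction_on with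
    | _ d ih =>
      intro b hb hbd
      by_cases hb0 : b = 0
      · rw [hb0]; exact zero_mem _
      set i := d % n with hi
      have hin : i < n := Nat.mod_lt _ hr
      obtain ⟨he0, hei, hed⟩ := he i b hb hb0 (by rw [hbd])
      rw [hbd] at hed
      obtain ⟨q, hq⟩ : ∃ q, d = (E (e i)).natDegree + q * n := by
        have h1 : n ∣ d - (E (e i)).natDegree := (Nat.modEq_iff_dvd' hed).mp (by
          rw [Nat.ModEq, hei])
        obtain ⟨q, hq⟩ := h1
        refine ⟨q, ?_⟩
        rw [mul_comm] at hq
        omega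
      have hr0 : r ≠ 0 := by rintro rfl; simp [hn] at hr
      set b' := e i * r ^ q with hb'
      have hb'R : b' ∈ R := mul_mem (heR i) (pow_mem hrR q)
      have hb'T : b' ∈ T := mul_mem (heT i hin) (pow_mem hrT q)
      have hb'0 : b' ≠ 0 := mul_ne_zero he0 (pow_ne_zero _ hr0)
      have hEe : E (e i) ≠ 0 := (map_ne_zero_iff E hE).mpr he0
      have hEr : E r ≠ 0 := (map_ne_zero_iff E hE).mpr hr0
      have hEb' : E b' ≠ 0 := (map_ne_zero_iff E hE).mpr hb'0
      have hb'd : (E b').natDegree = d := by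
        rw [hb', map_mul, map_pow, natDegree_mul hEe (pow_ne_zero _ hEr), natDegree_pow, hq]
      obtain ⟨N, I, f, hf, hfI, hrel⟩ := exists_relation r b b' ((hR b).mp hb) ((hR b').mp hb'R) hb'0
      have hrel' := congrArg E hrel
      simp only [map_sum, map_mul, map_pow, map_zero, map_hom] at hrel'
      obtain ⟨c, hc⟩ := ratio_aux (E r) (E b) (E b') d hr hbd.le hb'd.le (by
        rw [← hb'd]; simpa using hEb') N I f hf hfI hrel'
      have hbb : b = (b - c • b') + c • b' := by ring
      have hsub : (E (b - c • b')).coeff d = 0 := by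
        rw [map_sub, map_smul, coeff_sub, coeff_smul, hc, sub_self]
      have hsubd : (E (b - c • b')).natDegree ≤ d := by
        rw [map_sub, map_smul]
        exact (natDegree_sub_le _ _).trans (max_le hbd.le ((natDegree_smul_le _ _).trans hb'd.le))
      have hsubR : b - c • b' ∈ R := sub_mem hb (R.smul_mem hb'R c)
      rw [hbb]
      refine add_mem ?_ (T.smul_mem hb'T c)
      rcases hsubd.lt_or_eq with hlt | heq
      · exact ih _ hlt _ hsubR rfl
      · have h0 : E (b - c • b') = 0 := by
          rw [← leadingCoeff_eq_zero, leadingCoeff, heq, hsub]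
        rw [(map_eq_zero_iff E hE).mp h0]
        exact zero_mem _
  exact fun b hb => key _ b hb rfl

lemma specialize_aux {k B : Type*} [Field k] [IsAlgClosed k] [CommRing B] [IsDomain B] [Algebra k B]
    (r : B) (E : B →ₐ[k] B[X]) (hr : 0 < (E r).natDegree)
    (R : Subalgebra k B) (hrR : r ∈ R) (s : Finset B) (hs : R = Algebra.adjoin k (s : Set B)) :
    ∃ ψ : R →ₐ[k] k[X], 0 < (ψ ⟨r, hrR⟩).natDegree := by
  classical
  set T : Finset B := s.biUnion fun x => (E x).support.image (E x).coeff
  set C0 : Subalgebra k B := Algebra.adjoin k (T : Set B) with hC0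
  have hft : Algebra.FiniteType k C0 := C0.fg_iff_finiteType.mp ⟨T, rfl⟩
  let j : C0[X] →ₐ[k] B[X] := mapAlgHom C0.val
  have hjc : ∀ p n, (j p).coeff n = (p.coeff n : B) := by
    intro p n
    simp [j]
  have hj : Function.Injective j := by
    intro p q h
    ext n
    rw [← hjc, ← hjc, h]
  have hmem : ∀ x : R, E x ∈ j.range := by
    have : R ≤ j.range.comap E := by
      rw [hs]
      refine Algebra.adjoin_le fun x hx => ?_
      change E x ∈ j.range
      have hco : ∀ n, (E x).coeff n ∈ C0 := by
        intro n
        by_cases h0 : (E x).coeff n = 0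
        · rw [h0]; exact zero_mem _
        · apply Algebra.subset_adjoin
          simp only [T, Finset.coe_biUnion, Set.mem_iUnion]
          refine ⟨x, hx, ?_⟩
          simp only [Finset.coe_image, Set.mem_image]
          exact ⟨n, by simpa using h0, rfl⟩
      refine ⟨∑ n ∈ Finset.range ((E x).natDegree + 1), monomial n ⟨_, hco n⟩, ?_⟩
      conv_rhs => rw [(E x).as_sum_range]
      change j _ = _
      rw [map_sum]
      refine Finset.sum_congr rfl fun n _ => ?_
      simp [j]
    exact fun x => this x.2
  let ee := AlgEquiv.ofInjective j hj
  let E' : R →ₐ[k] C0[X] := (ee.symm : j.range →ₐ[k] C0[X]).comp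
    ((E.comp R.val).codRestrict j.range hmem)
  have hE' : ∀ x : R, j (E' x) = E x := by
    intro x
    have : ee (E' x) = ⟨E x, hmem x⟩ := ee.apply_symm_apply _
    exact congrArg Subtype.val this
  set ρ := E' ⟨r, hrR⟩
  set n := (E r).natDegree with hn
  have hρ : (ρ.coeff n : B) = (E r).coeff n := by rw [← hjc, hE']
  have hρ0 : ρ.coeff n ≠ 0 := by
    intro h
    rw [h] at hρ
    have h0 : (E r).leadingCoeff = 0 := hρ.symm
    rw [leadingCoeff_eq_zero] at h0
    rw [hn, h0] at hr
    simp at hr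
  obtain ⟨φ, hφ⟩ := exists_point (k := k) (ρ.coeff n) hρ0
  refine ⟨(mapAlgHom φ).comp E', lt_of_lt_of_le hr (le_natDegree_of_ne_zero ?_)⟩
  simpa [ρ] using hφ

end AlgCl

open Polynomial AlgCl in

/-- (Cf. Makar-Limanov)  Let `k` be an algebraically closed field of characteristic zero and
`B` a commutative `k`-domain.  Given `r ∈ B`, if `r ∉ ML(B)` — i.e. there is a locally
nilpotent `k`-derivation `D` of `B` with `Dr ≠ 0` — then there is
`t ∈ frac(Alg_{k[r]} B)` with `Alg_{k[r]} B ⊆ k[t]`, where `Alg_{k[r]} B` is the set of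
elements of `B` algebraic over `k[r]`.  (Everything is viewed inside `frac(B)`.) -/
theorem algClosure_of_adjoin_in_polynomial_ring (k B : Type*) [Field k] [CharZero k]
    [IsAlgClosed k] [CommRing B] [IsDomain B] [Algebra k B]
    (r : B) (D : Derivation k B B) (hln : ∀ b : B, ∃ n : ℕ, (⇑D)^[n] b = 0)
    (hr : D r ≠ 0) :
    ∃ t : FractionRing B,
      (∃ b₁ b₂ : B, IsAlgebraic ↥(Algebra.adjoin k {r}) b₁ ∧
        IsAlgebraic ↥(Algebra.adjoin k {r}) b₂ ∧ b₂ ≠ 0 ∧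
        t = algebraMap B (FractionRing B) b₁ / algebraMap B (FractionRing B) b₂) ∧
      ∀ b : B, IsAlgebraic ↥(Algebra.adjoin k {r}) b →
        algebraMap B (FractionRing B) b ∈ Algebra.adjoin k {t} := by
  obtain ⟨E, hEc⟩ := exists_exp D hln
  have hEinj : Function.Injective E := by
    intro a b h
    have := congrArg (fun p => coeff p 0) h
    simpa [hEc, dp] using this
  have hrd : 0 < (E r).natDegree := by
    have : (E r).coeff 1 ≠ 0 := by simpa [hEc, dp] using hr
    exact le_natDegree_of_ne_zero this
  let A := Algebra.adjoin k {r}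
  let R : Subalgebra k B := (Subalgebra.algebraicClosure A B).restrictScalars k
  have hR : ∀ b, b ∈ R ↔ IsAlgebraic (Algebra.adjoin k {r}) b := fun b => Iff.rfl
  have hAR : A ≤ R := fun x hx => (hR x).mpr (isAlgebraic_algebraMap (⟨x, hx⟩ : A))
  have hrA : r ∈ A := Algebra.self_mem_adjoin_singleton k r
  have hrR : r ∈ R := hAR hrA
  obtain ⟨s, hs⟩ := fg_aux r E hEinj hrd R hR hrR
  obtain ⟨ψ, hψ⟩ := specialize_aux r E hrd R hrR s hs
  have hψinj : Function.Injective ψ := by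
    rw [injective_iff_map_eq_zero]
    intro b hb
    by_contra hb0
    let ψ' : Subalgebra.algebraicClosure A B →+* k[X] := (ψ : R →+* k[X])
    have h1 : (RingHom.ker ψ').comap (algebraMap A (Subalgebra.algebraicClosure A B)) ≠ ⊥ :=
      Ideal.comap_ne_bot_of_algebraic_mem (x := (b : Subalgebra.algebraicClosure A B)) hb0 hb
        (Algebra.IsAlgebraic.isAlgebraic _)
    obtain ⟨⟨a, haA⟩, ha, ha0⟩ := Submodule.exists_mem_ne_zero_of_ne_bot h1
    have ha' : ψ ⟨a, hAR haA⟩ = 0 := ha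
    have haA' := haA
    simp only [A, Algebra.adjoin_singleton_eq_range_aeval] at haA'
    obtain ⟨f, hf⟩ := haA'
    have hf' : aeval r f = a := hf
    have : (⟨a, hAR haA⟩ : R) = aeval (⟨r, hrR⟩ : R) f := by
      apply Subtype.ext
      refine hf'.symm.trans ?_
      exact (aeval_algHom_apply R.val (⟨r, hrR⟩ : R) f)
    rw [this, ← aeval_algHom_apply] at ha'
    replace ha' : f.comp (ψ ⟨r, hrR⟩) = 0 := ha'
    rcases comp_eq_zero_iff.mp ha' with h0 | ⟨-, h0⟩
    · apply ha0
      apply Subtype.ext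
      change a = 0
      rw [← hf', h0, map_zero]
    · rw [h0] at hψ
      simp at hψ
  obtain ⟨t, c₁, c₂, ⟨b₁, e₁⟩, ⟨b₂, e₂⟩, hc₂, ht, hall⟩ :=
    luroth_poly ψ.range (ψ ⟨r, hrR⟩) ⟨_, rfl⟩ hψ
  have hb₂ : b₂ ≠ 0 := by
    rintro rfl
    apply hc₂; rw [← e₂]; exact map_zero ψ
  let ι := IsScalarTower.toAlgHom k k[X] (RatFunc k)
  have hι : Function.Injective ι := IsFractionRing.injective k[X] (RatFunc k)
  have hg1 : Function.Injective (ι.comp ψ) := hι.comp hψinj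
  let ι2 := IsScalarTower.toAlgHom k B (FractionRing B)
  have hι2 : Function.Injective ι2 := IsFractionRing.injective B (FractionRing B)
  have hg2 : Function.Injective (ι2.comp R.val) := hι2.comp Subtype.val_injective
  let Ψ : FractionRing R →ₐ[k] RatFunc k := IsFractionRing.liftAlgHom hg1
  let Φ : FractionRing R →ₐ[k] FractionRing B := IsFractionRing.liftAlgHom hg2
  have hΨ : ∀ x : R, Ψ (algebraMap R _ x) = algebraMap k[X] (RatFunc k) (ψ x) := fun x =>
    IsFractionRing.lift_algebraMap hg1 x
  have hΦ : ∀ x : R, Φ (algebraMap R _ x) = algebraMap B (FractionRing B) x := fun x =>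
    IsFractionRing.lift_algebraMap hg2 x
  let t0 : FractionRing R := algebraMap R _ b₁ / algebraMap R _ b₂
  have hΨt : Ψ t0 = t := by
    rw [map_div₀, hΨ, hΨ, ht, ← e₁, ← e₂]; rfl
  refine ⟨Φ t0, ⟨b₁, b₂, (hR _).mp b₁.2, (hR _).mp b₂.2, ?_, ?_⟩, ?_⟩
  · simpa using hb₂
  · rw [map_div₀, hΦ, hΦ]
  · intro b hb
    have h1 := hall (ψ ⟨b, hb⟩) ⟨_, rfl⟩
    rw [Algebra.adjoin_singleton_eq_range_aeval] at h1
    obtain ⟨f, hf⟩ := h1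
    have hf' : aeval t f = algebraMap k[X] (RatFunc k) (ψ ⟨b, hb⟩) := hf
    rw [← hΨt, aeval_algHom_apply, ← hΨ] at hf'
    have h2 := Ψ.toRingHom.injective hf'
    have h3 := congrArg Φ h2
    rw [hΦ, ← aeval_algHom_apply] at h3
    have h4 : algebraMap B (FractionRing B) b = aeval (Φ t0) f := h3.symm
    rw [h4]
    exact aeval_mem_adjoin_singleton k _
end

section
/- Let k be a field and let A be an integral domain containing k that is finitely generated as a k-algebra. Let 𝒪 be the integral closure of A in frac(A). Then the conductor ideal 𝒞_A(𝒪) = { a ∈ A : a·𝒪 ⊆ A } is nonzero; equivalently, there exists a nonzero a ∈ A with a·𝒪 ⊆ A. -/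
open Polynomial in
lemma sep_of_coeffs {F P Ω : Type*} [Field F] [Field P] [Field Ω] [Algebra F Ω] [Algebra P Ω]
    (t : Ω) (ht : IsSeparable P t)
    (h : ∀ i, algebraMap P Ω ((minpoly P t).coeff i) ∈ (algebraMap F Ω).range) :
    IsSeparable F t := by
  have h1 : (minpoly P t).map (algebraMap P Ω) ∈ Polynomial.lifts (algebraMap F Ω) := by
    rw [Polynomial.lifts_iff_coeff_lifts]
    intro i
    rw [Polynomial.coeff_map]
    obtain ⟨z, hz⟩ := h i
    exact ⟨z, hz⟩
  obtain ⟨g, hg⟩ := (Polynomial.mem_lifts _).1 h1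
  have hs : g.Separable := by
    rw [← Polynomial.separable_map (algebraMap F Ω), hg, Polynomial.separable_map]
    exact ht
  have h0 : aeval t g = 0 := by
    rw [← Polynomial.eval_map_algebraMap, hg, Polynomial.eval_map_algebraMap, minpoly.aeval]
  exact hs.of_dvd (minpoly.dvd F t h0)

lemma exists_roots (k Ω ι : Type*) [Field k] [Field Ω] [IsAlgClosed Ω] [Algebra k Ω] [Finite ι]
    (x : ι → Ω) (hx : AlgebraicIndependent k x)
    [Algebra.IsAlgebraic (IntermediateField.adjoin k (Set.range x)) Ω] (T : Set Ω) (hT : T.Finite) :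
    ∃ (C : Set Ω) (y : ι → Ω) (q : ℕ), C.Finite ∧ 0 < q ∧
      (∀ c ∈ C, c ^ q ∈ (algebraMap k Ω).range) ∧ (∀ i, y i ^ q = x i) ∧
      AlgebraicIndependent k y ∧
      ∀ F : IntermediateField k Ω, C ⊆ F → Set.range y ⊆ F → ∀ t ∈ T, IsSeparable F t := by
  classical
  set K := IntermediateField.adjoin k (Set.range x) with hK
  let p := ringExpChar k
  have : ExpChar k p := inferInstance
  have : ExpChar K p := expChar_of_injective_algebraMap (algebraMap k K).injective p
  have : ExpChar Ω p := expChar_of_injective_algebraMap (algebraMap k Ω).injective p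
  let P := perfectClosure K Ω
  have hP : ∀ t : Ω, IsSeparable P t := fun t ↦ by
    have : PerfectField P := inferInstance
    have : Algebra.IsAlgebraic P Ω := Algebra.IsAlgebraic.tower_top (K := K) P
    exact Algebra.IsSeparable.isSeparable P t
  let S : Set Ω := ⋃ t ∈ T, (fun c : P ↦ (c : Ω)) '' (↑(minpoly P t).coeffs : Set P)
  have hS : S.Finite := hT.biUnion fun t _ ↦ (Finset.finite_toSet _).image _
  have hSP : ∀ s ∈ S, ∃ n : ℕ, s ^ p ^ n ∈ K := by
    intro s hs
    simp only [S, Set.mem_iUnion] at hs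
    obtain ⟨t, ht, c, hc, rfl⟩ := hs
    obtain ⟨n, z, hz⟩ := (mem_perfectClosure_iff_pow_mem p).1 c.2
    exact ⟨n, by rw [← hz]; exact z.2⟩
  choose! n hn using hSP
  obtain ⟨N, hN⟩ := (hS.image n).bddAbove
  have hNS : ∀ s ∈ S, s ^ p ^ N ∈ K := by
    intro s hs
    have : n s ≤ N := hN ⟨s, hs, rfl⟩
    obtain ⟨d, hd⟩ := Nat.exists_eq_add_of_le this
    rw [hd, pow_add, pow_mul]
    exact pow_mem (hn s hs) _
  have hrs : ∀ s ∈ S, ∃ r d : MvPolynomial ι k,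
      s ^ p ^ N = MvPolynomial.aeval x r / MvPolynomial.aeval x d := fun s hs ↦
    (IntermediateField.mem_adjoin_range_iff k x _).1 (hNS s hs)
  choose! r d hrd using hrs
  let e := iterateFrobeniusEquiv Ω p N
  have he : ∀ z, (e.symm z) ^ p ^ N = z := fun z ↦ by
    rw [← iterateFrobeniusEquiv_def, RingEquiv.apply_symm_apply]
  have he' : ∀ z, e.symm (z ^ p ^ N) = z := fun z ↦ by
    rw [← iterateFrobeniusEquiv_def, RingEquiv.symm_apply_apply]
  let C : Set Ω := ⋃ s ∈ S, (fun c : k ↦ e.symm (algebraMap k Ω c)) ''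
    (↑((r s).support.image (fun m ↦ (r s).coeff m) ∪ (d s).support.image (fun m ↦ (d s).coeff m))
      : Set k)
  have key : ∀ (F : IntermediateField k Ω) (f : MvPolynomial ι k),
      (∀ m ∈ f.support, e.symm (algebraMap k Ω (f.coeff m)) ∈ F) → (∀ i, e.symm (x i) ∈ F) →
      e.symm (MvPolynomial.aeval x f) ∈ F := by
    intro F f hf hxF
    rw [MvPolynomial.aeval_def, MvPolynomial.eval₂_eq, map_sum]
    refine sum_mem fun m hm ↦ ?_
    rw [map_mul, map_prod]
    refine mul_mem (hf m hm) (prod_mem fun i _ ↦ ?_)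
    rw [map_pow]
    exact pow_mem (hxF i) _
  refine ⟨C, fun i ↦ e.symm (x i), p ^ N, hS.biUnion fun t _ ↦ (Finset.finite_toSet _).image _,
    expChar_pow_pos K p N, ?_, fun i ↦ he _, ?_, ?_⟩
  · intro c hc
    simp only [C, Set.mem_iUnion] at hc
    obtain ⟨s, hs, a, ha, rfl⟩ := hc
    exact ⟨a, (he _).symm⟩
  · rw [algebraicIndependent_iff] at hx ⊢
    intro f hf
    have h1 : MvPolynomial.aeval x (MvPolynomial.map (iterateFrobenius k p N) f) = 0 := by
      have : MvPolynomial.aeval x (MvPolynomial.map (iterateFrobenius k p N) f)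
          = (MvPolynomial.aeval (fun i ↦ e.symm (x i)) f) ^ p ^ N := by
        rw [← iterateFrobenius_def, MvPolynomial.aeval_def, MvPolynomial.aeval_def,
          MvPolynomial.eval₂_map, MvPolynomial.hom_eval₂]
        congr 1
        · ext a
          simp [iterateFrobenius_def]
        · ext i
          simp [iterateFrobenius_def, he]
      rw [this, hf, zero_pow (expChar_pow_pos K p N).ne']
    have h2 := hx _ h1
    exact (MvPolynomial.map_injective _ (iterateFrobenius k p N).injective) (by rw [h2, map_zero])
  · intro F hCF hyF t ht
    refine sep_of_coeffs t (hP t) fun i ↦ ?_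
    suffices algebraMap P Ω ((minpoly P t).coeff i) ∈ F from ⟨⟨_, this⟩, rfl⟩
    by_cases h0 : (minpoly P t).coeff i = 0
    · rw [h0, map_zero]; exact zero_mem F
    have hs : algebraMap P Ω ((minpoly P t).coeff i) ∈ S := by
      simp only [S, Set.mem_iUnion]
      exact ⟨t, ht, _, Polynomial.coeff_mem_coeffs h0, rfl⟩
    generalize algebraMap P Ω ((minpoly P t).coeff i) = s at hs
    rw [← he' s, hrd s hs, map_div₀]
    have hxF : ∀ i, e.symm (x i) ∈ F := fun i ↦ hyF ⟨i, rfl⟩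
    refine div_mem (key F _ (fun m hm ↦ hCF ?_) hxF) (key F _ (fun m hm ↦ hCF ?_) hxF)
    · simp only [C, Set.mem_iUnion]
      exact ⟨s, hs, _, by simpa using Or.inl ⟨m, by simpa using hm, rfl⟩, rfl⟩
    · simp only [C, Set.mem_iUnion]
      exact ⟨s, hs, _, by simpa using Or.inr ⟨m, by simpa using hm, rfl⟩, rfl⟩

lemma exists_finite_span (R F Ω : Type*) [CommRing R] [IsDomain R] [IsNoetherianRing R]
    [IsIntegrallyClosed R] [Field F] [Field Ω] [Algebra R F] [IsFractionRing R F] [Algebra F Ω]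
    [Algebra R Ω] [IsScalarTower R F Ω] (T : Set Ω) (hT : T.Finite)
    (hs : ∀ t ∈ T, IsSeparable F t) :
    ∃ W : Set Ω, W.Finite ∧
      ∀ z ∈ IntermediateField.adjoin F T, IsIntegral R z → z ∈ Submodule.span R W := by
  let E := IntermediateField.adjoin F T
  have : Finite T := hT
  have : FiniteDimensional F E :=
    IntermediateField.finiteDimensional_adjoin fun t ht ↦ (hs t ht).isIntegral
  have : Algebra.IsSeparable F E := IntermediateField.isSeparable_adjoin_iff_isSeparable F Ω |>.2 hs
  have hfin : Module.Finite R (integralClosure R E) :=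
    IsIntegralClosure.finite R F E (integralClosure R E)
  let φ : integralClosure R E →ₗ[R] Ω :=
    ((E.val.restrictScalars R).comp (integralClosure R E).val).toLinearMap
  obtain ⟨W, hWf, hW⟩ := Submodule.fg_def.1 (Module.Finite.iff_fg.1 (Module.Finite.range φ))
  refine ⟨W, hWf, fun z hz hzi ↦ ?_⟩
  rw [hW]
  have h1 : IsIntegral R (⟨z, hz⟩ : E) :=
    (isIntegral_algHom_iff (E.val.restrictScalars R) (E.val.injective)).1 hzi
  exact ⟨⟨⟨z, hz⟩, h1⟩, rfl⟩

/-- The final step. -/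
lemma conductor_of_fg (A L Ω : Type*) [CommRing A] [IsDomain A] [IsNoetherianRing A] [Field L]
    [Algebra A L] [IsFractionRing A L] [Field Ω] [Algebra L Ω] [Algebra A Ω] [IsScalarTower A L Ω]
    (M : Submodule A Ω) (hM : M.FG) (h : ∀ z ∈ integralClosure A L, algebraMap L Ω z ∈ M) :
    ∃ a : A, a ≠ 0 ∧ ∀ x ∈ integralClosure A L,
      ∃ b : A, algebraMap A L a * x = algebraMap A L b := by
  let φ : L →ₗ[A] Ω := (IsScalarTower.toAlgHom A L Ω).toLinearMap
  have hφ : Function.Injective φ := (algebraMap L Ω).injective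
  let I := Subalgebra.toSubmodule (integralClosure A L)
  have hle : I.map φ ≤ M := by
    rintro _ ⟨z, hz, rfl⟩
    exact h z hz
  have hN : IsNoetherian A M := isNoetherian_of_fg_of_noetherian M hM
  have hfg : (I.map φ).FG := by
    have := isNoetherian_of_le hle
    exact Module.Finite.iff_fg.1 inferInstance
  have hI : I.FG := Submodule.fg_of_fg_map_injective φ hφ hfg
  obtain ⟨a, ha, hab⟩ := FractionalIdeal.isFractional_of_fg (S := nonZeroDivisors A) hI
  refine ⟨a, nonZeroDivisors.ne_zero ha, fun x hx ↦ ?_⟩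
  obtain ⟨b, hb⟩ := hab x hx
  exact ⟨b, by rw [hb, Algebra.smul_def]⟩

lemma int_trans {P R Ω : Type*} [CommRing P] [CommRing R] [CommRing Ω] [Algebra R Ω]
    (θ : P →+* Ω) (h : ∀ p, IsIntegral R (θ p)) (z : Ω) (hz : θ.IsIntegralElem z) :
    IsIntegral R z := by
  let D := integralClosure R Ω
  let φ : P →+* D := θ.codRestrict D h
  have h1 : IsIntegral D z := by
    obtain ⟨f, hf, hfz⟩ := hz
    refine ⟨f.map φ, hf.map φ, ?_⟩
    rw [Polynomial.eval₂_map]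
    exact hfz
  exact isIntegral_trans (A := D) z h1

open IntermediateField.algebraAdjoinAdjoin in
lemma exists_finite_span_adjoin (κ Ω : Type*) [Field κ] [Field Ω] [Algebra κ Ω] {s : ℕ}
    (y : Fin s → Ω) (hy : AlgebraicIndependent κ y) (T : Set Ω) (hT : T.Finite)
    (hs : ∀ t ∈ T, IsSeparable (IntermediateField.adjoin κ (Set.range y)) t) :
    ∃ W : Set Ω, W.Finite ∧
      ∀ z ∈ IntermediateField.adjoin (IntermediateField.adjoin κ (Set.range y)) T,
        IsIntegral (Algebra.adjoin κ (Set.range y)) z →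
          z ∈ Submodule.span (Algebra.adjoin κ (Set.range y)) W := by
  have h1 : IsIntegrallyClosed (MvPolynomial (Fin s) κ) :=
    UniqueFactorizationMonoid.instIsIntegrallyClosed
  have : IsIntegrallyClosed (Algebra.adjoin κ (Set.range y)) :=
    IsIntegrallyClosed.of_equiv hy.aevalEquiv.toRingEquiv
  have : IsNoetherianRing (Algebra.adjoin κ (Set.range y)) :=
    isNoetherianRing_of_ringEquiv _ hy.aevalEquiv.toRingEquiv
  exact exists_finite_span _ _ Ω T hT hs

set_option maxHeartbeats 1000000 in
lemma conductor_aux (k A L Ω : Type*) [Field k] [CommRing A] [IsDomain A]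
    [Algebra k A] [Algebra.FiniteType k A] [Field L] [Algebra A L] [IsFractionRing A L]
    [Field Ω] [IsAlgClosed Ω] [Algebra L Ω] [Algebra.IsAlgebraic L Ω] [Algebra A Ω]
    [IsScalarTower A L Ω] [Algebra k Ω] [IsScalarTower k A Ω] :
    ∃ a : A, a ≠ 0 ∧ ∀ x ∈ integralClosure A L,
      ∃ b : A, algebraMap A L a * x = algebraMap A L b := by
  classical
  have : IsNoetherianRing A := Algebra.FiniteType.isNoetherianRing k A
  obtain ⟨s, g, hginj, hgfin⟩ := exists_finite_inj_algHom_of_fg k A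
  have hgint : g.toRingHom.IsIntegral := hgfin.to_isIntegral
  have hAinj : Function.Injective (algebraMap A Ω) := by
    rw [IsScalarTower.algebraMap_eq A L Ω]
    exact (algebraMap L Ω).injective.comp (IsFractionRing.injective A L)
  let ψ : A →ₐ[k] Ω := IsScalarTower.toAlgHom k A Ω
  have hψ : ∀ a, ψ a = algebraMap A Ω a := fun _ ↦ rfl
  let x : Fin s → Ω := fun i ↦ ψ (g (MvPolynomial.X i))
  have hxg : MvPolynomial.aeval x = ψ.comp g := by
    ext i
    simp [x]
  have hx : AlgebraicIndependent k x := by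
    rw [AlgebraicIndependent, hxg]
    exact hAinj.comp hginj
  -- integrality of elements of `A` in `Ω`
  have hAint : ∀ a : A, (MvPolynomial.aeval x : _ →ₐ[k] Ω).toRingHom.IsIntegralElem (ψ a) := by
    intro a
    obtain ⟨f, hf, hfa⟩ := hgint a
    refine ⟨f, hf, ?_⟩
    rw [hxg]
    have := congrArg ψ.toRingHom hfa
    rw [Polynomial.hom_eval₂, map_zero] at this
    exact this
  have hfrac : ∀ z : L, ∃ a b : A, algebraMap L Ω z = ψ a / ψ b := by
    intro z
    obtain ⟨a, b, _, rfl⟩ := IsFractionRing.div_surjective (A := A) z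
    refine ⟨a, b, ?_⟩
    rw [map_div₀, hψ, hψ, IsScalarTower.algebraMap_apply A L Ω,
      IsScalarTower.algebraMap_apply A L Ω]
  let K := IntermediateField.adjoin k (Set.range x)
  have hPK : ∀ p : MvPolynomial (Fin s) k, MvPolynomial.aeval x p ∈ Algebra.adjoin k (Set.range x) := by
    intro p
    rw [Algebra.adjoin_range_eq_range_aeval]
    exact ⟨p, rfl⟩
  have : Algebra.IsAlgebraic K Ω := by
    refine ⟨fun z ↦ ?_⟩
    have hA : ∀ a : A, IsIntegral K (ψ a) := fun a ↦ by
      refine int_trans _ (fun p ↦ ?_) _ (hAint a)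
      exact isIntegral_algebraMap (R := K)
        (x := ⟨_, IntermediateField.algebra_adjoin_le_adjoin k _ (hPK p)⟩)
    have hL : ∀ l : L, IsIntegral K (algebraMap L Ω l) := fun l ↦ by
      obtain ⟨a, b, h⟩ := hfrac l
      rw [h, div_eq_mul_inv]
      exact (hA a).mul (hA b).inv
    exact (int_trans (algebraMap L Ω) hL z (Algebra.IsIntegral.isIntegral (R := L) z)).isAlgebraic
  obtain ⟨T0, hT0⟩ := Algebra.FiniteType.out (R := k) (A := A)
  let T : Set Ω := ψ '' T0
  have hTf : T.Finite := T0.finite_toSet.image _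
  obtain ⟨C, y, q, hCf, hq, hC, hy, hyi, hsep⟩ := exists_roots k Ω (Fin s) x hx T hTf
  let k1 := IntermediateField.adjoin k C
  have hCk : ∀ c ∈ C, IsIntegral k c := fun c hc ↦ by
    obtain ⟨a, ha⟩ := hC c hc
    exact IsIntegral.of_pow hq (ha ▸ isIntegral_algebraMap)
  have : Algebra.IsAlgebraic k k1 := IntermediateField.isAlgebraic_adjoin hCk
  have hyi1 : AlgebraicIndependent k1 y := hyi.extendScalars k1
  let R := Algebra.adjoin k1 (Set.range y)
  let F := IntermediateField.adjoin k1 (Set.range y)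
  have hsepF : ∀ t ∈ T, IsSeparable F t := by
    refine hsep (F.restrictScalars k) ?_ ?_
    · intro c hc
      exact F.algebraMap_mem ⟨c, IntermediateField.subset_adjoin k C hc⟩
    · exact IntermediateField.subset_adjoin k1 (Set.range y)
  obtain ⟨W, hWf, hW⟩ := exists_finite_span_adjoin k1 Ω y hyi1 T hTf hsepF
  let B := Algebra.adjoin A (C ∪ Set.range y)
  have hB : (Subalgebra.toSubmodule B).FG := by
    refine fg_adjoin_of_finite (hCf.union (Set.finite_range y)) ?_
    rintro z (hz | ⟨i, rfl⟩)
    · exact (hCk z hz).tower_top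
    · refine IsIntegral.of_pow hq ?_
      rw [hy]
      exact isIntegral_algebraMap
  have hkB : ∀ c : k, algebraMap k Ω c ∈ B := fun c ↦ by
    rw [IsScalarTower.algebraMap_apply k A Ω]
    exact B.algebraMap_mem _
  have hk1B : ∀ c : k1, (c : Ω) ∈ B := by
    intro c
    have h1 : (c : Ω) ∈ Algebra.adjoin k C := by
      rw [← IntermediateField.adjoin_toSubalgebra_of_isAlgebraic fun c hc ↦ (hCk c hc).isAlgebraic]
      exact c.2
    have h2 : Algebra.adjoin k C ≤ B.restrictScalars k :=
      Algebra.adjoin_le fun c hc ↦ Algebra.subset_adjoin (Or.inl hc)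
    exact h2 h1
  have hRB : ∀ r : R, (r : Ω) ∈ B := by
    rintro ⟨r, hr⟩
    induction hr using Algebra.adjoin_induction with
    | mem z hz => exact Algebra.subset_adjoin (Or.inr hz)
    | algebraMap c => exact hk1B c
    | add a b _ _ ha hb => exact add_mem ha hb
    | mul a b _ _ ha hb => exact mul_mem ha hb
  let M : Submodule A Ω := Subalgebra.toSubmodule B * Submodule.span A W
  have hM : M.FG := hB.mul (Submodule.fg_span hWf)
  have hWM : ∀ z ∈ Submodule.span R W, z ∈ M := by
    intro z hz
    induction hz using Submodule.span_induction with
    | mem w hw =>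
      rw [← one_mul w]
      exact Submodule.mul_mem_mul (one_mem B) (Submodule.subset_span hw)
    | zero => exact zero_mem M
    | add a b _ _ ha hb => exact add_mem ha hb
    | smul r a _ ha =>
      have h1 : (r : Ω) * a ∈ Subalgebra.toSubmodule B * M :=
        Submodule.mul_mem_mul (hRB r) ha
      have h2 : Subalgebra.toSubmodule B * M = M := by
        simp only [M]
        rw [← mul_assoc, (Subalgebra.isIdempotentElem_toSubmodule B).eq]
      rw [h2] at h1
      exact h1
  refine conductor_of_fg A L Ω M hM fun z hz ↦ hWM _ (hW _ ?_ ?_)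
  · have hAE : ∀ a : A, ψ a ∈ IntermediateField.adjoin F T := by
      intro a
      have ha : a ∈ Algebra.adjoin k (T0 : Set A) := by rw [hT0]; trivial
      induction ha using Algebra.adjoin_induction with
      | mem t ht => exact IntermediateField.subset_adjoin F T ⟨t, ht, rfl⟩
      | algebraMap c =>
        rw [AlgHom.commutes]
        exact (IntermediateField.adjoin F T).algebraMap_mem (algebraMap k1 F (algebraMap k k1 c))
      | add a b _ _ ha hb => rw [map_add]; exact add_mem ha hb
      | mul a b _ _ ha hb => rw [map_mul]; exact mul_mem ha hb
    obtain ⟨a, b, h⟩ := hfrac z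
    rw [h]
    exact div_mem (hAE a) (hAE b)
  · have hxR : ∀ p : MvPolynomial (Fin s) k, MvPolynomial.aeval x p ∈ R := by
      intro p
      have h2 : Algebra.adjoin k (Set.range x) ≤ R.restrictScalars k := by
        refine Algebra.adjoin_le ?_
        rintro _ ⟨i, rfl⟩
        rw [← hy i]
        exact pow_mem (Algebra.subset_adjoin (Set.mem_range_self i)) _
      exact h2 (hPK p)
    have hAR : ∀ a : A, IsIntegral R (ψ a) := fun a ↦ by
      refine int_trans _ (fun p ↦ ?_) _ (hAint a)
      exact isIntegral_algebraMap (R := R) (x := ⟨_, hxR p⟩)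
    have hzA : IsIntegral A (algebraMap L Ω z) := IsIntegral.algebraMap hz
    exact int_trans (algebraMap A Ω) hAR _ hzA

/-- Let `k` be a field and `A` an integral domain containing `k` that is finitely generated
as a `k`-algebra.  Let `𝒪` be the integral closure of `A` in `frac(A)`.  Then the conductor
ideal `𝒞_A(𝒪)` is nonzero: there is a nonzero `a ∈ A` with `a·𝒪 ⊆ A`. -/
theorem conductor_of_affine_domain_ne_zero (k A : Type*) [Field k] [CommRing A] [IsDomain A]
    [Algebra k A] [Algebra.FiniteType k A] :
    ∃ a : A, a ≠ 0 ∧ ∀ x ∈ integralClosure A (FractionRing A),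
      ∃ b : A, algebraMap A (FractionRing A) a * x = algebraMap A (FractionRing A) b := by
  exact conductor_aux k A (FractionRing A) (AlgebraicClosure (FractionRing A))
end

section
/- Let k be a field of characteristic zero, and let R and S be integral domains containing k with tr.deg_k R = tr.deg_k S = 1. If for some n ≥ 0 the polynomial rings R[x_1,…,x_n] and S[y_1,…,y_n] are isomorphic as k-algebras, then R and S are isomorphic as k-algebras. -/
/-- The transcendence degree of an `R`-algebra `A`: the supremum of the cardinalities of
algebraically independent subsets of `A` over `R`. -/
noncomputable def trdeg (R A : Type*) [CommRing R] [CommRing A] [Algebra R A] : Cardinal :=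
  ⨆ s : { s : Set A // AlgebraicIndependent R ((↑) : s → A) }, Cardinal.mk s.1

section Luroth
open Polynomial

/-- The coefficients of a swapped bivariate polynomial. -/
lemma swap_coeff_coeff {F : Type*} [CommRing F] (p : F[X][X]) (i j : ℕ) :
    ((Bivariate.swap p).coeff i).coeff j = (p.coeff j).coeff i := by
  induction p using Polynomial.induction_on' with
  | add p q hp hq => simp [hp, hq]
  | monomial n a =>
    induction a using Polynomial.induction_on' with
    | add p q hp hq => simp [hp, hq]
    | monomial m r =>
      rw [Bivariate.swap_monomial_monomial]
      simp only [coeff_monomial]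
      split_ifs <;> simp_all [coeff_monomial]

lemma isIntegrallyClosed_of_sat {F : Type*} [Field F] (T : Subalgebra F F[X])
    (hT : ∀ f : F[X], ∀ a ∈ T, ∀ b ∈ T, b ≠ 0 → b * f = a → f ∈ T) :
    IsIntegrallyClosed T := by
  have hinj : Function.Injective (algebraMap T (FractionRing F[X])) := by
    rw [IsScalarTower.algebraMap_eq T F[X] (FractionRing F[X])]
    exact (IsFractionRing.injective F[X] (FractionRing F[X])).comp Subtype.val_injective
  let ι : FractionRing T →ₐ[T] FractionRing F[X] := IsFractionRing.liftAlgHom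
    (g := Algebra.ofId T (FractionRing F[X])) hinj
  rw [isIntegrallyClosed_iff (FractionRing T)]
  intro x hx
  have h1 : IsIntegral F[X] (ι x) := (hx.map ι).tower_top
  obtain ⟨f, hf⟩ := IsIntegrallyClosed.isIntegral_iff.1 h1
  obtain ⟨a, b, hb, rfl⟩ := IsFractionRing.div_surjective (A := T) x
  have hb0 : b ≠ 0 := nonZeroDivisors.ne_zero hb
  have hb1 : algebraMap T (FractionRing F[X]) b ≠ 0 := by
    rwa [Ne, map_eq_zero_iff _ hinj]
  have hb2 : algebraMap T (FractionRing T) b ≠ 0 := by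
    rwa [Ne, map_eq_zero_iff _ (IsFractionRing.injective T (FractionRing T))]
  rw [map_div₀, AlgHom.commutes, AlgHom.commutes, eq_div_iff hb1] at hf
  have hf' : (b : F[X]) * f = a := by
    apply IsFractionRing.injective F[X] (FractionRing F[X])
    rw [map_mul, mul_comm]; exact hf
  have hfT : f ∈ T := hT f a a.2 b b.2 (by simpa using hb0) hf'
  refine ⟨⟨f, hfT⟩, ?_⟩
  rw [eq_div_iff hb2, ← map_mul]
  congr 1
  ext1
  simpa [mul_comm] using hf'

lemma aeval_sub_aux {T B : Type*} [CommRing T] [CommRing B] [Algebra T B] (p q : T[X]) (x : B) :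
    aeval x (p - q) = aeval x p - aeval x q := map_sub _ _ _

lemma poly_mul_sub_aux {T : Type*} [CommRing T] (p q r : T[X]) :
    p * (q - r) = p * q - p * r := mul_sub _ _ _

/-- Lüroth for subalgebras of a polynomial ring. -/
theorem luroth_poly {F : Type*} [Field F] (T : Subalgebra F F[X])
    (hT : ∀ f : F[X], ∀ a ∈ T, ∀ b ∈ T, b ≠ 0 → b * f = a → f ∈ T)
    (w : F[X]) (hw : w ∈ T) (hwd : w.natDegree ≠ 0) :
    ∃ u ∈ T, u.natDegree ≠ 0 ∧ ∀ a ∈ T, ∃ p : F[X], a = p.comp u := by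
  have := isIntegrallyClosed_of_sat T hT
  -- the polynomial `v(Y) - v(X)`
  have key : ∀ v : F[X], ∀ hv : v ∈ T,
      aeval (X : F[X]) (v.map (algebraMap F T) - C (⟨v, hv⟩ : T)) = 0 := by
    intro v hv
    refine (aeval_sub_aux _ _ _).trans ?_
    rw [aeval_map_algebraMap, aeval_X_left_apply, aeval_C]
    exact sub_self v
  have hXint : IsIntegral T (X : F[X]) := by
    have hw0 : w.leadingCoeff ≠ 0 := by
      intro h; rw [leadingCoeff_eq_zero] at h; simp [h] at hwd
    have hv : C w.leadingCoeff⁻¹ * w ∈ T := by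
      rw [← smul_eq_C_mul]; exact T.smul_mem hw _
    have hmon : (C w.leadingCoeff⁻¹ * w).Monic := by
      rw [mul_comm]; exact monic_mul_leadingCoeff_inv (by intro h; simp [h] at hwd)
    have hdeg : (C w.leadingCoeff⁻¹ * w).natDegree = w.natDegree :=
      natDegree_C_mul (inv_ne_zero hw0)
    refine ⟨_, ?_, key _ hv⟩
    apply Monic.sub_of_left (hmon.map _)
    rw [degree_map]
    refine degree_C_le.trans_lt ?_
    rw [← natDegree_pos_iff_degree_pos, hdeg]
    exact Nat.pos_of_ne_zero hwd
  set m := minpoly T (X : F[X]) with hm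
  have hmm : m.Monic := minpoly.monic hXint
  -- a coefficient of maximal degree
  obtain ⟨i, hi, himax⟩ := Finset.exists_max_image m.support
    (fun i => (m.coeff i : F[X]).natDegree)
    (by rw [Polynomial.support_nonempty]; exact hmm.ne_zero)
  set u : T := m.coeff i with hu
  have hmax : ∀ j, (m.coeff j : F[X]).natDegree ≤ (u : F[X]).natDegree := by
    intro j
    by_cases hj : j ∈ m.support
    · exact himax j hj
    · rw [notMem_support_iff.1 hj]; simp
  have hud : (u : F[X]).natDegree ≠ 0 := by
    intro h0
    have hc : ∀ j, ∃ c : F, (m.coeff j) = algebraMap F T c := by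
      intro j
      have := hmax j
      rw [h0, Nat.le_zero] at this
      obtain ⟨c, hc⟩ := natDegree_eq_zero.1 this
      exact ⟨c, by ext1; rw [← hc]; rfl⟩
    choose c hc using hc
    have hl : m ∈ lifts (algebraMap F T) := by
      rw [lifts_iff_coeff_lifts]
      exact fun j => ⟨c j, (hc j).symm⟩
    obtain ⟨q, hq⟩ := (mem_lifts _).1 hl
    have h1 := minpoly.aeval T (X : F[X])
    rw [← hm, ← hq, aeval_map_algebraMap, aeval_X_left_apply] at h1
    rw [h1] at hq
    simp at hq
    exact hmm.ne_zero hq.symm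
  have hdvd : m ∣ (u : F[X]).map (algebraMap F T) - C u :=
    minpoly.isIntegrallyClosed_dvd hXint (key _ u.2)
  obtain ⟨q, hq⟩ := hdvd
  -- transport to `F[X][Y]`
  let M : F[X][X] := m.map (algebraMap T F[X])
  let Q : F[X][X] := q.map (algebraMap T F[X])
  have hMQ : (u : F[X]).map C - C (u : F[X]) = M * Q := by
    have := congrArg (Polynomial.map (algebraMap T F[X])) hq
    rw [Polynomial.map_mul, Polynomial.map_sub, Polynomial.map_map, Polynomial.map_C,
      ← IsScalarTower.algebraMap_eq] at this
    exact this
  have hsw : C (u : F[X]) - (u : F[X]).map C = Bivariate.swap M * Bivariate.swap Q := by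
    rw [← map_mul, ← hMQ, map_sub, Bivariate.swap_C, Bivariate.swap_map_C]
  have hposd : 0 < ((u : F[X]).map (C : F →+* F[X])).natDegree := by
    rw [natDegree_map]; omega
  have hdeg1 : (C (u : F[X]) - (u : F[X]).map C).natDegree = (u : F[X]).natDegree := by
    rw [natDegree_sub_eq_right_of_natDegree_lt (by rw [natDegree_C]; exact hposd), natDegree_map]
  have hdeg2 : ((u : F[X]).map C - C (u : F[X])).natDegree = (u : F[X]).natDegree := by
    rw [natDegree_sub_eq_left_of_natDegree_lt (by rw [natDegree_C]; exact hposd), natDegree_map]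
  have hne : (C (u : F[X]) - (u : F[X]).map C) ≠ 0 := by
    intro h; rw [h] at hdeg1; simp at hdeg1; exact hud hdeg1.symm
  have hsM0 : Bivariate.swap M ≠ 0 := by intro h; rw [h, zero_mul] at hsw; exact hne hsw
  have hsQ0 : Bivariate.swap Q ≠ 0 := by intro h; rw [h, mul_zero] at hsw; exact hne hsw
  have hM0 : M ≠ 0 := by intro h; exact hsM0 (by rw [h, map_zero])
  have hQ0 : Q ≠ 0 := by intro h; exact hsQ0 (by rw [h, map_zero])
  have hMge : (u : F[X]).natDegree ≤ (Bivariate.swap M).natDegree := by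
    apply le_natDegree_of_ne_zero
    intro h
    have h2 := swap_coeff_coeff M (u : F[X]).natDegree i
    rw [h] at h2
    have h3 : M.coeff i = (u : F[X]) := by simp [M, hu]
    rw [h3, coeff_zero, coeff_natDegree] at h2
    have := leadingCoeff_eq_zero.1 h2.symm
    rw [this] at hud; simp at hud
  have hsum : (u : F[X]).natDegree = (Bivariate.swap M).natDegree + (Bivariate.swap Q).natDegree := by
    rw [← hdeg1, hsw, natDegree_mul hsM0 hsQ0]
  have hQd : (Bivariate.swap Q).natDegree = 0 := by omega
  obtain ⟨q0, hq0⟩ := natDegree_eq_zero.1 hQd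
  have hlc : (Bivariate.swap M).leadingCoeff * q0 = - C (u : F[X]).leadingCoeff := by
    have h1 := congrArg leadingCoeff hsw
    rw [leadingCoeff_mul, ← hq0, leadingCoeff_C,
      leadingCoeff_sub_of_degree_lt' (by
        apply degree_lt_degree; rw [natDegree_C]; exact hposd), leadingCoeff_map] at h1
    exact h1.symm
  have hq0d : q0.natDegree = 0 := by
    have h1 : ((Bivariate.swap M).leadingCoeff * q0).natDegree = 0 := by rw [hlc]; simp
    have h2 : q0 ≠ 0 := by rintro rfl; rw [map_zero] at hq0; exact hsQ0 hq0.symm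
    rw [natDegree_mul (leadingCoeff_ne_zero.2 hsM0) h2] at h1
    omega
  have hQdeg : Q.natDegree = 0 := by
    have : Q = q0.map C := by
      rw [← Bivariate.swap_swap_apply Q, ← hq0, Bivariate.swap_C]
    rw [this, natDegree_map, hq0d]
  have hmdeg : m.natDegree = (u : F[X]).natDegree := by
    have h1 : M.natDegree = (u : F[X]).natDegree := by
      rw [← hdeg2, hMQ, natDegree_mul hM0 hQ0, hQdeg, add_zero]
    rw [← h1]
    exact (hmm.natDegree_map _).symm
  refine ⟨u, u.2, hud, fun a ha => ?_⟩
  -- `g(Y) = u(Y) - Z` over `F[Z]`, made monic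
  have hu0 : (u : F[X]) ≠ 0 := by intro h; rw [h] at hud; simp at hud
  set l := (u : F[X]).leadingCoeff with hl
  have hl0 : l ≠ 0 := leadingCoeff_ne_zero.2 hu0
  let g : F[X][X] := (C l⁻¹ * (u : F[X])).map C - C (C l⁻¹ * X)
  have hgd : (C l⁻¹ * (u : F[X])).natDegree = (u : F[X]).natDegree :=
    natDegree_C_mul (inv_ne_zero hl0)
  have hgm : g.Monic := by
    apply Monic.sub_of_left
    · apply Monic.map
      rw [mul_comm]; exact monic_mul_leadingCoeff_inv hu0
    · rw [degree_map]
      refine degree_C_le.trans_lt ?_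
      rw [← natDegree_pos_iff_degree_pos, hgd]; omega
  have hgnd : g.natDegree = (u : F[X]).natDegree := by
    have : (C (C l⁻¹ * X : F[X])).natDegree < ((C l⁻¹ * (u : F[X])).map (C : F →+* F[X])).natDegree := by
      rw [natDegree_C, natDegree_map, hgd]; omega
    rw [natDegree_sub_eq_left_of_natDegree_lt this, natDegree_map, hgd]
  -- evaluation `Z ↦ u`
  let ev : F[X] →ₐ[F] T := aeval u
  let p : F[X][X] := (a.map C) %ₘ g
  have hpd : p.natDegree < (u : F[X]).natDegree := by
    rw [← hgnd]
    apply natDegree_modByMonic_lt _ hgm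
    intro h
    rw [h] at hgnd; simp at hgnd; exact hud hgnd.symm
  have hevmap : ∀ r : F[X], (r.map C).map (ev : F[X] →+* T) = r.map (algebraMap F T) := by
    intro r
    rw [Polynomial.map_map]
    congr 1
    ext x
    simp [ev]
  have hgX : aeval (X : F[X]) (g.map (ev : F[X] →+* T)) = 0 := by
    have : g.map (ev : F[X] →+* T) = C (algebraMap F T l⁻¹) *
        ((u : F[X]).map (algebraMap F T) - C u) := by
      simp only [g]
      rw [Polynomial.map_sub, hevmap, Polynomial.map_mul, Polynomial.map_C, Polynomial.map_C]
      refine Eq.trans ?_ (poly_mul_sub_aux _ _ _).symm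
      congr 1
      rw [← C_mul]
      congr 1
      simp [ev]
    rw [this, map_mul, key _ u.2, mul_zero]
  have hpX : aeval (X : F[X]) (p.map (ev : F[X] →+* T)) = a := by
    have h1 : a.map C = p + g * (a.map C /ₘ g) := (modByMonic_add_div _ g).symm
    have h2 := congrArg (fun z => aeval (X : F[X]) (z.map (ev : F[X] →+* T))) h1
    beta_reduce at h2
    rw [hevmap, Polynomial.map_add, Polynomial.map_mul, map_add, map_mul, hgX, zero_mul, add_zero,
      aeval_map_algebraMap, aeval_X_left_apply] at h2
    exact h2.symm
  -- now subtract `a`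
  let s : T[X] := p.map (ev : F[X] →+* T) - C ⟨a, ha⟩
  have hs0 : aeval (X : F[X]) s = 0 := by
    simp only [s]
    refine (aeval_sub_aux _ _ _).trans ?_
    rw [hpX, aeval_C]; exact sub_self a
  have hsd : m ∣ s := minpoly.isIntegrallyClosed_dvd hXint hs0
  have hsz : s = 0 := by
    apply eq_zero_of_dvd_of_natDegree_lt hsd
    rw [hmdeg]
    refine (natDegree_sub_C (p := p.map (ev : F[X] →+* T))).trans_lt ?_
    exact natDegree_map_le.trans_lt hpd
  refine ⟨p.coeff 0, ?_⟩
  have h4 := congrArg (fun z => ((z.coeff 0 : T) : F[X])) hsz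
  simp [s, ev] at h4
  rw [sub_eq_zero] at h4
  rw [← h4]
  exact (Polynomial.aeval_algHom_apply T.val u _).symm
end Luroth

section PolyStructure
open Polynomial

lemma exists_of_integral_frac {A Ω : Type*} [CommRing A] [IsDomain A] [IsIntegrallyClosed A]
    [Field Ω] [Algebra A Ω] (hinj : Function.Injective (algebraMap A Ω)) {x : Ω}
    (hx : IsIntegral A x) {f g : A} (hg : g ≠ 0) (h : x * algebraMap A Ω g = algebraMap A Ω f) :
    ∃ y : A, algebraMap A Ω y = x := by
  let ι : FractionRing A →ₐ[A] Ω := IsFractionRing.liftAlgHom (g := Algebra.ofId A Ω) hinj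
  have hg' : algebraMap A Ω g ≠ 0 := by rwa [Ne, map_eq_zero_iff _ hinj]
  have hxι : ι (algebraMap A _ f / algebraMap A _ g) = x := by
    rw [map_div₀, AlgHom.commutes, AlgHom.commutes, div_eq_iff hg', h]
  have hhIntegral : IsIntegral A (algebraMap A (FractionRing A) f / algebraMap A _ g) := by
    rw [← isIntegral_algHom_iff ι ι.toRingHom.injective, hxι]; exact hx
  obtain ⟨y, hy⟩ := IsIntegrallyClosed.isIntegral_iff.1 hhIntegral
  exact ⟨y, by rw [← hxι, ← hy, AlgHom.commutes]⟩

lemma mem_range_of_integral_algClosed {F Ω : Type*} [Field F] [IsAlgClosed F] [Field Ω]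
    [Algebra F Ω] {x : Ω} (hx : IsIntegral F x) : ∃ y : F, algebraMap F Ω y = x := by
  have := IsAlgClosed.degree_eq_one_of_irreducible F (minpoly.irreducible hx)
  exact minpoly.mem_range_of_degree_eq_one F x this

set_option linter.unusedSectionVars false

lemma sigma_const (k : Type*) {F K Ω : Type*} [Field k] [Field F] [IsAlgClosed F] [Algebra k F]
    [Algebra.IsAlgebraic k F] [Field K] [Field Ω] [Algebra K Ω] [Algebra F Ω] [Algebra k Ω]
    [IsScalarTower k F Ω] [Algebra k K] [IsScalarTower k K Ω] (σ : Ω ≃ₐ[K] Ω) : ∃ s : F →+* F, ∀ c, σ (algebraMap F Ω c) = algebraMap F Ω (s c) := by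
  have h1 : ∀ c : F, ∃ d : F, algebraMap F Ω d = σ (algebraMap F Ω c) := by
    intro c
    apply mem_range_of_integral_algClosed
    have h2 : IsIntegral k (algebraMap F Ω c) :=
      (Algebra.IsAlgebraic.isAlgebraic (R := k) c).isIntegral.algebraMap
    have h3 : IsIntegral k (σ (algebraMap F Ω c)) := h2.map (σ.toAlgHom.restrictScalars k)
    exact h3.tower_top
  choose s hs using h1
  have hinj := (algebraMap F Ω).injective
  exact ⟨{ toFun := s
           map_one' := hinj (by rw [hs]; simp)
           map_zero' := hinj (by rw [hs]; simp)
           map_mul' := fun x y => hinj (by rw [hs]; simp [hs])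
           map_add' := fun x y => hinj (by rw [hs]; simp [hs]) }, fun c => (hs c).symm⟩

/-- The compositum of `F` and `K`. -/
def compos (F K Ω : Type*) [Field F] [Field K] [Field Ω] [Algebra K Ω] [Algebra F Ω] : IntermediateField K Ω := IntermediateField.adjoin K (Set.range (algebraMap F Ω))

lemma compos_span {F K Ω : Type*} [Field F] [Field K] [Field Ω] [Algebra K Ω]
    [Algebra.IsAlgebraic K Ω] [Algebra F Ω] (x : Ω) : x ∈ compos F K Ω ↔
    x ∈ Submodule.span K (Set.range (algebraMap F Ω)) := by
  have h1 : (compos F K Ω).toSubalgebra = Algebra.adjoin K (Set.range (algebraMap F Ω)) := by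
    apply IntermediateField.adjoin_toSubalgebra_of_isAlgebraic
    intro x _
    exact Algebra.IsAlgebraic.isAlgebraic x
  have h2 : x ∈ compos F K Ω ↔ x ∈ Algebra.adjoin K (Set.range (algebraMap F Ω)) := by
    rw [← h1]; rfl
  rw [h2, ← Subalgebra.mem_toSubmodule, Algebra.adjoin_eq_span]
  have : (Submonoid.closure (Set.range (algebraMap F Ω)) : Set Ω) = Set.range (algebraMap F Ω) := by
    have := Submonoid.closure_eq (MonoidHom.mrange (algebraMap F Ω : F →* Ω))
    have h3 : ((MonoidHom.mrange (algebraMap F Ω : F →* Ω) : Submonoid Ω) : Set Ω) = Set.range (algebraMap F Ω) := by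
      rfl
    rw [h3] at this
    rw [this]; rfl
  rw [this]

lemma compos_frac {F R K Ω : Type*} [Field F] [CommRing R] [IsDomain R]
    [Algebra R F[X]] [Field K] [Algebra R K] [IsFractionRing R K] [Field Ω] [Algebra F[X] Ω]
    [Algebra R Ω] [IsScalarTower R F[X] Ω] [Algebra K Ω] [IsScalarTower R K Ω]
    [Algebra.IsAlgebraic K Ω] [Algebra F Ω] [IsScalarTower F F[X] Ω]
    (hR : Function.Injective (algebraMap R F[X]))
   (hJ : Function.Injective (algebraMap F[X] Ω)) {x : Ω} (hx : x ∈ compos F K Ω) :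
    ∃ f g : F[X], g ≠ 0 ∧ x * algebraMap F[X] Ω g = algebraMap F[X] Ω f := by
  rw [compos_span] at hx
  induction hx using Submodule.span_induction with
  | mem x h =>
    obtain ⟨c, rfl⟩ := h
    exact ⟨C c, 1, one_ne_zero, by
      rw [map_one, mul_one, IsScalarTower.algebraMap_apply F F[X] Ω]; rfl⟩
  | zero => exact ⟨0, 1, one_ne_zero, by simp⟩
  | add x y _ _ hx hy =>
    obtain ⟨f, g, hg, h1⟩ := hx
    obtain ⟨f', g', hg', h2⟩ := hy
    refine ⟨f * g' + f' * g, g * g', mul_ne_zero hg hg', ?_⟩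
    simp only [map_add, map_mul, ← h1, ← h2]; ring
  | smul a x _ hx =>
    obtain ⟨f, g, hg, h1⟩ := hx
    obtain ⟨b, c, hc, rfl⟩ := IsFractionRing.div_surjective (A := R) a
    have hc0 : c ≠ 0 := nonZeroDivisors.ne_zero hc
    have hc1 : algebraMap R F[X] c ≠ 0 := by rwa [Ne, map_eq_zero_iff _ hR]
    have hc2 : algebraMap F[X] Ω (algebraMap R F[X] c) ≠ 0 := by rwa [Ne, map_eq_zero_iff _ hJ]
    refine ⟨algebraMap R F[X] b * f, algebraMap R F[X] c * g, mul_ne_zero hc1 hg, ?_⟩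
    rw [Algebra.smul_def, map_div₀, ← IsScalarTower.algebraMap_apply, ← IsScalarTower.algebraMap_apply,
      map_mul, map_mul, ← h1, IsScalarTower.algebraMap_apply R F[X] Ω,
      IsScalarTower.algebraMap_apply R F[X] Ω]
    field_simp

lemma compos_sigma (k : Type*) {F K Ω : Type*} [Field k] [Field F] [IsAlgClosed F] [Algebra k F]
    [Algebra.IsAlgebraic k F] [Field K] [Field Ω] [Algebra K Ω] [Algebra F Ω] [Algebra k Ω]
    [IsScalarTower k F Ω] [Algebra k K] [IsScalarTower k K Ω] [Algebra.IsAlgebraic K Ω]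
    (σ : Ω ≃ₐ[K] Ω) {x : Ω} (hx : x ∈ compos F K Ω) : σ x ∈ compos F K Ω := by
  rw [compos_span] at *
  induction hx using Submodule.span_induction with
  | mem x h =>
    obtain ⟨c, rfl⟩ := h
    obtain ⟨s, hs⟩ := sigma_const k (F := F) σ
    rw [hs]
    exact Submodule.subset_span ⟨_, rfl⟩
  | zero => simp
  | add x y _ _ hx hy => rw [map_add]; exact add_mem hx hy
  | smul a x _ hx => rw [map_smul]; exact Submodule.smul_mem _ _ hx

end PolyStructure

section PolyStructure2
open Polynomial

lemma comp_inj_of_natDegree {F : Type*} [Field F] {w p q : F[X]} (hw : w.natDegree ≠ 0)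
    (h : p.comp w = q.comp w) : p = q := by
  rw [← sub_eq_zero, ← sub_comp, comp_eq_zero_iff, sub_eq_zero] at h
  rcases h with h | ⟨_, h⟩
  · exact h
  · rw [h] at hw; simp at hw

lemma sigma_comp {F K Ω : Type*} [Field F] [Field K] [Field Ω] [Algebra K Ω] [Algebra F Ω]
    [Algebra F[X] Ω] [IsScalarTower F F[X] Ω] (σ : Ω ≃ₐ[K] Ω) (s : F →+* F)
    (hs : ∀ c, σ (algebraMap F Ω c) = algebraMap F Ω (s c)) {f f' : F[X]}
    (hf : σ (algebraMap F[X] Ω f) = algebraMap F[X] Ω f') (q : F[X]) :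
    σ (algebraMap F[X] Ω (q.comp f)) = algebraMap F[X] Ω ((q.map s).comp f') := by
  have hC : ∀ c : F, algebraMap F[X] Ω (C c) = algebraMap F Ω c := fun c =>
    (IsScalarTower.algebraMap_apply F F[X] Ω c).symm
  induction q using Polynomial.induction_on' with
  | add p q hp hq => simp [hp, hq]
  | monomial n a => simp [← C_mul_X_pow_eq_monomial, hC, hs, hf]

/-- Among affine transforms of `u`, there is one on which the group acts by translations. -/
lemma exists_unipotent {F K Ω : Type*} [Field F] [Field K] [Field Ω] [Algebra K Ω] [Algebra F Ω]
    [Algebra F[X] Ω] [IsScalarTower F F[X] Ω] [Algebra.IsAlgebraic K Ω]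
    (hJ : Function.Injective (algebraMap F[X] Ω))
    (hs : ∀ σ : Ω ≃ₐ[K] Ω, ∃ s : F →+* F, ∀ c, σ (algebraMap F Ω c) = algebraMap F Ω (s c))
    (u : F[X]) (hu : u.natDegree ≠ 0) (huM : algebraMap F[X] Ω u ∈ compos F K Ω)
    (hσ : ∀ σ : Ω ≃ₐ[K] Ω, ∃ a b : F, σ (algebraMap F[X] Ω u) = algebraMap F[X] Ω (C a * u + C b)) :
    ∃ α β : F, α ≠ 0 ∧ ∀ σ : Ω ≃ₐ[K] Ω, ∃ b : F,
      σ (algebraMap F[X] Ω (C α * u + C β)) = algebraMap F[X] Ω (C α * u + C β + C b) := by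
  classical
  have hC : ∀ c : F, algebraMap F[X] Ω (C c) = algebraMap F Ω c := fun c =>
    (IsScalarTower.algebraMap_apply F F[X] Ω c).symm
  let P : ℕ → Prop := fun m => ∃ α β : F, α ≠ 0 ∧ ∃ (c : Fin m → F) (κ : Fin m → K),
    algebraMap F[X] Ω (C α * u + C β) = ∑ i, κ i • algebraMap F Ω (c i)
  have hex : ∃ m, P m := by
    rw [compos_span] at huM
    obtain ⟨m, f, g, hfg⟩ := Submodule.mem_span_set'.1 huM
    choose c hc using fun i => (g i).2
    refine ⟨m, 1, 0, one_ne_zero, c, f, ?_⟩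
    rw [map_one, one_mul, map_zero, add_zero, ← hfg]
    simp [hc]
  obtain ⟨α, β, hα, c, κ, h⟩ := Nat.find_spec hex
  have hmin : ∀ m, m < Nat.find hex → ¬ P m := fun m hm => Nat.find_min hex hm
  generalize Nat.find hex = m at *
  have hne : ∀ α β : F, α ≠ 0 → C α * u + C β ≠ 0 := by
    intro α β hα h0
    have h1 : (C α * u + C β).natDegree = u.natDegree := by
      rw [natDegree_add_C, natDegree_C_mul hα]
    rw [h0] at h1; simp at h1; exact hu h1.symm
  obtain _ | m := m
  · exfalso
    rw [Fin.sum_univ_zero, map_eq_zero_iff _ hJ] at h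
    exact hne _ _ hα h
  have hc0 : c 0 ≠ 0 := by
    intro h0
    refine hmin m (Nat.lt_succ_self m) ⟨α, β, hα, fun i => c i.succ, fun i => κ i.succ, ?_⟩
    rw [h, Fin.sum_univ_succ, h0]; simp
  refine ⟨(c 0)⁻¹ * α, (c 0)⁻¹ * β, mul_ne_zero (inv_ne_zero hc0) hα, fun σ => ?_⟩
  obtain ⟨s, hs⟩ := hs σ
  obtain ⟨a, b, hab⟩ := hσ σ
  set w := C ((c 0)⁻¹ * α) * u + C ((c 0)⁻¹ * β) with hw
  have hwe : algebraMap F[X] Ω w = ∑ i, κ i • algebraMap F Ω ((c 0)⁻¹ * c i) := by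
    have : w = C (c 0)⁻¹ * (C α * u + C β) := by rw [hw, C_mul, C_mul]; ring
    rw [this, map_mul, h, hC, Finset.mul_sum]
    refine Finset.sum_congr rfl fun i _ => ?_
    rw [mul_smul_comm, map_mul]
  have hd : σ (algebraMap F[X] Ω w) - algebraMap F[X] Ω w =
      ∑ i : Fin m, κ i.succ • algebraMap F Ω (s ((c 0)⁻¹ * c i.succ) - (c 0)⁻¹ * c i.succ) := by
    rw [hwe, map_sum, Fin.sum_univ_succ, Fin.sum_univ_succ]
    rw [inv_mul_cancel₀ hc0, map_one, map_smul, map_one, add_sub_add_left_eq_sub,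
      ← Finset.sum_sub_distrib]
    refine Finset.sum_congr rfl fun i _ => ?_
    rw [map_smul, hs, map_sub, smul_sub]
  have hσw : σ (algebraMap F[X] Ω w) = algebraMap F[X] Ω
      (C (s ((c 0)⁻¹ * α)) * (C a * u + C b) + C (s ((c 0)⁻¹ * β))) := by
    simp only [hw, map_add (algebraMap F[X] Ω), map_mul (algebraMap F[X] Ω), map_add σ, map_mul σ,
      hC, hs, hab]
  set A := s ((c 0)⁻¹ * α) * a - (c 0)⁻¹ * α with hA
  set B := s ((c 0)⁻¹ * α) * b + s ((c 0)⁻¹ * β) - (c 0)⁻¹ * β with hB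
  have hd' : σ (algebraMap F[X] Ω w) - algebraMap F[X] Ω w = algebraMap F[X] Ω (C A * u + C B) := by
    rw [hσw, ← map_sub]
    congr 1
    rw [hw, hA, hB]
    simp only [C_mul, C_sub, C_add]; ring
  have hA0 : A = 0 := by
    by_contra hA0
    exact hmin m (Nat.lt_succ_self m) ⟨A, B, hA0, _, _, hd'.symm.trans hd⟩
  refine ⟨B, ?_⟩
  rw [map_add _ w, ← sub_eq_iff_eq_add', hd', hA0]
  simp

/-- If the Galois group acts on `w` by translations, then a translate of `w` is in the base. -/
lemma exists_fixed {F K Ω : Type*} [Field F] [CharZero F] [Field K] [Field Ω] [Algebra K Ω]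
    [Algebra F Ω] [Algebra F[X] Ω] [IsScalarTower F F[X] Ω] [IsGalois K Ω]
    (w : F[X])
    (hσ : ∀ σ : Ω ≃ₐ[K] Ω, ∃ b : F, σ (algebraMap F[X] Ω w) = algebraMap F[X] Ω (w + C b)) :
    ∃ β : F, algebraMap F[X] Ω (w + C β) ∈ Set.range (algebraMap K Ω) := by
  classical
  set x := algebraMap F[X] Ω w with hx
  have hhIntegral : IsIntegral K x := Algebra.IsIntegral.isIntegral x
  have hsplit : ((minpoly K x).map (algebraMap K Ω)).Splits := IsGalois.splits K x
  have hmon := (minpoly.monic hhIntegral).map (algebraMap K Ω)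
  have hsum := hsplit.nextCoeff_eq_neg_sum_roots_of_monic hmon
  set rs := ((minpoly K x).map (algebraMap K Ω)).roots with hrs
  have hroot : ∀ y ∈ rs, ∃ b : F, y = algebraMap F[X] Ω (w + C b) := by
    intro y hy
    have hy' : (aeval y) (minpoly K x) = 0 := by
      rw [hrs, mem_roots hmon.ne_zero, IsRoot, eval_map_algebraMap] at hy; exact hy
    obtain ⟨σ, hσy⟩ := minpoly.exists_algEquiv_of_root' (Algebra.IsAlgebraic.isAlgebraic x) hy'
    obtain ⟨b, hb⟩ := hσ σ
    exact ⟨b, by rw [← hσy, hb]⟩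
  have hgen : ∀ t : Multiset Ω, (∀ y ∈ t, ∃ b : F, y = algebraMap F[X] Ω (w + C b)) →
      ∃ B : F, t.sum = algebraMap F[X] Ω ((Multiset.card t : F[X]) * w + C B) := by
    intro t
    induction t using Multiset.induction_on with
    | empty => intro _; exact ⟨0, by simp⟩
    | cons a t ih =>
      intro h
      obtain ⟨B, hB⟩ := ih fun y hy => h y (Multiset.mem_cons_of_mem hy)
      obtain ⟨b, hb⟩ := h a (Multiset.mem_cons_self a t)
      refine ⟨b + B, ?_⟩
      rw [Multiset.sum_cons, hB, hb, ← map_add, Multiset.card_cons]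
      congr 1
      push_cast
      rw [C_add]; ring
  obtain ⟨B, hB⟩ := hgen rs hroot
  have hcard : (Multiset.card rs : F) ≠ 0 := by
    rw [Nat.cast_ne_zero, hrs, ← hsplit.natDegree_eq_card_roots, natDegree_map]
    exact (minpoly.natDegree_pos hhIntegral).ne'
  set d : F := (Multiset.card rs : F) with hd
  refine ⟨d⁻¹ * B, (Multiset.card rs : K)⁻¹ * -(minpoly K x).nextCoeff, ?_⟩
  have h1 : algebraMap K Ω (-(minpoly K x).nextCoeff) = rs.sum := by
    rw [map_neg, ← nextCoeff_map (algebraMap K Ω).injective, hsum, neg_neg]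
  rw [map_mul, h1, hB, map_inv₀, map_natCast]
  have h2 : (Multiset.card rs : F[X]) * w + C B = (Multiset.card rs : F[X]) * (w + C (d⁻¹ * B)) := by
    have : (Multiset.card rs : F[X]) = C d := by rw [hd]; simp
    rw [this, mul_add, ← C_mul, mul_inv_cancel_left₀ hcard]
  have h3 : (Multiset.card rs : Ω) ≠ 0 := by
    have : (Multiset.card rs : Ω) = algebraMap F Ω d := by rw [hd]; simp
    rw [this, Ne, map_eq_zero_iff _ (algebraMap F Ω).injective]; exact hcard
  rw [h2, map_mul, map_natCast, inv_mul_cancel_left₀ h3]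

end PolyStructure2

section PolyStructure3
open Polynomial

theorem poly_structure_abstract (k : Type*) {F R : Type*} (K Ω : Type*) [Field k] [CharZero k] [Field F] [IsAlgClosed F]
    [Algebra k F]
    [Algebra.IsAlgebraic k F] [CommRing R] [IsDomain R] [IsIntegrallyClosed R] [Algebra k R]
    [Algebra R F[X]] [IsScalarTower k R F[X]] [Algebra.IsIntegral R F[X]]
    [Field K] [Algebra R K] [IsFractionRing R K] [Field Ω] [Algebra F[X] Ω] [Algebra R Ω]
    [IsScalarTower R F[X] Ω] [Algebra K Ω] [IsScalarTower R K Ω] [IsGalois K Ω]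
    [Algebra F Ω] [IsScalarTower F F[X] Ω] [Algebra k Ω] [IsScalarTower k F Ω]
    [Algebra k K] [IsScalarTower k R K] [IsScalarTower k K Ω]
    (hR : Function.Injective (algebraMap R F[X]))
    (hJ : Function.Injective (algebraMap F[X] Ω)) (r0 : R)
    (hr0 : (algebraMap R F[X] r0).natDegree ≠ 0) :
    ∃ u : R, Transcendental k u ∧
      ∀ a : R, ∃ p : R[X], (∀ i, IsIntegral k (p.coeff i)) ∧ a = p.eval u := by
  have hC : ∀ c : F, algebraMap F[X] Ω (C c) = algebraMap F Ω c := fun c =>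
    (IsScalarTower.algebraMap_apply F F[X] Ω c).symm
  have : CharZero F := charZero_of_injective_algebraMap (algebraMap k F).injective
  have hs : ∀ σ : Ω ≃ₐ[K] Ω, ∃ s : F →+* F, ∀ c, σ (algebraMap F Ω c) = algebraMap F Ω (s c) :=
    fun σ => sigma_const k σ
  have hRK : ∀ r : R, algebraMap F[X] Ω (algebraMap R F[X] r) = algebraMap K Ω (algebraMap R K r) := by
    intro r
    rw [← IsScalarTower.algebraMap_apply, ← IsScalarTower.algebraMap_apply]
  have hFM : ∀ c : F, algebraMap F Ω c ∈ compos F K Ω := fun c =>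
    IntermediateField.subset_adjoin K _ ⟨c, rfl⟩
  -- the subalgebra `N`
  let N : Subalgebra F F[X] :=
    { carrier := {f | algebraMap F[X] Ω f ∈ compos F K Ω}
      mul_mem' := fun {a b} ha hb => by
        change algebraMap F[X] Ω (a * b) ∈ compos F K Ω
        rw [map_mul]; exact mul_mem ha hb
      add_mem' := fun {a b} ha hb => by
        change algebraMap F[X] Ω (a + b) ∈ compos F K Ω
        rw [map_add]; exact add_mem ha hb
      algebraMap_mem' := fun c => by
        change algebraMap F[X] Ω (C c) ∈ compos F K Ω
        rw [hC]; exact hFM c }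
  have hN : ∀ f, f ∈ N ↔ algebraMap F[X] Ω f ∈ compos F K Ω := fun f => Iff.rfl
  have hRN : ∀ r : R, algebraMap R F[X] r ∈ N := by
    intro r; rw [hN, hRK]; exact (compos F K Ω).algebraMap_mem _
  have hsat : ∀ f : F[X], ∀ a ∈ N, ∀ b ∈ N, b ≠ 0 → b * f = a → f ∈ N := by
    intro f a ha b hb hb0 h
    have hb1 : algebraMap F[X] Ω b ≠ 0 := by rwa [Ne, map_eq_zero_iff _ hJ]
    have : algebraMap F[X] Ω f = algebraMap F[X] Ω a / algebraMap F[X] Ω b := by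
      rw [eq_div_iff hb1, ← h, map_mul, mul_comm]
    rw [hN, this]
    exact div_mem ha hb
  obtain ⟨u, huN, hud, hu⟩ := luroth_poly N hsat _ (hRN r0) hr0
  have hσN : ∀ (σ : Ω ≃ₐ[K] Ω) (f : F[X]), f ∈ N →
      ∃ f' ∈ N, σ (algebraMap F[X] Ω f) = algebraMap F[X] Ω f' := by
    intro σ f hf
    have h1 : σ (algebraMap F[X] Ω f) ∈ compos F K Ω := compos_sigma k σ hf
    obtain ⟨p, q, hq, hpq⟩ := compos_frac hR hJ h1
    have h2 : IsIntegral R (algebraMap F[X] Ω f) :=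
      (Algebra.IsIntegral.isIntegral (R := R) f).algebraMap
    have h3 : IsIntegral R (σ (algebraMap F[X] Ω f)) := h2.map (σ.toAlgHom.restrictScalars R)
    have h4 : IsIntegral F[X] (σ (algebraMap F[X] Ω f)) := h3.tower_top
    obtain ⟨y, hy⟩ := exists_of_integral_frac hJ h4 hq hpq
    exact ⟨y, by rw [hN, hy]; exact h1, hy.symm⟩
  have haff : ∀ σ : Ω ≃ₐ[K] Ω, ∃ a b : F,
      σ (algebraMap F[X] Ω u) = algebraMap F[X] Ω (C a * u + C b) := by
    intro σ
    obtain ⟨f, hf, h1⟩ := hσN σ u huN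
    obtain ⟨g, hg, h2⟩ := hσN σ.symm u huN
    obtain ⟨p, rfl⟩ := hu f hf
    obtain ⟨q, rfl⟩ := hu g hg
    obtain ⟨s, hs⟩ := hs σ
    have h3 := sigma_comp σ s hs h1 q
    rw [← h2, AlgEquiv.apply_symm_apply] at h3
    have h4 := congrArg natDegree (hJ h3)
    rw [natDegree_comp, natDegree_comp] at h4
    have h5 : p.natDegree = 1 := by
      have : (q.map s).natDegree * p.natDegree = 1 := by
        apply Nat.eq_of_mul_eq_mul_right (Nat.pos_of_ne_zero hud)
        rw [one_mul, mul_assoc]; exact h4.symm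
      exact Nat.eq_one_of_mul_eq_one_left this
    refine ⟨p.coeff 1, p.coeff 0, ?_⟩
    rw [h1]
    congr 1
    conv_lhs => rw [eq_X_add_C_of_natDegree_le_one h5.le]
    simp
  obtain ⟨α, β, hα, hσ1⟩ := exists_unipotent hJ hs u hud huN haff
  obtain ⟨β', κ, hκ⟩ := exists_fixed _ hσ1
  set w : F[X] := C α * u + C β + C β' with hw
  have hwd : w.natDegree ≠ 0 := by
    rwa [hw, natDegree_add_C, natDegree_add_C, natDegree_C_mul hα]
  have hwN : ∀ a ∈ N, ∃ p : F[X], a = p.comp w := by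
    intro a ha
    obtain ⟨p, rfl⟩ := hu a ha
    refine ⟨p.comp (C α⁻¹ * (X - C β' - C β)), ?_⟩
    rw [comp_assoc]
    congr 1
    simp only [mul_comp, C_comp, sub_comp, X_comp, hw]
    rw [add_sub_cancel_right, add_sub_cancel_right, ← mul_assoc, ← C_mul, inv_mul_cancel₀ hα, C_1,
      one_mul]
  have hKR : ∀ (f : F[X]) (κ : K), algebraMap K Ω κ = algebraMap F[X] Ω f →
      ∃ r : R, algebraMap R F[X] r = f := by
    intro f κ h
    have h1 : IsIntegral R (algebraMap F[X] Ω f) :=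
      (Algebra.IsIntegral.isIntegral (R := R) f).algebraMap
    rw [← h, isIntegral_algebraMap_iff (algebraMap K Ω).injective] at h1
    obtain ⟨r, hr⟩ := IsIntegrallyClosed.isIntegral_iff.1 h1
    exact ⟨r, hJ (by rw [hRK, hr, h])⟩
  obtain ⟨r, hr⟩ := hKR w κ hκ
  have hσw : ∀ σ : Ω ≃ₐ[K] Ω, σ (algebraMap F[X] Ω w) = algebraMap F[X] Ω w := by
    intro σ; rw [← hκ, AlgEquiv.commutes]
  have hconst : ∀ c : F, (∀ σ : Ω ≃ₐ[K] Ω, σ (algebraMap F Ω c) = algebraMap F Ω c) →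
      ∃ r : R, IsIntegral k r ∧ algebraMap R F[X] r = C c := by
    intro c hc
    obtain ⟨κ, hκ⟩ := (InfiniteGalois.mem_range_algebraMap_iff_fixed (k := K) (algebraMap F Ω c)).2 hc
    obtain ⟨r, hr⟩ := hKR (C c) κ (by rw [hκ, hC])
    refine ⟨r, ?_, hr⟩
    have h1 : IsIntegral k (algebraMap F F[X] c) :=
      (Algebra.IsAlgebraic.isAlgebraic (R := k) c).isIntegral.algebraMap
    rw [← isIntegral_algHom_iff (IsScalarTower.toAlgHom k R F[X]) hR]
    change IsIntegral k (algebraMap R F[X] r)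
    rw [hr]; exact h1
  refine ⟨r, ?_, fun a => ?_⟩
  · intro halg
    have h1 : IsIntegral k (algebraMap R F[X] r) :=
      halg.isIntegral.map (IsScalarTower.toAlgHom k R F[X])
    rw [hr] at h1
    have h2 : IsIntegral F w := h1.tower_top
    obtain ⟨p, hpm, hp⟩ := h2
    have h3 : p.comp w = (0 : F[X]).comp w := by rw [zero_comp]; exact hp
    exact hpm.ne_zero (comp_inj_of_natDegree hwd h3)
  · obtain ⟨p, hp⟩ := hwN _ (hRN a)
    have hpc : ∀ i, ∃ r : R, IsIntegral k r ∧ algebraMap R F[X] r = C (p.coeff i) := by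
      intro i
      apply hconst
      intro σ
      obtain ⟨s, hs⟩ := hs σ
      have h1 := sigma_comp σ s hs (hσw σ) p
      rw [← hp, hRK, AlgEquiv.commutes, ← hRK, hp] at h1
      have h2 := comp_inj_of_natDegree hwd (hJ h1)
      rw [hs, ← coeff_map, ← h2]
    choose c hc hc' using hpc
    refine ⟨∑ i ∈ Finset.range (p.natDegree + 1), C (c i) * X ^ i, ?_, ?_⟩
    · intro i
      simp only [finsetSum_coeff, coeff_C_mul, coeff_X_pow]
      refine IsIntegral.sum _ fun j _ => ?_
      split_ifs
      · rw [mul_one]; exact hc j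
      · rw [mul_zero]; exact isIntegral_zero
    · apply hR
      rw [hp, comp, eval₂_eq_sum_range, eval_finsetSum, map_sum]
      refine Finset.sum_congr rfl fun i _ => ?_
      simp [hc', hr]

theorem poly_structure {k F R : Type*} [Field k] [CharZero k] [Field F] [IsAlgClosed F]
    [Algebra k F]
    [Algebra.IsAlgebraic k F] [CommRing R] [IsDomain R] [IsIntegrallyClosed R] [Algebra k R]
    (φ : R →ₐ[k] F[X]) (hφ : Function.Injective φ) (r0 : R) (hr0 : (φ r0).natDegree ≠ 0) :
    ∃ u : R, Transcendental k u ∧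
      ∀ a : R, ∃ p : R[X], (∀ i, IsIntegral k (p.coeff i)) ∧ a = p.eval u := by
  let : Algebra R F[X] := φ.toRingHom.toAlgebra
  have : IsScalarTower k R F[X] := IsScalarTower.of_algebraMap_eq fun x => (φ.commutes x).symm
  have hC : ∀ c : F, IsIntegral R (C c : F[X]) := fun c => by
    have h1 : IsIntegral k (algebraMap F F[X] c) :=
      (Algebra.IsAlgebraic.isAlgebraic (R := k) c).isIntegral.algebraMap
    exact h1.tower_top
  have hX : IsIntegral R (X : F[X]) := by
    set f := φ r0 with hf
    have hf0 : f ≠ 0 := by intro h; rw [h] at hr0; simp at hr0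
    let S : Subalgebra R F[X] := integralClosure R F[X]
    have hfS : f ∈ S := isIntegral_algebraMap (x := r0)
    have hCS : ∀ c, C c ∈ S := hC
    -- monic polynomial over S
    let ι : F →+* S := (C : F →+* F[X]).codRestrict S hCS
    have h1 : IsIntegral S (X : F[X]) := by
      refine ⟨(f * C f.leadingCoeff⁻¹).map ι - C (⟨f, hfS⟩ * ι f.leadingCoeff⁻¹), ?_, ?_⟩
      · apply Monic.sub_of_left ((monic_mul_leadingCoeff_inv hf0).map _)
        rw [degree_map]
        refine degree_C_le.trans_lt ?_
        rw [← natDegree_pos_iff_degree_pos, natDegree_mul_C (inv_ne_zero (leadingCoeff_ne_zero.2 hf0))]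
        exact Nat.pos_of_ne_zero hr0
      · rw [eval₂_sub, eval₂_map, eval₂_C]
        have h2 : (algebraMap S F[X]).comp ι = C := rfl
        rw [h2, eval₂_C_X]
        exact sub_self (f * C f.leadingCoeff⁻¹)
    exact isIntegral_trans (R := R) (A := S) _ h1
  have : Algebra.IsIntegral R F[X] := ⟨fun f => by
    induction f using Polynomial.induction_on' with
    | add p q hp hq => exact hp.add hq
    | monomial n a => rw [← C_mul_X_pow_eq_monomial]; exact (hC a).mul (hX.pow n)⟩
  let E := FractionRing F[X]
  have hRE : Function.Injective (algebraMap R E) := by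
    rw [IsScalarTower.algebraMap_eq R F[X] E]
    exact (IsFractionRing.injective F[X] E).comp hφ
  have : FaithfulSMul R E := (faithfulSMul_iff_algebraMap_injective R E).2 hRE
  let : Algebra (FractionRing R) E := FractionRing.liftAlgebra R E
  have : IsScalarTower R (FractionRing R) E := inferInstance
  have hEa : Algebra.IsAlgebraic (FractionRing R) E := by
    refine ⟨fun x => ?_⟩
    obtain ⟨a, b, hb, rfl⟩ := IsFractionRing.div_surjective (A := F[X]) x
    have h1 : ∀ a : F[X], IsAlgebraic (FractionRing R) (algebraMap F[X] E a) := fun a => by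
      have h2 : IsIntegral R (algebraMap F[X] E a) :=
        (Algebra.IsIntegral.isIntegral (R := R) a).algebraMap
      have h3 : IsIntegral (FractionRing R) (algebraMap F[X] E a) := h2.tower_top
      exact h3.isAlgebraic
    rw [div_eq_mul_inv]
    exact (h1 a).mul (h1 b).inv
  have : CharZero (FractionRing R) := charZero_of_injective_algebraMap (algebraMap k _).injective
  have : Algebra.IsAlgebraic (FractionRing R) (AlgebraicClosure E) := Algebra.IsAlgebraic.trans (FractionRing R) E _
  have : IsAlgClosure (FractionRing R) (AlgebraicClosure E) := ⟨inferInstance, inferInstance⟩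
  have : IsGalois (FractionRing R) (AlgebraicClosure E) := inferInstance
  exact poly_structure_abstract k (FractionRing R) (AlgebraicClosure E) hφ (by
    rw [IsScalarTower.algebraMap_eq F[X] E (AlgebraicClosure E)]
    exact (algebraMap E _).injective.comp (IsFractionRing.injective F[X] E)) r0 hr0
end PolyStructure3

section TrdegOne
open Polynomial

/-- `A` has transcendence degree one over `k` (in a form convenient for domains). -/
def TD (k A : Type*) [CommRing k] [CommRing A] [Algebra k A] : Prop :=
  (∃ x : A, Transcendental k x) ∧ ∀ x y : A, Transcendental k x →
    ∃ Q : k[X][X], Q ≠ 0 ∧ eval₂ ((aeval x : k[X] →ₐ[k] A) : k[X] →+* A) y Q = 0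

lemma transc_map {k A B : Type*} [CommRing k] [CommRing A] [CommRing B] [Algebra k A] [Algebra k B]
    (θ : A →ₐ[k] B) (hθ : Function.Injective θ) {x : A} : Transcendental k (θ x) ↔ Transcendental k x :=
  not_congr (isAlgebraic_algHom_iff θ hθ)

lemma td_of_trdeg {k A K : Type*} [Field k] [CommRing A] [IsDomain A] [Field K] [Algebra k A]
    [Algebra k K] [Algebra A K] [IsScalarTower k A K] [IsFractionRing A K]
    (h : Algebra.trdeg k K = 1) : TD k A := by
  have hinj := IsFractionRing.injective A K
  let j : A →ₐ[k] K := IsScalarTower.toAlgHom k A K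
  constructor
  · by_contra! hall
    have : Algebra.IsAlgebraic k K := by
      refine ⟨fun x => ?_⟩
      obtain ⟨a, b, hb, rfl⟩ := IsFractionRing.div_surjective (A := A) x
      have h1 : ∀ a : A, IsAlgebraic k (algebraMap A K a) := fun a => by
        have h2 : IsAlgebraic k a := by have := hall a; rwa [Transcendental, not_not] at this
        exact h2.algebraMap
      rw [div_eq_mul_inv]
      exact (h1 a).mul (h1 b).inv
    rw [trdeg_eq_zero] at h
    exact zero_ne_one h
  · intro x y hx
    have hx' : Transcendental k (j x) := (transc_map j hinj).2 hx
    have hxi : AlgebraicIndependent k (fun _ : Unit => j x) :=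
      algebraicIndependent_unique_type_iff.2 hx'
    have hy : IsAlgebraic (Algebra.adjoin k (Set.range (fun _ : Unit => j x))) (j y) := by
      by_contra hy
      have h1 := (hxi.option_iff_transcendental (j y)).2 hy
      have h2 := h1.lift_cardinalMk_le_trdeg
      rw [h] at h2
      simp at h2
    obtain ⟨q, hq0, hq⟩ := hy
    have hmem : j x ∈ Algebra.adjoin k (Set.range (fun _ : Unit => j x)) :=
      Algebra.subset_adjoin ⟨(), rfl⟩
    let g : k[X] →ₐ[k] Algebra.adjoin k (Set.range (fun _ : Unit => j x)) := aeval ⟨j x, hmem⟩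
    have hg : ∀ p : k[X], (g p : K) = aeval (j x) p := fun p => by
      exact (aeval_algHom_apply (Subalgebra.val _) ⟨j x, hmem⟩ p).symm
    have hgs : Function.Surjective g := by
      rintro ⟨z, hz⟩
      have hz' := hz
      rw [Set.range_const, Algebra.adjoin_singleton_eq_range_aeval] at hz'
      obtain ⟨p, hp⟩ := hz'
      exact ⟨p, Subtype.ext ((hg p).trans hp)⟩
    obtain ⟨Q, rfl⟩ := Polynomial.map_surjective (g : k[X] →+* _) hgs q
    refine ⟨Q, by rintro rfl; simp at hq0, ?_⟩
    apply hinj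
    rw [map_zero, hom_eval₂, ← hq, aeval_def, eval₂_map]
    congr 1
    refine RingHom.ext fun p => ?_
    change j (aeval x p) = ((g p : _) : K)
    rw [hg, aeval_algHom_apply]

lemma lemmaQ {k A B : Type*} [Field k] [CommRing A] [IsDomain A] [Algebra k A] [CommRing B]
    [Nontrivial B] [Algebra k B] (hA : TD k A) (θ : A →ₐ[k] B) {p : A} (hp : p ≠ 0) (hθ : θ p = 0)
    (s : A) : IsAlgebraic k (θ s) := by
  by_cases hs : IsAlgebraic k s
  · exact hs.algHom θ
  obtain ⟨Q, hQ0, hQ⟩ := hA.2 s p hs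
  obtain ⟨Q', hQ1, hQ2⟩ := exists_eq_pow_rootMultiplicity_mul_and_not_dvd Q hQ0 0
  rw [map_zero, sub_zero] at hQ1 hQ2
  rw [X_dvd_iff] at hQ2
  rw [hQ1, eval₂_mul, eval₂_pow, eval₂_X, mul_eq_zero] at hQ
  have hQ' := hQ.resolve_left (pow_ne_zero _ hp)
  refine ⟨Q'.coeff 0, hQ2, ?_⟩
  have h1 := congrArg θ hQ'
  rw [map_zero, ← divX_mul_X_add Q', eval₂_add, eval₂_mul, eval₂_X, eval₂_C, map_add, map_mul, hθ, mul_zero,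
    zero_add] at h1
  rw [aeval_algHom_apply]; exact h1

lemma nonconst_specialize {S : Type*} [CommRing S] [IsDomain S] [Infinite S] {n : ℕ}
    (f : MvPolynomial (Fin n) S) (hf : f ∉ Set.range (MvPolynomial.C (σ := Fin n) (R := S))) :
    ∃ Φ : MvPolynomial (Fin n) S →ₐ[S] S[X], (Φ f).natDegree ≠ 0 := by
  have h1 : ∃ a : Fin n → S, MvPolynomial.eval a f ≠ MvPolynomial.eval 0 f := by
    by_contra! h
    exact hf ⟨MvPolynomial.eval 0 f, MvPolynomial.funext fun a => by simp [h a]⟩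
  obtain ⟨a, ha⟩ := h1
  let Φ : MvPolynomial (Fin n) S →ₐ[S] S[X] := MvPolynomial.aeval fun i => C (a i) * X
  have hev : ∀ (t : S) (g : MvPolynomial (Fin n) S),
      (Φ g).eval t = MvPolynomial.eval (fun i => a i * t) g := by
    intro t g
    induction g using MvPolynomial.induction_on with
    | C c => simp [Φ]
    | add p q hp hq => simp [hp, hq]
    | mul_X p i hp => simp [hp]; simp [Φ]
  refine ⟨Φ, fun h => ?_⟩
  obtain ⟨c, hc⟩ := natDegree_eq_zero.1 h
  have h0 := hev 0 f
  have h1 := hev 1 f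
  rw [← hc] at h0 h1
  simp only [eval_C, mul_one, mul_zero] at h0 h1
  exact ha (h1.symm.trans h0)

lemma mem_range_C_of_isAlgebraic {S : Type*} [CommRing S] [IsDomain S] [Infinite S] {n : ℕ}
    (f : MvPolynomial (Fin n) S) (hf : IsAlgebraic S f) :
    f ∈ Set.range (MvPolynomial.C (σ := Fin n) (R := S)) := by
  by_contra h
  obtain ⟨Φ, hΦ⟩ := nonconst_specialize f h
  obtain ⟨q, hq0, hq⟩ := hf.algHom Φ
  have h1 : q.comp (Φ f) = 0 := hq
  rw [comp_eq_zero_iff] at h1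
  rcases h1 with h1 | ⟨_, h1⟩
  · exact hq0 h1
  · rw [h1] at hΦ; simp at hΦ

lemma const_of_const {k A S : Type*} [Field k] [CharZero k] [CommRing A] [IsDomain A] [Algebra k A]
    [CommRing S] [IsDomain S] [Algebra k S] {n : ℕ}
    (hA : TD k A) (θ : A →ₐ[k] MvPolynomial (Fin n) S) (hθ : Function.Injective θ)
    (x : A) (hx : Transcendental k x) (hxC : θ x ∈ Set.range (MvPolynomial.C (σ := Fin n) (R := S)))
    (a : A) : θ a ∈ Set.range (MvPolynomial.C (σ := Fin n) (R := S)) := by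
  have : CharZero S := charZero_of_injective_algebraMap (algebraMap k S).injective
  obtain ⟨s, hs⟩ := hxC
  have hst : Transcendental k s := by
    rw [← transc_map θ hθ, ← hs] at hx
    exact (transc_map (IsScalarTower.toAlgHom k S (MvPolynomial (Fin n) S))
      (MvPolynomial.C_injective _ _)).1 hx
  obtain ⟨Q, hQ0, hQ⟩ := hA.2 x a hx
  apply mem_range_C_of_isAlgebraic
  have hinj : Function.Injective (aeval s : k[X] →ₐ[k] S) := transcendental_iff_injective.1 hst
  refine ⟨Q.map ((aeval s : k[X] →ₐ[k] S) : k[X] →+* S), ?_, ?_⟩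
  · exact (Polynomial.map_ne_zero_iff hinj).2 hQ0
  · have h1 := congrArg (θ : A →+* MvPolynomial (Fin n) S) hQ
    rw [map_zero, hom_eval₂] at h1
    rw [aeval_def, eval₂_map, ← h1]
    congr 1
    ext p
    · simp [MvPolynomial.algebraMap_eq]
    · simp [← hs, MvPolynomial.algebraMap_eq]

lemma const_of_algebraic {k A S : Type*} [Field k] [CharZero k] [CommRing A] [Algebra k A]
    [CommRing S] [IsDomain S] [Algebra k S] {n : ℕ}
    (θ : A →ₐ[k] MvPolynomial (Fin n) S)
    (a : A) (ha : IsAlgebraic k a) : θ a ∈ Set.range (MvPolynomial.C (σ := Fin n) (R := S)) := by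
  have : CharZero S := charZero_of_injective_algebraMap (algebraMap k S).injective
  apply mem_range_C_of_isAlgebraic
  have := (ha.algHom θ)
  exact this.extendScalars (algebraMap k S).injective

end TrdegOne

section TheoremN
open Polynomial

lemma unit_of_algebraic {k S : Type*} [Field k] [CommRing S] [IsDomain S] [Algebra k S] {c : S}
    (hc : c ≠ 0) (h : IsAlgebraic k c) : IsUnit c := by
  obtain ⟨q, hq0, hq⟩ := h.exists_nonzero_coeff_and_aeval_eq_zero (mem_nonZeroDivisors_of_ne_zero hc)
  rw [← divX_mul_X_add q, map_add, map_mul, aeval_X, aeval_C] at hq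
  have h1 : IsUnit (algebraMap k S (q.coeff 0)) := (isUnit_iff_ne_zero.2 hq0).map _
  have h2 : algebraMap k S (q.coeff 0) = c * -(aeval c q.divX) := by linear_combination hq
  rw [h2] at h1
  exact isUnit_of_mul_isUnit_left h1

theorem thmN {k R S : Type*} [Field k] [CharZero k] [CommRing R] [IsDomain R] [IsIntegrallyClosed R]
    [Algebra k R] [CommRing S] [IsDomain S] [Algebra k S] (hR : TD k R) (hS : TD k S) {n : ℕ}
    (e : MvPolynomial (Fin n) R ≃ₐ[k] MvPolynomial (Fin n) S)
    (hne : ∀ r : R, Transcendental k r →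
      e (MvPolynomial.C r) ∉ Set.range (MvPolynomial.C (σ := Fin n) (R := S))) :
    ∃ u : R, Transcendental k u ∧
      ∀ a : R, ∃ p : R[X], (∀ i, IsIntegral k (p.coeff i)) ∧ a = p.eval u := by
  classical
  have : CharZero S := charZero_of_injective_algebraMap (algebraMap k S).injective
  let ιR : R →ₐ[k] MvPolynomial (Fin n) R := IsScalarTower.toAlgHom k R (MvPolynomial (Fin n) R)
  let ιS : S →ₐ[k] MvPolynomial (Fin n) S := IsScalarTower.toAlgHom k S (MvPolynomial (Fin n) S)
  have hιR : Function.Injective ιR := MvPolynomial.C_injective _ _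
  have hιS : Function.Injective ιS := MvPolynomial.C_injective _ _
  obtain ⟨r0, hr0⟩ := hR.1
  obtain ⟨s0, hs0⟩ := hS.1
  have hunit : ∀ s : S, IsUnit s → IsAlgebraic k s := by
    intro s hs
    by_contra hst
    have h1 : IsUnit (e.symm (MvPolynomial.C s)) := (hs.map MvPolynomial.C).map e.symm
    obtain ⟨r, _, hr⟩ := MvPolynomial.isUnit_iff_eq_C_of_isReduced.1 h1
    have h2 : e (MvPolynomial.C r) = MvPolynomial.C s := by rw [← hr, AlgEquiv.apply_symm_apply]
    refine hne r ?_ ⟨s, h2.symm⟩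
    have h3 : Transcendental k (ιS s) := (transc_map ιS hιS).2 hst
    rw [← transc_map ιR hιR, ← transc_map e.toAlgHom e.injective]
    change Transcendental k (e (MvPolynomial.C r))
    rw [h2]; exact h3
  -- a non-constant coefficient
  set f := e (MvPolynomial.C r0) with hf
  have hfc : ∃ m : Fin n →₀ ℕ, m ≠ 0 ∧ f.coeff m ≠ 0 := by
    by_contra! h
    refine hne r0 hr0 ⟨f.coeff 0, ?_⟩
    ext m
    rw [MvPolynomial.coeff_C]
    split_ifs with hm
    · rw [← hm]
    · exact (h m (Ne.symm hm)).symm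
  obtain ⟨m, hm, hc⟩ := hfc
  set c := f.coeff m with hcdef
  have hP : ∃ P : Ideal S, P.IsMaximal ∧ c ∉ P := by
    by_cases hcu : IsUnit c
    · obtain ⟨P, hP⟩ := Ideal.exists_maximal S
      exact ⟨P, hP, fun h => hP.ne_top (Ideal.eq_top_of_isUnit_mem _ h hcu)⟩
    by_cases h1 : IsUnit (1 + c)
    · exfalso
      apply hcu
      have h2 := (hunit _ h1).sub (isAlgebraic_one (R := k) (A := S))
      rw [add_sub_cancel_left] at h2
      exact unit_of_algebraic hc h2
    · obtain ⟨P, hP, hcP⟩ := exists_max_ideal_of_mem_nonunits h1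
      refine ⟨P, hP, fun h => hP.ne_top ((Ideal.eq_top_iff_one P).2 ?_)⟩
      have := P.sub_mem hcP h
      rwa [add_sub_cancel_right] at this
  obtain ⟨P, hPm, hcP⟩ := hP
  have hPbot : ∃ p ∈ P, p ≠ 0 := by
    by_contra! h
    have hPb : P = ⊥ := by
      rw [eq_bot_iff]; exact fun x hx => h x hx
    have hfield : IsField S := by
      by_contra hnf
      obtain ⟨I, hI1, hI2⟩ := Ring.not_isField_iff_exists_ideal_bot_lt_and_lt_top.1 hnf
      rw [← hPb] at hI1
      exact hI2.ne (hPm.1.2 I hI1)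
    have hs00 : s0 ≠ 0 := by
      rintro rfl; exact hs0 (isAlgebraic_zero)
    obtain ⟨t, ht⟩ := hfield.mul_inv_cancel hs00
    exact hs0 (hunit s0 (IsUnit.of_mul_eq_one t ht))
  obtain ⟨p, hpP, hp0⟩ := hPbot
  let F := AlgebraicClosure k
  let fld : Field (S ⧸ P) := Ideal.Quotient.field P
  have halg : Algebra.IsAlgebraic k (S ⧸ P) := by
    refine ⟨fun x => ?_⟩
    obtain ⟨s, rfl⟩ := Ideal.Quotient.mkₐ_surjective k P x
    exact lemmaQ hS (Ideal.Quotient.mkₐ k P) hp0 (Ideal.Quotient.eq_zero_iff_mem.2 hpP) s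
  let ψ' : (S ⧸ P) →ₐ[k] F := IsAlgClosed.lift
  let ψ : S →ₐ[k] F := ψ'.comp (Ideal.Quotient.mkₐ k P)
  have hψc : ψ c ≠ 0 := by
    intro h
    apply hcP
    rw [← Ideal.Quotient.eq_zero_iff_mem]
    exact (map_eq_zero_iff ψ' ψ'.toRingHom.injective).1 h
  have hψp : ψ p = 0 := by
    change ψ' (Ideal.Quotient.mk P p) = 0
    rw [Ideal.Quotient.eq_zero_iff_mem.2 hpP, map_zero]
  let Ψ : MvPolynomial (Fin n) S →ₐ[k] MvPolynomial (Fin n) F := MvPolynomial.mapAlgHom ψ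
  have hΨf : Ψ f ∉ Set.range (MvPolynomial.C (σ := Fin n) (R := F)) := by
    rintro ⟨a, ha⟩
    have h1 := congrArg (MvPolynomial.coeff m) ha
    rw [MvPolynomial.coeff_C, if_neg (Ne.symm hm)] at h1
    have h2 : MvPolynomial.coeff m (Ψ f) = ψ c := MvPolynomial.coeff_map _ _ _
    exact hψc (h2.symm.trans h1.symm)
  obtain ⟨Φ, hΦ⟩ := nonconst_specialize (Ψ f) hΨf
  let φ : R →ₐ[k] F[X] := ((Φ.restrictScalars k).comp Ψ).comp (e.toAlgHom.comp ιR)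
  have hφr0 : (φ r0).natDegree ≠ 0 := hΦ
  refine poly_structure φ ?_ r0 hφr0
  rw [injective_iff_map_eq_zero]
  intro a ha
  by_contra ha0
  have h1 : IsAlgebraic k (φ r0) := lemmaQ hR φ ha0 ha r0
  have h2 : IsAlgebraic F (φ r0) := h1.extendScalars (algebraMap k F).injective
  obtain ⟨q, hq0, hq⟩ := h2
  have h3 : q.comp (φ r0) = (0 : F[X]).comp (φ r0) := by rw [zero_comp]; exact hq
  exact hq0 (comp_inj_of_natDegree hφr0 h3)

end TheoremN

section Normalization

/-- `i` is injective, integral and birational. -/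
structure IsNormz {A A' : Type*} [CommRing A] [CommRing A'] (i : A →+* A') : Prop where
  inj : Function.Injective i
  int : ∀ x, i.IsIntegralElem x
  bir : ∀ x : A', ∃ b : A, b ≠ 0 ∧ ∃ a : A, i b * x = i a

lemma IsNormz.comp_equiv {A B A' : Type*} [CommRing A] [CommRing B] [CommRing A'] {i : B →+* A'}
    (hi : IsNormz i) (e : A ≃+* B) : IsNormz (i.comp (e : A →+* B)) where
  inj := hi.inj.comp e.injective
  int := fun x => by
    obtain ⟨p, hp, hpx⟩ := hi.int x
    refine ⟨p.map (e.symm : B →+* A), hp.map _, ?_⟩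
    rw [Polynomial.eval₂_map]
    have : (i.comp (e : A →+* B)).comp (e.symm : B →+* A) = i := by ext; simp
    rw [this, hpx]
  bir := fun x => by
    obtain ⟨b, hb, a, h⟩ := hi.bir x
    exact ⟨e.symm b, by simpa using hb, e.symm a, by simpa using h⟩

lemma normz_hom {A A₁ A₂ : Type*} [CommRing A] [IsDomain A] [CommRing A₁] [IsDomain A₁]
    [CommRing A₂] [IsDomain A₂] [IsIntegrallyClosed A₂]
    {i : A →+* A₁} {j : A →+* A₂} (hi : IsNormz i) (hj : IsNormz j) :
    ∃ θ : A₁ →+* A₂, ∀ a, θ (i a) = j a := by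
  let L := FractionRing A₂
  let _ : Algebra A A₁ := i.toAlgebra
  let jL : A →+* L := (algebraMap A₂ L).comp j
  have hjL : Function.Injective jL := (IsFractionRing.injective A₂ L).comp hj.inj
  let K := FractionRing A₁
  have hK : IsFractionRing A K := by
    have : FaithfulSMul A K := (faithfulSMul_iff_algebraMap_injective A K).2 (by
      rw [IsScalarTower.algebraMap_eq A A₁ K]
      exact (IsFractionRing.injective A₁ K).comp hi.inj)
    apply IsFractionRing.of_field
    intro z
    obtain ⟨x, y, hy, rfl⟩ := IsFractionRing.div_surjective (A := A₁) z
    have hy0 : y ≠ 0 := nonZeroDivisors.ne_zero hy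
    obtain ⟨b, hb, a, h1⟩ := hi.bir x
    obtain ⟨d, hd, c, h2⟩ := hi.bir y
    have hib : ∀ b : A, b ≠ 0 → i b ≠ 0 := fun b hb => by rwa [Ne, map_eq_zero_iff _ hi.inj]
    have hK0 : ∀ b : A₁, b ≠ 0 → algebraMap A₁ K b ≠ 0 := fun b hb => by
      rwa [Ne, map_eq_zero_iff _ (IsFractionRing.injective A₁ K)]
    refine ⟨a * d, c * b, ?_⟩
    have hA : ∀ a : A, algebraMap A K a = algebraMap A₁ K (i a) := fun a => rfl
    rw [hA, hA, map_mul i, map_mul i, ← h1, ← h2]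
    have e1 := hK0 _ (hib b hb)
    have e2 := hK0 _ (hib d hd)
    have e3 := hK0 _ hy0
    rw [map_mul, map_mul, map_mul, map_mul]
    rw [div_eq_div_iff e3 (mul_ne_zero (mul_ne_zero e2 e3) e1)]
    ring
  let ι : K →+* L := IsFractionRing.lift (A := A) hjL
  have hι : ∀ a, ι (algebraMap A₁ K (i a)) = algebraMap A₂ L (j a) := fun a =>
    IsFractionRing.lift_algebraMap (K := K) hjL a
  have hhIntegral : ∀ x : A₁, ∃ y : A₂, algebraMap A₂ L y = ι (algebraMap A₁ K x) := by
    intro x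
    apply IsIntegrallyClosed.isIntegral_iff.1
    obtain ⟨p, hp, hpx⟩ := hi.int x
    refine ⟨p.map j, hp.map _, ?_⟩
    rw [Polynomial.eval₂_map]
    have h1 := congrArg (ι.comp (algebraMap A₁ K)) hpx
    rw [Polynomial.hom_eval₂, map_zero] at h1
    have h2 : (ι.comp (algebraMap A₁ K)).comp i = (algebraMap A₂ L).comp j := RingHom.ext hι
    rw [h2] at h1
    exact h1
  choose θ hθ using hhIntegral
  have hinj := IsFractionRing.injective A₂ L
  exact ⟨{ toFun := θ
           map_one' := hinj (by rw [hθ]; simp)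
           map_zero' := hinj (by rw [hθ]; simp)
           map_mul' := fun x y => hinj (by rw [hθ]; simp [hθ])
           map_add' := fun x y => hinj (by rw [hθ]; simp [hθ]) }, fun a => hinj (by
             change algebraMap A₂ L (θ (i a)) = _
             rw [hθ, hι])⟩

lemma normz_ext {A A₁ A₂ : Type*} [CommRing A] [CommRing A₁]
    [CommRing A₂] [IsDomain A₂]
    {i : A →+* A₁} (hi : IsNormz i) {f g : A₁ →+* A₂} (hg : Function.Injective (g.comp i))
    (h : ∀ a, f (i a) = g (i a)) : f = g := by
  ext x
  obtain ⟨b, hb, a, hab⟩ := hi.bir x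
  have h1 := congrArg f hab
  have h2 := congrArg g hab
  rw [map_mul, h, h, ← h2, map_mul] at h1
  have h3 : g (i b) ≠ 0 := by
    change (g.comp i) b ≠ 0
    rwa [Ne, map_eq_zero_iff _ hg]
  exact mul_left_cancel₀ h3 h1

lemma extend_iso {k A A' B B' : Type*} [CommRing k] [CommRing A] [IsDomain A] [CommRing A']
    [IsDomain A'] [IsIntegrallyClosed A'] [CommRing B] [IsDomain B] [CommRing B'] [IsDomain B']
    [IsIntegrallyClosed B'] [Algebra k A] [Algebra k A'] [Algebra k B] [Algebra k B']
    (i : A →ₐ[k] A') (j : B →ₐ[k] B') (hi : IsNormz (i : A →+* A')) (hj : IsNormz (j : B →+* B'))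
    (e : A ≃ₐ[k] B) : ∃ e' : A' ≃ₐ[k] B', ∀ a, e' (i a) = j (e a) := by
  have hj' := hj.comp_equiv (e : A ≃+* B)
  obtain ⟨θ, hθ⟩ := normz_hom hi hj'
  obtain ⟨η, hη⟩ := normz_hom hj' hi
  have h1 : η.comp θ = RingHom.id A' := by
    apply normz_ext hi
    · exact hi.inj
    · intro a
      rw [RingHom.comp_apply, hθ, hη]; rfl
  have h2 : θ.comp η = RingHom.id B' := by
    apply normz_ext hj'
    · exact hj'.inj
    · intro a
      rw [RingHom.comp_apply, hη, hθ]; rfl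
  refine ⟨AlgEquiv.ofRingEquiv (f := RingEquiv.ofRingHom θ η h2 h1) ?_, fun a => hθ a⟩
  intro c
  have h3 := hθ (algebraMap k A c)
  have h4 : (i : A →+* A') (algebraMap k A c) = algebraMap k A' c := i.commutes c
  rw [h4] at h3
  change θ _ = _
  rw [h3]
  change j (e (algebraMap k A c)) = _
  rw [e.commutes, j.commutes]

lemma mv_isIntegrallyClosed (R : Type*) [CommRing R] [IsDomain R] [IsIntegrallyClosed R] (n : ℕ) :
    IsIntegrallyClosed (MvPolynomial (Fin n) R) := by
  induction n with
  | zero => exact IsIntegrallyClosed.of_equiv (MvPolynomial.isEmptyRingEquiv R (Fin 0)).symm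
  | succ n ih => exact IsIntegrallyClosed.of_equiv (MvPolynomial.finSuccEquiv R n).symm.toRingEquiv

lemma IsNormz.mv {A A' : Type*} [CommRing A] [IsDomain A] [CommRing A'] {i : A →+* A'}
    (hi : IsNormz i) (n : ℕ) :
    IsNormz (MvPolynomial.map i : MvPolynomial (Fin n) A →+* MvPolynomial (Fin n) A') where
  inj := MvPolynomial.map_injective _ hi.inj
  int := fun x => by
    induction x using MvPolynomial.induction_on with
    | C a =>
      obtain ⟨p, hp, hpx⟩ := hi.int a
      refine ⟨p.map MvPolynomial.C, hp.map _, ?_⟩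
      rw [Polynomial.eval₂_map]
      have : (MvPolynomial.map i : MvPolynomial (Fin n) A →+* MvPolynomial (Fin n) A').comp
        MvPolynomial.C = MvPolynomial.C.comp i := by ext; simp
      rw [this, ← Polynomial.hom_eval₂, hpx, map_zero]
    | add p q hp hq => exact hp.add _ hq
    | mul_X p j hp =>
      refine hp.mul _ ?_
      have : (MvPolynomial.X j : MvPolynomial (Fin n) A') = MvPolynomial.map i (MvPolynomial.X j) := by simp
      rw [this]; exact RingHom.isIntegralElem_map _
  bir := fun x => by
    have key : ∃ b : A, b ≠ 0 ∧ ∃ a : MvPolynomial (Fin n) A,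
        MvPolynomial.map i (MvPolynomial.C b) * x = MvPolynomial.map i a := by
      induction x using MvPolynomial.induction_on with
      | C a =>
        obtain ⟨b, hb, c, h⟩ := hi.bir a
        exact ⟨b, hb, MvPolynomial.C c, by simp [← h]⟩
      | add p q hp hq =>
        obtain ⟨b, hb, c, h⟩ := hp
        obtain ⟨b', hb', c', h'⟩ := hq
        refine ⟨b * b', mul_ne_zero hb hb', MvPolynomial.C b' * c + MvPolynomial.C b * c', ?_⟩
        rw [map_add, map_mul _ _ c, map_mul _ _ c', ← h, ← h', map_mul, map_mul]; ring
      | mul_X p j hp =>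
        obtain ⟨b, hb, c, h⟩ := hp
        refine ⟨b, hb, c * MvPolynomial.X j, ?_⟩
        rw [← mul_assoc, h, map_mul, MvPolynomial.map_X]
    obtain ⟨b, hb, a, h⟩ := key
    exact ⟨MvPolynomial.C b, by simpa using hb, a, h⟩

end Normalization

section Conclusion
open Polynomial

/-- `A` is a polynomial ring in `u` over the elements integral over `k`. -/
def PolyGen (k : Type*) {A : Type*} [CommRing k] [CommRing A] [Algebra k A] (u : A) : Prop :=
  Transcendental k u ∧ ∀ a : A, ∃ p : A[X], (∀ i, IsIntegral k (p.coeff i)) ∧ a = p.eval u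

lemma PolyGen.bij {k A : Type*} [Field k] [CommRing A] [IsDomain A] [Algebra k A] {u : A}
    (h : PolyGen k u) :
    Function.Bijective (aeval u : (integralClosure k A)[X] →ₐ[integralClosure k A] A) := by
  constructor
  · apply transcendental_iff_injective.1
    exact h.1.extendScalars _
  · intro a
    obtain ⟨p, hp, rfl⟩ := h.2 a
    have hl : p ∈ lifts (algebraMap (integralClosure k A) A) := by
      rw [lifts_iff_coeff_lifts]
      exact fun i => ⟨⟨p.coeff i, hp i⟩, rfl⟩
    obtain ⟨q, hq⟩ := (mem_lifts _).1 hl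
    refine ⟨q, ?_⟩
    rw [← hq, eval_map_algebraMap]

lemma PolyGen.pid {k A : Type*} [Field k] [CommRing A] [IsDomain A] [Algebra k A] {u : A}
    (h : PolyGen k u) : IsPrincipalIdealRing A := by
  have hf : IsField (integralClosure k A) := isField_of_isIntegral_of_isField' (Field.toIsField k)
  let _ := hf.toField
  exact IsPrincipalIdealRing.of_surjective _ h.bij.2

/-- the elements integral over `k` of a polynomial ring are constants -/
lemma integralClosure_mv {k A : Type*} [Field k] [CharZero k] [CommRing A] [IsDomain A] [Algebra k A]
    (n : ℕ) : Nonempty (integralClosure k A ≃ₐ[k] integralClosure k (MvPolynomial (Fin n) A)) := by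
  let ι : A →ₐ[k] MvPolynomial (Fin n) A := IsScalarTower.toAlgHom k A (MvPolynomial (Fin n) A)
  have hι : Function.Injective ι := MvPolynomial.C_injective _ _
  refine ⟨AlgEquiv.ofBijective ι.mapIntegralClosure ⟨?_, ?_⟩⟩
  · intro x y hxy
    have := congrArg Subtype.val hxy
    exact Subtype.ext (hι this)
  · rintro ⟨f, hf⟩
    have hf' : IsIntegral k f := hf
    obtain ⟨a, ha⟩ := const_of_algebraic (AlgHom.id k (MvPolynomial (Fin n) A)) f hf'.isAlgebraic
    have ha' : ι a = f := ha
    have h1 : IsIntegral k a := by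
      rw [← isIntegral_algHom_iff ι hι, ha']; exact hf'
    exact ⟨⟨a, h1⟩, Subtype.ext ha'⟩

lemma equiv_of_polyGen {k A B : Type*} [Field k] [CharZero k] [CommRing A] [IsDomain A] [Algebra k A]
    [CommRing B] [IsDomain B] [Algebra k B] {u : A} {v : B} (hu : PolyGen k u) (hv : PolyGen k v)
    {n : ℕ} (e : MvPolynomial (Fin n) A ≃ₐ[k] MvPolynomial (Fin n) B) : Nonempty (A ≃ₐ[k] B) := by
  obtain ⟨e1⟩ := integralClosure_mv (k := k) (A := A) n
  obtain ⟨e2⟩ := integralClosure_mv (k := k) (A := B) n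
  let e3 : integralClosure k A ≃ₐ[k] integralClosure k B :=
    (e1.trans e.mapIntegralClosure).trans e2.symm
  let f1 : (integralClosure k A)[X] ≃ₐ[k] A := (AlgEquiv.ofBijective _ hu.bij).restrictScalars k
  let f2 : (integralClosure k B)[X] ≃ₐ[k] B := (AlgEquiv.ofBijective _ hv.bij).restrictScalars k
  exact ⟨(f1.symm.trans (Polynomial.mapAlgEquiv e3)).trans f2⟩

lemma equiv_of_const {k R S : Type*} [Field k] [CommRing R] [Algebra k R]
    [CommRing S] [Algebra k S] {n : ℕ}
    (e : MvPolynomial (Fin n) R ≃ₐ[k] MvPolynomial (Fin n) S)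
    (h1 : ∀ r, e (MvPolynomial.C r) ∈ Set.range (MvPolynomial.C (σ := Fin n) (R := S)))
    (h2 : ∀ s, e.symm (MvPolynomial.C s) ∈ Set.range (MvPolynomial.C (σ := Fin n) (R := R))) :
    Nonempty (R ≃ₐ[k] S) := by
  choose f hf using h1
  choose g hg using h2
  have hS := MvPolynomial.C_injective (Fin n) S
  have hR := MvPolynomial.C_injective (Fin n) R
  refine ⟨AlgEquiv.ofRingEquiv (f :=
    { toFun := f
      invFun := g
      left_inv := fun r => hR (by rw [hg, hf, AlgEquiv.symm_apply_apply])
      right_inv := fun s => hS (by rw [hf, hg, AlgEquiv.apply_symm_apply])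
      map_mul' := fun x y => hS (by rw [hf]; simp [hf])
      map_add' := fun x y => hS (by rw [hf]; simp [hf]) }) ?_⟩
  intro c
  apply hS
  change MvPolynomial.C (f _) = _
  rw [hf]
  exact e.commutes c

lemma top_of_map_top {R R' : Type*} [CommRing R] [CommRing R'] {i : R →+* R'} (hi : IsNormz i)
    (I : Ideal R) (h : I.map i = ⊤) : I = ⊤ := by
  by_contra hI
  obtain ⟨M, hM, hIM⟩ := Ideal.exists_le_maximal I hI
  let _ : Algebra R R' := i.toAlgebra
  have : Algebra.IsIntegral R R' := ⟨hi.int⟩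
  obtain ⟨Q, hQ, hQM⟩ := Ideal.exists_ideal_over_maximal_of_isIntegral (S := R') M (by
    intro x hx
    have : i x = 0 := hx
    rw [map_eq_zero_iff _ hi.inj] at this
    rw [this]; exact M.zero_mem)
  apply hQ.ne_top
  rw [eq_top_iff, ← h, Ideal.map_le_iff_le_comap]
  exact hIM.trans hQM.ge

lemma lemmaC {k R S : Type*} [Field k] [CommRing R] [IsDomain R] [Algebra k R]
    [CommRing S] [IsDomain S] [Algebra k S] {n : ℕ} [IsPrincipalIdealRing R] [IsPrincipalIdealRing S]
    (e : MvPolynomial (Fin n) R ≃ₐ[k] MvPolynomial (Fin n) S)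
    (hne : ∀ r : R, Transcendental k r →
      e (MvPolynomial.C r) ∉ Set.range (MvPolynomial.C (σ := Fin n) (R := S)))
    (c : Ideal R) (d : Ideal S) (hc : c ≠ ⊥)
    (h : (c.map MvPolynomial.C).map (e : MvPolynomial (Fin n) R →+* MvPolynomial (Fin n) S) =
      d.map MvPolynomial.C) : c = ⊤ := by
  obtain ⟨f, rfl⟩ := (IsPrincipalIdealRing.principal c).principal
  obtain ⟨g, rfl⟩ := (IsPrincipalIdealRing.principal d).principal
  rw [← Ideal.span, ← Ideal.span, Ideal.map_span, Ideal.map_span, Ideal.map_span, Set.image_singleton,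
    Set.image_singleton, Set.image_singleton, Ideal.span_singleton_eq_span_singleton] at h
  obtain ⟨w, hw⟩ := h.symm
  obtain ⟨t, _, ht⟩ := MvPolynomial.isUnit_iff_eq_C_of_isReduced.1 w.isUnit
  have h1 : e (MvPolynomial.C f) ∈ Set.range (MvPolynomial.C (σ := Fin n) (R := S)) := by
    refine ⟨g * t, ?_⟩
    rw [MvPolynomial.C_mul, ← ht, hw]; rfl
  have hf : f ≠ 0 := by rintro rfl; simp at hc
  have h2 : IsAlgebraic k f := by
    by_contra h2; exact hne f h2 h1
  rw [← Ideal.span, Ideal.span_singleton_eq_top]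
  exact unit_of_algebraic hf h2

end Conclusion

section Finish
open Polynomial

/-- the ideal of elements multiplying `l` into the subring -/
def trIdeal {R R' : Type*} [CommRing R] [CommRing R'] (i : R →+* R') (l : R') : Ideal R where
  carrier := {a | i a * l ∈ i.range}
  add_mem' := fun {a b} ha hb => by
    simp only [Set.mem_ofPred_eq] at *
    rw [map_add, add_mul]; exact add_mem ha hb
  zero_mem' := ⟨0, by simp⟩
  smul_mem' := fun c x hx => by
    simp only [Set.mem_ofPred_eq] at *
    rw [smul_eq_mul, map_mul, mul_assoc]; exact mul_mem ⟨c, rfl⟩ hx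

/-- the conductor -/
def condIdeal {R R' : Type*} [CommRing R] [CommRing R'] (i : R →+* R') : Ideal R' where
  carrier := {a | ∀ b, a * b ∈ i.range}
  add_mem' := fun {a b} ha hb c => by
    rw [add_mul]; exact add_mem (ha c) (hb c)
  zero_mem' := fun b => ⟨0, by simp⟩
  smul_mem' := fun c x hx b => by
    rw [smul_eq_mul, mul_comm c, mul_assoc]; exact hx _

lemma mem_range_map {R R' : Type*} [CommRing R] [CommRing R'] (i : R →+* R') {n : ℕ}
    (f : MvPolynomial (Fin n) R') :
    f ∈ (MvPolynomial.map i : MvPolynomial (Fin n) R →+* _).range ↔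
      ∀ m, MvPolynomial.coeff m f ∈ i.range := by
  constructor
  · rintro ⟨g, rfl⟩ m
    rw [MvPolynomial.coeff_map]; exact ⟨_, rfl⟩
  · intro h
    rw [f.as_sum]
    refine sum_mem fun m _ => ?_
    obtain ⟨a, ha⟩ := h m
    exact ⟨MvPolynomial.monomial m a, by rw [MvPolynomial.map_monomial, ha]⟩

lemma mem_trIdeal {R R' : Type*} [CommRing R] [CommRing R'] (i : R →+* R') (l : R') {n : ℕ}
    (f : MvPolynomial (Fin n) R) :
    f ∈ (trIdeal i l).map MvPolynomial.C ↔ MvPolynomial.map i f * MvPolynomial.C l ∈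
      (MvPolynomial.map i : MvPolynomial (Fin n) R →+* _).range := by
  rw [MvPolynomial.mem_map_C_iff, mem_range_map]
  refine forall_congr' fun m => ?_
  rw [mul_comm, MvPolynomial.coeff_C_mul, MvPolynomial.coeff_map, mul_comm]; rfl

lemma mem_condIdeal {R R' : Type*} [CommRing R] [CommRing R'] (i : R →+* R') {n : ℕ}
    (f : MvPolynomial (Fin n) R') :
    f ∈ (condIdeal i).map MvPolynomial.C ↔ ∀ g, f * g ∈
      (MvPolynomial.map i : MvPolynomial (Fin n) R →+* _).range := by
  classical
  rw [MvPolynomial.mem_map_C_iff]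
  simp_rw [mem_range_map]
  constructor
  · intro h g m
    rw [MvPolynomial.coeff_mul]
    exact sum_mem fun x _ => h x.1 _
  · intro h m b
    rw [mul_comm, ← MvPolynomial.coeff_C_mul, mul_comm]; exact h _ m

lemma normal_of_caseB {k R S R' S' : Type*} [Field k] [CharZero k]
    [CommRing R] [IsDomain R] [Algebra k R] [CommRing S] [IsDomain S] [Algebra k S]
    [CommRing R'] [IsDomain R'] [Algebra k R'] [CommRing S'] [IsDomain S'] [Algebra k S']
    [IsPrincipalIdealRing R'] [IsPrincipalIdealRing S']
    (i : R →+* R') (j : S →+* S') (hi : IsNormz i) {n : ℕ}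
    (e : MvPolynomial (Fin n) R ≃ₐ[k] MvPolynomial (Fin n) S)
    (e' : MvPolynomial (Fin n) R' ≃ₐ[k] MvPolynomial (Fin n) S')
    (hee : ∀ f, e' (MvPolynomial.map i f) = MvPolynomial.map j (e f))
    (hne : ∀ r : R', Transcendental k r →
      e' (MvPolynomial.C r) ∉ Set.range (MvPolynomial.C (σ := Fin n) (R := S')))
    {u : R'} (hu : PolyGen k u) : Function.Surjective i := by
  have hrange : ∀ f, f ∈ (MvPolynomial.map i : MvPolynomial (Fin n) R →+* _).range ↔
      e' f ∈ (MvPolynomial.map j : MvPolynomial (Fin n) S →+* _).range := by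
    intro f
    constructor
    · rintro ⟨g, rfl⟩
      exact ⟨e g, (hee g).symm⟩
    · rintro ⟨g, hg⟩
      refine ⟨e.symm g, e'.injective ?_⟩
      rw [hee, AlgEquiv.apply_symm_apply, hg]
  have hi0 : ∀ b : R, b ≠ 0 → i b ≠ 0 := fun b hb => by rwa [Ne, map_eq_zero_iff _ hi.inj]
  have use1 : ∀ l : R', IsIntegral k l → l ∈ i.range := by
    intro l hl
    obtain ⟨μ, hμ⟩ := const_of_algebraic (e'.toAlgHom.comp
      (IsScalarTower.toAlgHom k R' (MvPolynomial (Fin n) R'))) l hl.isAlgebraic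
    have hμ' : e' (MvPolynomial.C l) = MvPolynomial.C μ := hμ.symm
    have key : ((trIdeal i l).map MvPolynomial.C).map
        (e : MvPolynomial (Fin n) R →+* MvPolynomial (Fin n) S) =
        (trIdeal j μ).map MvPolynomial.C := by
      ext g
      obtain ⟨f, rfl⟩ := e.surjective g
      have h1 : e f ∈ ((trIdeal i l).map MvPolynomial.C).map
        (e : MvPolynomial (Fin n) R →+* MvPolynomial (Fin n) S) ↔
          f ∈ (trIdeal i l).map MvPolynomial.C := by
        constructor
        · intro h
          obtain ⟨x, hx, hxf⟩ := (Ideal.mem_map_iff_of_surjective _ e.surjective).1 h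
          rwa [← e.injective hxf]
        · exact fun h => Ideal.mem_map_of_mem _ h
      rw [h1, mem_trIdeal, mem_trIdeal, hrange, map_mul, hμ', hee]
    have hcm : (((trIdeal i l).map i).map MvPolynomial.C).map
        (e' : MvPolynomial (Fin n) R' →+* MvPolynomial (Fin n) S') =
        ((trIdeal j μ).map j).map MvPolynomial.C := by
      have h1 : (MvPolynomial.C (σ := Fin n)).comp j = (MvPolynomial.map j).comp MvPolynomial.C := by
        ext x; simp
      have h2 : ((e' : MvPolynomial (Fin n) R' →+* MvPolynomial (Fin n) S').comp
          ((MvPolynomial.C (σ := Fin n)).comp i)) =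
          ((MvPolynomial.map j).comp (e : MvPolynomial (Fin n) R →+* MvPolynomial (Fin n) S)).comp
            MvPolynomial.C := by
        ext1 x
        change e' (MvPolynomial.C (i x)) = MvPolynomial.map j (e (MvPolynomial.C x))
        rw [← hee, MvPolynomial.map_C]
      rw [Ideal.map_map _ MvPolynomial.C (I := trIdeal j μ), h1, ← Ideal.map_map, ← key, Ideal.map_map, Ideal.map_map,
        Ideal.map_map, Ideal.map_map, RingHom.comp_assoc, ← RingHom.comp_assoc]
      rw [← h2]
      rfl
    have h3 := lemmaC e' hne _ _ (by
      obtain ⟨b, hb, a, hab⟩ := hi.bir l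
      intro h
      have : i b ∈ (trIdeal i l).map i := Ideal.mem_map_of_mem _ ⟨a, hab.symm⟩
      rw [h] at this
      exact hi0 b hb this) hcm
    have h4 := top_of_map_top hi _ h3
    have h5 : (1 : R) ∈ trIdeal i l := by rw [h4]; trivial
    have h6 : i 1 * l ∈ i.range := h5
    simpa using h6
  have key : ((condIdeal i).map MvPolynomial.C).map
      (e' : MvPolynomial (Fin n) R' →+* MvPolynomial (Fin n) S') =
      (condIdeal j).map MvPolynomial.C := by
    ext g
    obtain ⟨f, rfl⟩ := e'.surjective g
    have h1 : e' f ∈ ((condIdeal i).map MvPolynomial.C).map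
      (e' : MvPolynomial (Fin n) R' →+* MvPolynomial (Fin n) S') ↔
        f ∈ (condIdeal i).map MvPolynomial.C := by
      constructor
      · intro h
        obtain ⟨x, hx, hxf⟩ := (Ideal.mem_map_iff_of_surjective _ e'.surjective).1 h
        rwa [← e'.injective hxf]
      · exact fun h => Ideal.mem_map_of_mem _ h
    rw [h1, mem_condIdeal, mem_condIdeal, e'.surjective.forall]
    refine forall_congr' fun g => ?_
    rw [hrange, map_mul]
  have hc := lemmaC e' hne _ _ (by
    obtain ⟨q, hq, hqu⟩ := hi.int u
    obtain ⟨b, hb, a, hab⟩ := hi.bir u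
    have hmem : i (b ^ q.natDegree) ∈ condIdeal i := by
      intro x
      obtain ⟨p, hp, rfl⟩ := hu.2 x
      have hl : p ∈ lifts i := by
        rw [lifts_iff_coeff_lifts]
        exact fun m => use1 _ (hp m)
      obtain ⟨P, rfl⟩ := (mem_lifts _).1 hl
      have h1 : (P.map i).eval u = (P %ₘ q).eval₂ i u := by
        rw [eval_map]
        conv_lhs => rw [← modByMonic_add_div P q]
        rw [eval₂_add, eval₂_mul, hqu, zero_mul, add_zero]
      rw [h1, eval₂_eq_sum_range, Finset.mul_sum]
      refine sum_mem fun m hm => ?_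
      have hm' : m ≤ q.natDegree := by
        have := natDegree_modByMonic_le P hq
        have := Finset.mem_range.1 hm
        omega
      refine ⟨(P %ₘ q).coeff m * b ^ (q.natDegree - m) * a ^ m, ?_⟩
      rw [map_mul, map_mul, map_pow, map_pow, map_pow, ← hab, mul_pow]
      conv_rhs => rw [← Nat.sub_add_cancel hm', pow_add]
      ring
    intro h
    rw [h] at hmem
    exact hi0 _ (pow_ne_zero _ hb) hmem) key
  intro x
  have h5 : (1 : R') ∈ condIdeal i := by rw [hc]; trivial
  simpa using h5 x

end Finish

section Main
open Polynomial

lemma const_descent {S S' : Type*} [CommRing S] [CommRing S'] {j : S →+* S'}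
    (hj : Function.Injective j) {n : ℕ} (f : MvPolynomial (Fin n) S)
    (h : MvPolynomial.map j f ∈ Set.range (MvPolynomial.C (σ := Fin n) (R := S'))) :
    f ∈ Set.range (MvPolynomial.C (σ := Fin n) (R := S)) := by
  classical
  obtain ⟨s, hs⟩ := h
  refine ⟨MvPolynomial.coeff 0 f, MvPolynomial.map_injective j hj ?_⟩
  rw [MvPolynomial.map_C, ← hs]
  congr 1
  rw [← MvPolynomial.coeff_map, ← hs, MvPolynomial.coeff_C, if_pos rfl]

theorem main_abstract {k R S R' S' : Type*} [Field k] [CharZero k]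
    [CommRing R] [IsDomain R] [Algebra k R] [CommRing S] [IsDomain S] [Algebra k S]
    [CommRing R'] [IsDomain R'] [Algebra k R'] [CommRing S'] [IsDomain S'] [Algebra k S']
    [IsIntegrallyClosed R'] [IsIntegrallyClosed S'] (hR' : TD k R') (hS' : TD k S')
    (i : R →ₐ[k] R') (j : S →ₐ[k] S') (hi : IsNormz (i : R →+* R')) (hj : IsNormz (j : S →+* S'))
    {n : ℕ} (e : MvPolynomial (Fin n) R ≃ₐ[k] MvPolynomial (Fin n) S) :
    Nonempty (R ≃ₐ[k] S) := by
  have : IsIntegrallyClosed (MvPolynomial (Fin n) R') := mv_isIntegrallyClosed R' n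
  have : IsIntegrallyClosed (MvPolynomial (Fin n) S') := mv_isIntegrallyClosed S' n
  obtain ⟨e', he'⟩ := extend_iso (MvPolynomial.mapAlgHom (σ := Fin n) i)
    (MvPolynomial.mapAlgHom (σ := Fin n) j) (hi.mv n) (hj.mv n) e
  have hee : ∀ f, e' (MvPolynomial.map (i : R →+* R') f) =
    MvPolynomial.map (j : S →+* S') (e f) := he'
  have hee2 : ∀ f, e'.symm (MvPolynomial.map (j : S →+* S') f) =
      MvPolynomial.map (i : R →+* R') (e.symm f) := by
    intro f
    rw [AlgEquiv.symm_apply_eq, hee, AlgEquiv.apply_symm_apply]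
  let ιR : R' →ₐ[k] MvPolynomial (Fin n) R' := IsScalarTower.toAlgHom k R' (MvPolynomial (Fin n) R')
  let ιS : S' →ₐ[k] MvPolynomial (Fin n) S' := IsScalarTower.toAlgHom k S' (MvPolynomial (Fin n) S')
  have hιR : Function.Injective ιR := MvPolynomial.C_injective _ _
  have hιS : Function.Injective ιS := MvPolynomial.C_injective _ _
  have htr : ∀ r s, e' (MvPolynomial.C r) = MvPolynomial.C s →
      (Transcendental k s ↔ Transcendental k r) := by
    intro r s h
    rw [← transc_map ιS hιS, ← transc_map ιR hιR, ← transc_map e'.toAlgHom e'.injective]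
    change Transcendental k (MvPolynomial.C s) ↔ Transcendental k (e' (MvPolynomial.C r))
    rw [h]
  by_cases hA : ∃ r : R', Transcendental k r ∧
      e' (MvPolynomial.C r) ∈ Set.range (MvPolynomial.C (σ := Fin n) (R := S'))
  · obtain ⟨r, hr, s, hs⟩ := hA
    have hs' := (htr r s hs.symm).2 hr
    have h1 : ∀ a, e' (MvPolynomial.C a) ∈ Set.range (MvPolynomial.C (σ := Fin n) (R := S')) :=
      const_of_const hR' (e'.toAlgHom.comp ιR) (e'.injective.comp hιR) r hr ⟨s, hs⟩
    have h2 : ∀ a, e'.symm (MvPolynomial.C a) ∈ Set.range (MvPolynomial.C (σ := Fin n) (R := R')) :=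
      const_of_const hS' (e'.symm.toAlgHom.comp ιS) (e'.symm.injective.comp hιS) s hs'
        ⟨r, ((AlgEquiv.symm_apply_eq e').2 hs).symm⟩
    apply equiv_of_const e
    · intro a
      apply const_descent hj.inj
      rw [← hee, MvPolynomial.map_C]
      exact h1 _
    · intro a
      apply const_descent hi.inj
      rw [← hee2, MvPolynomial.map_C]
      exact h2 _
  · have hne : ∀ r : R', Transcendental k r →
        e' (MvPolynomial.C r) ∉ Set.range (MvPolynomial.C (σ := Fin n) (R := S')) :=
      fun r hr h => hA ⟨r, hr, h⟩
    have hne2 : ∀ s : S', Transcendental k s →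
        e'.symm (MvPolynomial.C s) ∉ Set.range (MvPolynomial.C (σ := Fin n) (R := R')) := by
      rintro s hs ⟨r, hr⟩
      have h := (AlgEquiv.eq_symm_apply e').1 hr
      exact hne r ((htr r s h).1 hs) ⟨s, h.symm⟩
    obtain ⟨u, hu⟩ := thmN hR' hS' e' hne
    obtain ⟨v, hv⟩ := thmN hS' hR' e'.symm hne2
    have hu : PolyGen k u := hu
    have hv : PolyGen k v := hv
    have := hu.pid
    have := hv.pid
    have s1 : Function.Surjective i := normal_of_caseB (i : R →+* R') (j : S →+* S') hi e e' hee hne hu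
    have s2 : Function.Surjective j :=
      normal_of_caseB (j : S →+* S') (i : R →+* R') hj e.symm e'.symm hee2 hne2 hv
    obtain ⟨E⟩ := equiv_of_polyGen hu hv e'
    exact ⟨((AlgEquiv.ofBijective i ⟨hi.inj, s1⟩).trans E).trans
      (AlgEquiv.ofBijective j ⟨hj.inj, s2⟩).symm⟩

lemma normz_integralClosure (k R : Type*) [Field k] [CommRing R] [IsDomain R] [Algebra k R] :
    IsNormz ((IsScalarTower.toAlgHom k R (integralClosure R (FractionRing R)) :
      R →ₐ[k] integralClosure R (FractionRing R)) : R →+* integralClosure R (FractionRing R)) where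
  inj := fun x y h => IsFractionRing.injective R (FractionRing R) (congrArg Subtype.val h)
  int := fun x => Algebra.IsIntegral.isIntegral (R := R) x
  bir := fun x => by
    obtain ⟨a, b, hb, h⟩ := IsFractionRing.div_surjective (A := R) (x : FractionRing R)
    refine ⟨b, nonZeroDivisors.ne_zero hb, a, Subtype.ext ?_⟩
    change algebraMap R (FractionRing R) b * (x : FractionRing R) = algebraMap R (FractionRing R) a
    rw [← h, mul_div_cancel₀]
    rw [Ne, map_eq_zero_iff _ (IsFractionRing.injective R (FractionRing R))]
    exact nonZeroDivisors.ne_zero hb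

end Main

/-- (Abhyankar–Eakin–Heinzer; characteristic zero)  Let `k` be a field of characteristic
zero and let `R`, `S` be integral domains containing `k` of transcendence degree one over
`k`.  If for some `n ≥ 0` the polynomial rings `R[x_1,…,x_n]` and `S[y_1,…,y_n]` are
isomorphic as `k`-algebras, then `R ≅ S` as `k`-algebras. -/
theorem cancellation_trdeg_one (k : Type*) [Field k] [CharZero k]
    (R : Type*) [CommRing R] [IsDomain R] [Algebra k R]
    (S : Type*) [CommRing S] [IsDomain S] [Algebra k S]
    (hR : trdeg k (FractionRing R) = 1) (hS : trdeg k (FractionRing S) = 1)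
    (n : ℕ) (e : MvPolynomial (Fin n) R ≃ₐ[k] MvPolynomial (Fin n) S) :
    Nonempty (R ≃ₐ[k] S) := by
  have : IsIntegrallyClosed (integralClosure R (FractionRing R)) :=
    integralClosure.isIntegrallyClosedOfFiniteExtension (FractionRing R)
  have : IsIntegrallyClosed (integralClosure S (FractionRing S)) :=
    integralClosure.isIntegrallyClosedOfFiniteExtension (FractionRing S)
  have hR1 : Algebra.trdeg k (FractionRing R) = 1 := hR
  have hS1 : Algebra.trdeg k (FractionRing S) = 1 := hS
  exact main_abstract
    (td_of_trdeg (A := integralClosure R (FractionRing R)) (K := FractionRing R) hR1)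
    (td_of_trdeg (A := integralClosure S (FractionRing S)) (K := FractionRing S) hS1)
    _ _ (normz_integralClosure k R) (normz_integralClosure k S) e
end

section
/- Let k ⊆ L be fields with k algebraically closed, L finitely generated as a field extension of k, and tr.deg_k L = 1. Suppose there exists a field E containing k and a transcendental element s over E such that L is (k-isomorphic to) an intermediate field k ⊆ L ⊆ E(s) of the rational function field E(s), with L ⊄ E. Then L is k-isomorphic to the rational function field k(t) in one variable over k. -/
section
open Polynomial

theorem exists_point {k A : Type*} [Field k] [IsAlgClosed k] [CommRing A] [IsDomain A] [Algebra k A]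
    [Algebra.FiniteType k A] (d : A) (hd : d ≠ 0) : ∃ φ : A →ₐ[k] k, φ d ≠ 0 := by
  let B := Localization.Away d
  have hle : Submonoid.powers d ≤ nonZeroDivisors A := powers_le_nonZeroDivisors_of_noZeroDivisors hd
  have : IsDomain B := IsLocalization.isDomain_localization hle
  have : Algebra.FiniteType A B := IsLocalization.finiteType_of_monoid_fg (Submonoid.powers d) B
  have : Algebra.FiniteType k B := Algebra.FiniteType.trans (S := A) inferInstance inferInstance
  obtain ⟨m, hm⟩ := Ideal.exists_maximal B
  let _ : Field (B ⧸ m) := Ideal.Quotient.field m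
  have : Algebra.FiniteType k (B ⧸ m) := inferInstance
  have : Module.Finite k (B ⧸ m) := finite_of_finite_type_of_isJacobsonRing k (B ⧸ m)
  let e : k ≃ₐ[k] (B ⧸ m) := AlgEquiv.ofBijective (Algebra.ofId k (B ⧸ m))
    (IsAlgClosed.algebraMap_bijective_of_isIntegral (k := k))
  refine ⟨(e.symm : (B ⧸ m) →ₐ[k] k).comp ((Ideal.Quotient.mkₐ k m).comp
    (IsScalarTower.toAlgHom k A B)), ?_⟩
  have hu : IsUnit (algebraMap A B d) := IsLocalization.Away.algebraMap_isUnit d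
  have := hu.map ((e.symm : (B ⧸ m) →ₐ[k] k).comp (Ideal.Quotient.mkₐ k m))
  exact this.ne_zero

theorem spec_injective {k L F : Type*} [Field k] [Field L] [Algebra k L] [Field F] [Algebra k F]
    (htr : Algebra.trdeg k L = 1) (O : Subalgebra k L) (ρ : O →ₐ[k] F) (a : O)
    (ha : Transcendental k (ρ a)) : Function.Injective ρ := by
  rw [injective_iff_map_eq_zero]
  intro f hf
  by_contra hf0
  have hrel : ∃ P : k[X][X], P ≠ 0 ∧ P.eval₂ (aeval f : k[X] →ₐ[k] O).toRingHom a = 0 := by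
    by_cases hft : Transcendental k (f : L)
    · have hi : AlgebraicIndependent k (fun _ : Unit => (f : L)) :=
        algebraicIndependent_unique_type_iff.2 hft
      have h1 := (hi.option_iff_transcendental (a : L)).not.1 (by
        intro h
        have := h.lift_cardinalMk_le_trdeg
        rw [htr] at this
        simp at this)
      rw [Transcendental, not_not] at h1
      obtain ⟨Q, hQ, hQa⟩ := h1
      have hsurj : ∀ c : Algebra.adjoin k (Set.range (fun _ : Unit => (f : L))),
          ∃ p : k[X], aeval (f : L) p = c := by
        rintro ⟨c, hc⟩
        simp only [Set.range_const, Algebra.adjoin_singleton_eq_range_aeval] at hc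
        exact hc
      choose g hg using hsurj
      refine ⟨∑ i ∈ Q.support, monomial i (g (Q.coeff i)), ?_, ?_⟩
      · intro h
        obtain ⟨i, hi⟩ := Polynomial.support_nonempty.2 hQ
        have := congrArg (fun p => p.coeff i) h
        simp only [finsetSum_coeff, coeff_monomial, Finset.sum_ite_eq', hi, if_true,
          coeff_zero] at this
        have h2 := hg (Q.coeff i)
        rw [this, map_zero] at h2
        exact (mem_support_iff.1 hi) (Subtype.ext h2.symm)
      · apply Subtype.ext
        rw [aeval_eq_sum_range, ] at hQa
        rw [eval₂_finsetSum]
        have hQa' : ∑ i ∈ Q.support, (Q.coeff i : L) * (a : L) ^ i = 0 := by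
          rw [← hQa, ← aeval_eq_sum_range, aeval_def, eval₂_eq_sum, sum_def]
          rfl
        rw [ZeroMemClass.coe_zero, ← hQa', AddSubmonoidClass.coe_finsetSum]
        refine Finset.sum_congr rfl fun i _ => ?_
        rw [eval₂_monomial, ← hg]
        simp
    · rw [Transcendental, not_not] at hft
      obtain ⟨p, hp, hpf⟩ := hft
      refine ⟨C p, C_ne_zero.2 hp, ?_⟩
      rw [eval₂_C]
      apply Subtype.ext
      simpa using hpf
  obtain ⟨P, hP, hPa⟩ := hrel
  have hnu : ¬ IsUnit (C X : k[X][X]) := fun h => not_isUnit_X (isUnit_C.1 h)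
  obtain ⟨n, P', hnd, rfl⟩ := WfDvdMonoid.max_power_factor hP
    ((Polynomial.prime_C_iff.2 prime_X).irreducible : Irreducible (C X : k[X][X]))
  rw [eval₂_mul, eval₂_pow, eval₂_C] at hPa
  have h0 : P'.eval₂ (aeval f : k[X] →ₐ[k] O).toRingHom a = 0 := by
    refine (mul_eq_zero.1 hPa).resolve_left (pow_ne_zero _ ?_)
    simpa using hf0
  apply ha
  refine ⟨P'.map (evalRingHom 0), ?_, ?_⟩
  · intro h
    apply hnd
    rw [C_dvd_iff_dvd_coeff]
    intro i
    rw [X_dvd_iff, coeff_zero_eq_eval_zero]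
    have := congrArg (fun p => p.coeff i) h
    simpa using this
  · have h2 := congrArg ρ.toRingHom h0
    rw [hom_eval₂, map_zero] at h2
    rw [aeval_def, eval₂_map, ← h2]
    show _ = eval₂ _ (ρ a) P'
    congr 1
    ext x
    · simp
    · simp [hf]

theorem exists_spec {k E : Type*} [Field k] [IsAlgClosed k] [Field E] [Algebra k E]
    (T : Finset (RatFunc E)) (a : RatFunc E) (haT : a ∈ T)
    (ha : a ∉ (RatFunc.C : E →+* RatFunc E).range) :
    ∃ (O : Subalgebra k (RatFunc E)) (ρ : O →ₐ[k] RatFunc k),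
      (∀ x ∈ T, x ∈ O) ∧ ∀ h : a ∈ O, ¬ ∃ c, ρ ⟨a, h⟩ = RatFunc.C c := by
  classical
  let co : Finset E := T.biUnion (fun x => x.num.coeffs ∪ x.denom.coeffs)
  let A : Subalgebra k E := Algebra.adjoin k (co : Set E)
  have : Algebra.FiniteType k A :=
    (Subalgebra.fg_iff_finiteType A).1 ⟨co, rfl⟩
  have hmem : ∀ p : E[X], (∀ c ∈ p.coeffs, c ∈ co) →
      ∃ q : A[X], q.map (algebraMap A E) = p := by
    intro p hp
    rw [← Polynomial.mem_lifts, Polynomial.lifts_iff_coeff_lifts]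
    intro n
    by_cases h : p.coeff n = 0
    · exact ⟨0, by simp [h]⟩
    · exact ⟨⟨_, Algebra.subset_adjoin (hp _ (coeff_mem_coeffs h))⟩, rfl⟩
  have hnum : ∀ x ∈ T, ∃ q : A[X], q.map (algebraMap A E) = x.num := fun x hx =>
    hmem _ fun c hc => Finset.mem_biUnion.2 ⟨x, hx, Finset.mem_union_left _ hc⟩
  have hden : ∀ x ∈ T, ∃ q : A[X], q.map (algebraMap A E) = x.denom := fun x hx =>
    hmem _ fun c hc => Finset.mem_biUnion.2 ⟨x, hx, Finset.mem_union_right _ hc⟩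
  have hAE : Function.Injective (algebraMap A E) := Subtype.val_injective
  have hmonic : ∀ x : RatFunc E, ∀ q : A[X], q.map (algebraMap A E) = x.denom → q.Monic := by
    intro x q hq
    exact Polynomial.monic_of_injective hAE (hq ▸ x.monic_denom)
  obtain ⟨p, hp⟩ := hnum a haT
  obtain ⟨q, hq⟩ := hden a haT
  have hqm := hmonic a q hq
  -- a nonvanishing minor
  have hminor : ∃ i, p.coeff i - p.coeff q.natDegree * q.coeff i ≠ 0 := by
    by_contra! hcon
    apply ha
    have h1 : p = C (p.coeff q.natDegree) * q := by
      ext i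
      rw [coeff_C_mul, sub_eq_zero.1 (hcon i)]
    refine ⟨algebraMap A E (p.coeff q.natDegree), ?_⟩
    rw [← RatFunc.num_div_denom a, ← hp, ← hq]
    conv_rhs => rw [h1]
    rw [Polynomial.map_mul, map_mul, map_C, RatFunc.algebraMap_C, mul_div_cancel_right₀]
    exact RatFunc.algebraMap_ne_zero (hqm.map _).ne_zero
  obtain ⟨i, hi⟩ := hminor
  obtain ⟨φ, hφ⟩ := exists_point (k := k) _ hi
  let Φ : A[X] →ₐ[k] k[X] := Polynomial.mapAlgHom φ
  let S : Submonoid A[X] := (nonZeroDivisors k[X]).comap Φ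
  have hS0 : ∀ y : S, Φ (y : A[X]) ≠ 0 := fun y => nonZeroDivisors.ne_zero y.2
  let f : A[X] →ₐ[k] RatFunc E := (IsScalarTower.toAlgHom k E[X] (RatFunc E)).comp
    (Polynomial.mapAlgHom A.val)
  have hfinj : Function.Injective f :=
    (RatFunc.algebraMap_injective E).comp (Polynomial.map_injective _ hAE)
  let g : A[X] →ₐ[k] RatFunc k := (IsScalarTower.toAlgHom k k[X] (RatFunc k)).comp Φ
  have hfS : ∀ y : S, IsUnit (f y) := by
    intro y
    rw [isUnit_iff_ne_zero]
    intro h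
    have h0 : (y : A[X]) = 0 := hfinj (by rw [h, map_zero])
    exact hS0 y (by rw [h0, map_zero])
  have hgS : ∀ y : S, IsUnit (g y) := by
    intro y
    rw [isUnit_iff_ne_zero]
    exact RatFunc.algebraMap_ne_zero (hS0 y)
  let M := Localization S
  let ι : M →ₐ[k] RatFunc E := IsLocalization.liftAlgHom (S := Localization S) (M := S) (f := f) hfS
  let π : M →ₐ[k] RatFunc k := IsLocalization.liftAlgHom (S := Localization S) (M := S) (f := g) hgS
  have hιa : ∀ x, ι (algebraMap A[X] M x) = f x := fun x => IsLocalization.lift_eq _ x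
  have hπa : ∀ x, π (algebraMap A[X] M x) = g x := fun x => IsLocalization.lift_eq _ x
  have hι : Function.Injective ι := by
    rw [injective_iff_map_eq_zero]
    intro z hz
    obtain ⟨⟨x, s⟩, hx⟩ := IsLocalization.surj S z
    have h1 : f x = 0 := by rw [← hιa, ← hx, map_mul, hz, zero_mul]
    have h2 : x = 0 := hfinj (by rw [h1, map_zero])
    rw [h2, map_zero] at hx
    exact (IsLocalization.map_units M s).mul_left_eq_zero.1 hx
  have hdenS : ∀ q : A[X], q.Monic → q ∈ S := fun q hq =>
    mem_nonZeroDivisors_of_ne_zero (hq.map (φ : A →+* k)).ne_zero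
  have key : ∀ x : RatFunc E, ∀ p q : A[X], p.map (algebraMap A E) = x.num →
      q.map (algebraMap A E) = x.denom → ∀ hqS : q ∈ S,
      ι (IsLocalization.mk' M p (⟨q, hqS⟩ : S)) = x := by
    intro x p q hp hq hqS
    have h1 := congrArg ι (IsLocalization.mk'_spec M p (⟨q, hqS⟩ : S))
    rw [map_mul, hιa, hιa] at h1
    rw [← RatFunc.num_div_denom x, ← hp, ← hq, eq_div_iff]
    · exact h1
    · rw [hq]; exact RatFunc.algebraMap_ne_zero x.denom_ne_zero
  let e : M ≃ₐ[k] ι.range := AlgEquiv.ofInjective ι hι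
  refine ⟨ι.range, π.comp (e.symm : ι.range →ₐ[k] M), ?_, ?_⟩
  · intro x hx
    obtain ⟨p, hp⟩ := hnum x hx
    obtain ⟨q, hq⟩ := hden x hx
    exact ⟨_, key x p q hp hq (hdenS q (hmonic x q hq))⟩
  · rintro h ⟨c, hc⟩
    have h1 : e.symm ⟨a, h⟩ = IsLocalization.mk' M p (⟨q, hdenS q hqm⟩ : S) := by
      rw [AlgEquiv.symm_apply_eq]
      exact Subtype.ext (key a p q hp hq _).symm
    have h2 : π (IsLocalization.mk' M p (⟨q, hdenS q hqm⟩ : S)) = RatFunc.C c := by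
      rw [← hc, ← h1]; rfl
    have h3 := congrArg π (IsLocalization.mk'_spec M p (⟨q, hdenS q hqm⟩ : S))
    rw [map_mul, hπa, hπa, h2] at h3
    have h4 : C c * Φ q = Φ p := by
      apply RatFunc.algebraMap_injective
      rw [map_mul, RatFunc.algebraMap_C]
      exact h3
    have h5 : ∀ j, c * φ (q.coeff j) = φ (p.coeff j) := by
      intro j
      have := congrArg (fun r => r.coeff j) h4
      simpa [Φ] using this
    apply hφ
    have h6 := h5 q.natDegree
    rw [hqm.coeff_natDegree, map_one, mul_one] at h6
    rw [map_sub, map_mul, ← h5 i, ← h6, sub_self]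

end

theorem trdeg_eq (k L : Type*) [Field k] [Field L] [Algebra k L] :
    trdeg k L = Algebra.trdeg k L := rfl

theorem luroth_nagata (k L : Type*) [Field k] [IsAlgClosed k] [Field L] [Algebra k L]
    (hfg : ∃ s : Finset L, IntermediateField.adjoin k (s : Set L) = ⊤)
    (htr : trdeg k L = 1)
    (E : Type*) [Field E] [Algebra k E]
    (ψ : L →ₐ[k] RatFunc E)
    (hnc : ∃ a : L, ψ a ∉ (RatFunc.C : E →+* RatFunc E).range) :
    Nonempty (L ≃ₐ[k] RatFunc k) := by
  classical
  obtain ⟨s, hs⟩ := hfg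
  obtain ⟨a, ha⟩ := hnc
  rw [trdeg_eq] at htr
  obtain ⟨O, ρ, hO, hρ⟩ := exists_spec (k := k) ((insert a s).image ψ) (ψ a)
    (Finset.mem_image_of_mem _ (Finset.mem_insert_self _ _)) ha
  let O' : Subalgebra k L := O.comap ψ
  let ψ' : O' →ₐ[k] O := (ψ.comp O'.val).codRestrict O (fun x => x.2)
  let ρ' : O' →ₐ[k] RatFunc k := ρ.comp ψ'
  have hmem : ∀ x ∈ insert a s, x ∈ O' := fun x hx => hO _ (Finset.mem_image_of_mem _ hx)
  have haO : a ∈ O' := hmem a (Finset.mem_insert_self _ _)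
  have hnC : ¬ ∃ c, ρ' ⟨a, haO⟩ = RatFunc.C c := hρ haO
  have hinj : Function.Injective ρ' := spec_injective htr O' ρ' ⟨a, haO⟩
    (RatFunc.transcendental_of_ne_C _ hnC)
  have hle : Algebra.adjoin k (s : Set L) ≤ O' :=
    Algebra.adjoin_le fun x hx => hmem x (Finset.mem_insert_of_mem hx)
  have : IsFractionRing O' L := by
    refine IsFractionRing.of_field _ _ fun z => ?_
    have hz : z ∈ IntermediateField.adjoin k (s : Set L) := hs ▸ IntermediateField.mem_top
    obtain ⟨x, hx, y, hy, h⟩ := IntermediateField.mem_adjoin_iff_div.1 hz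
    exact ⟨⟨x, hle hx⟩, ⟨y, hle hy⟩, h⟩
  let θ : L →ₐ[k] RatFunc k := IsFractionRing.liftAlgHom (A := O') (g := ρ') hinj
  have hθ : θ a = ρ' ⟨a, haO⟩ := IsFractionRing.lift_algebraMap (A := O') hinj ⟨a, haO⟩
  have hne : θ.fieldRange ≠ ⊥ := by
    intro h
    have h1 : θ a ∈ θ.fieldRange := ⟨a, rfl⟩
    rw [h, IntermediateField.mem_bot] at h1
    obtain ⟨c, hc⟩ := h1
    exact hnC ⟨c, by rw [← hθ, ← hc, RatFunc.algebraMap_eq_C]⟩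
  exact ⟨(AlgEquiv.ofInjectiveField θ).trans (RatFunc.Luroth.algEquiv hne).symm⟩
end
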